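/- arXiv:2411.03516 — 2 statements merged into one kernel-verified Lean document; each statement's English description precedes it below -/
import Mathlib

section
/- The critical value function τ is continuous at every point of (1,∞) ∖ {β_r^S : S ∈ Λ_e}, while for each S ∈ Λ_e it has an upward jump at β_r^S: lim_{β↘β_r^S} τ(β) = (S^∞)_{β_r^S} > (S 0^∞)_{β_r^S} = τ(β_r^S). -/
open Set Filter MeasureTheory Topology

noncomputable section

/-- The β-transformation `x ↦ βx - ⌊βx⌋`. -/
def Tbeta (β x : ℝ) : ℝ := Int.fract (β * x)

/-- The survivor set `K_β(t)`: points of `[0,1)` whose orbit never enters `[0,t)`. -/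
def survivor (β t : ℝ) : Set ℝ :=
  {x | x ∈ Set.Ico (0 : ℝ) 1 ∧ ∀ n : ℕ, t ≤ (Tbeta β)^[n] x}

/-- The set-valued bifurcation set `E_β`. -/
def Ebif (β : ℝ) : Set ℝ :=
  {t | t ∈ Set.Ico (0 : ℝ) 1 ∧ ∀ t' : ℝ, t < t' → survivor β t' ≠ survivor β t}

/-- `(c)_β = Σ_{i≥1} c_i β^{-i}` for an infinite digit sequence (indexed from `0`). -/
def valSeq (β : ℝ) (c : ℕ → ℕ) : ℝ := ∑' i : ℕ, (c i : ℝ) / β ^ (i + 1)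

/-- `(w 0^∞)_β` for a finite word `w`. -/
def valWord (β : ℝ) (w : List ℕ) : ℝ :=
  ∑ i ∈ Finset.range w.length, (w.getD i 0 : ℝ) / β ^ (i + 1)

/-- `w⁺`: increment the last letter of `w`. -/
def wplus (w : List ℕ) : List ℕ := w.dropLast ++ [w.getLast! + 1]

/-- `w⁻`: decrement the last letter of `w`. -/
def wminus (w : List ℕ) : List ℕ := w.dropLast ++ [w.getLast! - 1]

/-- `θ`: increment every digit of `w` by one. -/
def theta (w : List ℕ) : List ℕ := w.map (· + 1)

/-- `L(w)`: the lexicographically largest cyclic permutation of `w`. -/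
def maxCyc (w : List ℕ) : List ℕ := ((List.range w.length).map w.rotate).foldl max []

/-- `w^∞`: the periodic sequence with period block `w`. -/
def perSeq (w : List ℕ) : ℕ → ℕ := fun i => w.getD (i % w.length) 0

/-- The sequence given by the word `w` followed by the sequence `c`. -/
def wordSeq (w : List ℕ) (c : ℕ → ℕ) : ℕ → ℕ :=
  fun i => if i < w.length then w.getD i 0 else c (i - w.length)

/-- Strict lexicographic order `≺` on sequences. -/
def seqLt (x y : ℕ → ℕ) : Prop := ∃ n, (∀ i < n, x i = y i) ∧ x n < y n

/-- Lexicographic order `≼` on sequences. -/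
def seqLe (x y : ℕ → ℕ) : Prop := x = y ∨ seqLt x y

/-- The `n`-fold left shift `σⁿ` on sequences. -/
def shiftn (n : ℕ) (x : ℕ → ℕ) : ℕ → ℕ := fun i => x (i + n)

/-- One step of the Farey recursion: insert the concatenation `w_i w_{i+1}`
between consecutive entries. -/
def fareyInsert : List (List ℕ) → List (List ℕ)
  | [] => []
  | [w] => [w]
  | w :: v :: rest => w :: (w ++ v) :: fareyInsert (v :: rest)

/-- The ordered set `F_n` of Farey words of level `n`. -/
def fareyLevel : ℕ → List (List ℕ)
  | 0 => [[0], [1]]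
  | n + 1 => fareyInsert (fareyLevel n)

/-- `F`: all Farey words of length at least two. -/
def FareySet : Set (List ℕ) := {w | (∃ n, w ∈ fareyLevel n) ∧ w ≠ [0] ∧ w ≠ [1]}

/-- `F̂ = F ∪ {1}`. -/
def FareyHat : Set (List ℕ) := FareySet ∪ {[1]}

/-- The extended Farey set `F_e = {θ^k(w) : w ∈ F̂, k ≥ 0}`. -/
def FareyExt : Set (List ℕ) := {w | ∃ v ∈ FareyHat, ∃ k : ℕ, w = theta^[k] v}

/-- A nonempty word is Lyndon iff it is strictly smaller than each of its nontrivial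
cyclic rotations (equivalently: aperiodic and lexicographically smallest among its
cyclic permutations). -/
def IsLyndon (w : List ℕ) : Prop := w ≠ [] ∧ ∀ i, 0 < i → i < w.length → w < w.rotate i

/-- `L_e`: all Lyndon words over `ℕ ∪ {0}` except the single-letter word `0`. -/
def LyndonExt : Set (List ℕ) := {w | IsLyndon w ∧ w ≠ [0]}

/-- `L`: Lyndon words over `{0,1}` of length at least `2`. -/
def LyndonBin : Set (List ℕ) := {w | IsLyndon w ∧ 2 ≤ w.length ∧ ∀ d ∈ w, d ≤ 1}

/-- The block of `Φ_s` emitted for current digit `d` after previous digit `p`: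
`L(s)` for `00`, `s⁻` for `10`, `L(s)⁺` for `01`, `s` for `11`. -/
def phiBlock (s : List ℕ) (p d : ℕ) : List ℕ :=
  if d = 0 then (if p = 0 then maxCyc s else wminus s)
  else (if p = 0 then wplus (maxCyc s) else s)

def phiAux (s : List ℕ) : ℕ → List ℕ → List ℕ
  | _, [] => []
  | p, d :: rest => phiBlock s p d ++ phiAux s d rest

/-- The substitution `Φ_s` on finite words; `s • r = subst s r`.  An initial digit `0`
produces `s⁻`, an initial digit `1` produces `L(s)⁺`, and thereafter runs
`0^k` resp. `1^l` produce `L(s)^{k-1}` resp. `s^{l-1}`, in accordance with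
`Φ_s(0^{k₁}1^{l₁}…) = s⁻ L(s)^{k₁-1} L(s)⁺ s^{l₁-1} …` and
`Φ_s(1^{k₁}0^{l₁}…) = L(s)⁺ s^{k₁-1} s⁻ L(s)^{l₁-1} …`. -/
def subst (s r : List ℕ) : List ℕ :=
  match r with
  | [] => []
  | d :: rest => phiBlock s (1 - d) d ++ phiAux s d rest

/-- The substitution `Φ_s` on infinite sequences, as the limit of its values
on initial segments (each digit contributes a nonempty block, so the `i`-th letter
is determined by the first `i+1` digits). -/
def phiSeq (s : List ℕ) (c : ℕ → ℕ) : ℕ → ℕ :=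
  fun i => (subst s (List.ofFn fun j : Fin (i + 1) => c j)).getD i 0

/-- `Λ_e(m) = {s₁ • s₂ • … • s_m : s₁ ∈ F_e, s₂,…,s_m ∈ F}`. -/
def LambdaE (m : ℕ) : Set (List ℕ) :=
  {w | ∃ s₁ ∈ FareyExt, ∃ rs : List (List ℕ),
    rs.length = m - 1 ∧ (∀ r ∈ rs, r ∈ FareySet) ∧ w = rs.foldl subst s₁}

/-- `Λ_e = ∪_{m≥1} Λ_e(m)`. -/
def LambdaExt : Set (List ℕ) := ⋃ m ∈ Set.Ici 1, LambdaE m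

/-- `β_ℓ^S`: the base `β > 1` with `(L(S)^∞)_β = 1` (it is unique since
`β ↦ (c)_β` is strictly decreasing). -/
def betaL (S : List ℕ) : ℝ :=
  Classical.epsilon fun β : ℝ => 1 < β ∧ valSeq β (perSeq (maxCyc S)) = 1

/-- `β_*^S`: the base `β > 1` with `(L(S)⁺ S⁻ L(S)^∞)_β = 1`. -/
def betaStar (S : List ℕ) : ℝ :=
  Classical.epsilon fun β : ℝ =>
    1 < β ∧ valSeq β (wordSeq (wplus (maxCyc S) ++ wminus S) (perSeq (maxCyc S))) = 1

/-- `β_r^S`: the base `β > 1` with `(L(S)⁺ S^∞)_β = 1`. -/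
def betaR (S : List ℕ) : ℝ :=
  Classical.epsilon fun β : ℝ => 1 < β ∧ valSeq β (wordSeq (wplus (maxCyc S)) (perSeq S)) = 1

/-- The Lyndon/Farey interval `J^S = [β_ℓ^S, β_r^S]`. -/
def Jint (S : List ℕ) : Set ℝ := Set.Icc (betaL S) (betaR S)

/-- The basic interval `I^S = [β_ℓ^S, β_*^S]`. -/
def Iint (S : List ℕ) : Set ℝ := Set.Icc (betaL S) (betaStar S)

/-- The exceptional set `E = (1,∞) ∖ ∪_{s ∈ F_e} J^s`. -/
def Eexc : Set ℝ := Set.Ioi 1 \ ⋃ s ∈ FareyExt, Jint s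

/-- The relative exceptional set `E^S = (J^S ∖ I^S) ∖ ∪_{r ∈ F} J^{S•r}`. -/
def EexcRel (S : List ℕ) : Set ℝ :=
  (Jint S \ Iint S) \ ⋃ r ∈ FareySet, Jint (subst S r)

/-- The infinitely renormalizable set `E_∞ = ∩_{m≥1} ∪_{S ∈ Λ_e(m)} J^S`. -/
def Einf : Set ℝ := ⋂ m ∈ Set.Ici 1, ⋃ S ∈ LambdaE m, Jint S

/-- `E_L = E ∪ {β_ℓ^s : s ∈ F_e}`. -/
def EL : Set ℝ := Eexc ∪ {x | ∃ s ∈ FareyExt, x = betaL s}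

/-- The critical value `τ(β) = min{t > 0 : dim_H K_β(t) = 0}`. -/
def tau (β : ℝ) : ℝ := sInf {t : ℝ | 0 < t ∧ dimH (survivor β t) = 0}

end

namespace BetaTau

/-- The `n`-fold shift of a sequence. -/
def sh {α : Type*} (n : ℕ) (x : ℕ → α) : ℕ → α := fun i => x (i + n)

/-- The sequence with first letter `a` followed by `x`. -/
def scons {α : Type*} (a : α) (x : ℕ → α) : ℕ → α
  | 0 => a
  | i + 1 => x i

/-- Agreement of the first `n` letters. -/
def agree {α : Type*} (n : ℕ) (u v : ℕ → α) : Prop := ∀ i < n, u i = v i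

@[simp] lemma scons_zero {α : Type*} (a : α) (x : ℕ → α) : scons a x 0 = a := rfl
@[simp] lemma scons_succ {α : Type*} (a : α) (x : ℕ → α) (i : ℕ) : scons a x (i + 1) = x i := rfl
@[simp] lemma scons_one {α : Type*} (a : α) (x : ℕ → α) : scons a x 1 = x 0 := rfl
@[simp] lemma sh_apply {α : Type*} (n i : ℕ) (x : ℕ → α) : sh n x i = x (i + n) := rfl
@[simp] lemma sh_zero {α : Type*} (x : ℕ → α) : sh 0 x = x := rfl

lemma sh_sh {α : Type*} (m n : ℕ) (x : ℕ → α) : sh m (sh n x) = sh (m + n) x := by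
  funext i; simp [add_assoc]

@[simp] lemma sh_scons {α : Type*} (n : ℕ) (a : α) (x : ℕ → α) :
    sh (n + 1) (scons a x) = sh n x := by
  funext i; rw [sh_apply, ← add_assoc, scons_succ, sh_apply]

@[simp] lemma sh_one_scons {α : Type*} (a : α) (x : ℕ → α) : sh 1 (scons a x) = x := rfl

lemma scons_head {α : Type*} (x : ℕ → α) : scons (x 0) (sh 1 x) = x := by
  funext i; cases i <;> rfl

lemma eq_scons {α : Type*} {x : ℕ → α} {a : α} (h : x 0 = a) : x = scons a (sh 1 x) := by
  subst h; exact (scons_head x).symm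

lemma scons_sh {α : Type*} (n : ℕ) (x : ℕ → α) : scons (x n) (sh (n + 1) x) = sh n x := by
  funext i
  cases i with
  | zero => simp
  | succ i => simp only [scons_succ, sh_apply]; congr 1; omega

lemma agree_zero {α : Type*} (u v : ℕ → α) : agree 0 u v :=
  fun _ hi => absurd hi (Nat.not_lt_zero _)

protected lemma agree.mono {α : Type*} {m n : ℕ} {u v : ℕ → α} (h : agree n u v) (hmn : m ≤ n) :
    agree m u v := fun i hi => h i (lt_of_lt_of_le hi hmn)

protected lemma agree.symm {α : Type*} {n : ℕ} {u v : ℕ → α} (h : agree n u v) : agree n v u :=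
  fun i hi => (h i hi).symm

protected lemma agree.scons {α : Type*} {n : ℕ} {u v : ℕ → α} (a : α) (h : agree n u v) :
    agree (n + 1) (scons a u) (scons a v) := by
  intro i hi
  cases i with
  | zero => rfl
  | succ i => exact h i (by omega)

protected lemma agree.tail {α : Type*} {n : ℕ} {u v : ℕ → α} (h : agree (n + 1) u v) :
    agree n (sh 1 u) (sh 1 v) := fun i hi => h (i + 1) (by omega)

lemma agree_succ_iff {α : Type*} {n : ℕ} {u v : ℕ → α} :
    agree (n + 1) u v ↔ u 0 = v 0 ∧ agree n (sh 1 u) (sh 1 v) := by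
  refine ⟨fun h => ⟨h 0 (by omega), h.tail⟩, fun ⟨h0, h⟩ i hi => ?_⟩
  cases i with
  | zero => exact h0
  | succ i => exact h i (by omega)

lemma eq_of_agree {α : Type*} {u v : ℕ → α} (h : ∀ n, agree n u v) : u = v :=
  funext fun i => h (i + 1) i (by omega)

/-! ### The lexicographic order on binary sequences, with an orientation -/

/-- `slt false` is the strict lexicographic order, `slt true` its opposite. -/
def slt (c : Bool) (u v : ℕ → Bool) : Prop := ∃ n, agree n u v ∧ u n = c ∧ v n = !c

/-- The reflexive version of `slt`. -/
def sle (c : Bool) (u v : ℕ → Bool) : Prop := u = v ∨ slt c u v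

protected lemma sle.refl (c : Bool) (u : ℕ → Bool) : sle c u u := Or.inl rfl

lemma slt_of_head {c : Bool} {u v : ℕ → Bool} (hu : u 0 = c) (hv : v 0 = !c) : slt c u v :=
  ⟨0, agree_zero _ _, hu, hv⟩

lemma slt_not_iff {c : Bool} {u v : ℕ → Bool} : slt (!c) u v ↔ slt c v u := by
  constructor <;> rintro ⟨n, h, h1, h2⟩ <;> exact ⟨n, h.symm, by simpa using h2, by simpa using h1⟩

lemma exists_first_diff {α : Type*} {u v : ℕ → α} (h : u ≠ v) : ∃ n, agree n u v ∧ u n ≠ v n := by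
  classical
  have h' : ∃ n, u n ≠ v n := Function.ne_iff.mp h
  exact ⟨Nat.find h', fun i hi => not_not.mp (Nat.find_min h' hi), Nat.find_spec h'⟩

lemma slt_total (c : Bool) (u v : ℕ → Bool) : slt c u v ∨ u = v ∨ slt c v u := by
  by_cases h : u = v
  · exact Or.inr (Or.inl h)
  · obtain ⟨n, hn, hne⟩ := exists_first_diff h
    by_cases hc : u n = c
    · exact Or.inl ⟨n, hn, hc, by subst hc; revert hne; cases u n <;> cases v n <;> simp⟩
    · refine Or.inr (Or.inr ⟨n, hn.symm, ?_, ?_⟩) <;>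
        revert hne hc <;> cases u n <;> cases v n <;> cases c <;> simp

protected lemma slt.ne {c : Bool} {u v : ℕ → Bool} (h : slt c u v) : u ≠ v := by
  rintro rfl
  obtain ⟨n, -, h1, h2⟩ := h
  rw [h1] at h2
  cases c <;> simp at h2

protected lemma slt.trans {c : Bool} {u v w : ℕ → Bool} (h : slt c u v)
    (h' : slt c v w) : slt c u w := by
  obtain ⟨n, hn, h1, h2⟩ := h
  obtain ⟨m, hm, h3, h4⟩ := h'
  rcases lt_trichotomy n m with hnm | rfl | hnm
  · exact ⟨n, fun i hi => (hn i hi).trans (hm i (by omega)), h1, by rw [← hm n hnm, h2]⟩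
  · rw [h2] at h3; cases c <;> simp at h3
  · exact ⟨m, fun i hi => (hn i (by omega)).trans (hm i hi), by rw [hn m hnm, h3], h4⟩

protected lemma slt.asymm {c : Bool} {u v : ℕ → Bool} (h : slt c u v) : ¬ slt c v u :=
  fun h' => (h.trans h').ne rfl

protected lemma slt.trans_le {c : Bool} {u v w : ℕ → Bool} (h : slt c u v)
    (h' : sle c v w) : slt c u w := by
  rcases h' with rfl | h'
  · exact h
  · exact h.trans h'

lemma sle_of_not_slt {c : Bool} {u v : ℕ → Bool} (h : ¬ slt c v u) : sle c u v := by
  rcases slt_total c u v with h1 | h1 | h1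
  · exact Or.inr h1
  · exact Or.inl h1
  · exact absurd h1 h

protected lemma slt.scons {c : Bool} {u v : ℕ → Bool} (d : Bool) (h : slt c u v) :
    slt c (scons d u) (scons d v) := by
  obtain ⟨n, hn, h1, h2⟩ := h
  exact ⟨n + 1, hn.scons d, h1, h2⟩

protected lemma sle.scons {c : Bool} {u v : ℕ → Bool} (d : Bool) (h : sle c u v) :
    sle c (scons d u) (scons d v) := by
  rcases h with rfl | h
  · exact Or.inl rfl
  · exact Or.inr (h.scons d)

protected lemma slt.of_scons {c d : Bool} {u v : ℕ → Bool} (h : slt c (scons d u) (scons d v)) :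
    slt c u v := by
  obtain ⟨n, hn, h1, h2⟩ := h
  cases n with
  | zero => simp only [scons_zero] at h1 h2; rw [h1] at h2; cases c <;> simp at h2
  | succ n => exact ⟨n, hn.tail, h1, h2⟩

/-! ### Substitutions -/

/-- The substitution with flags `g`: a letter `c` is replaced by `c` if `g c = false`
and by the word `c, !c` if `g c = true`. -/
def subIdx (g : Bool → Bool) : ℕ → (ℕ → Bool) → Bool
  | 0, x => x 0
  | 1, x => if g (x 0) then !(x 0) else x 1
  | i + 2, x => if g (x 0) then subIdx g i (sh 1 x) else subIdx g (i + 1) (sh 1 x)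

/-- The image of a sequence under the substitution with flags `g`. -/
def sub (g : Bool → Bool) (x : ℕ → Bool) : ℕ → Bool := fun i => subIdx g i x

@[simp] lemma sub_zero (g : Bool → Bool) (x : ℕ → Bool) : sub g x 0 = x 0 := rfl

lemma sub_scons_true {g : Bool → Bool} {c : Bool} (h : g c = true) (x : ℕ → Bool) :
    sub g (scons c x) = scons c (scons (!c) (sub g x)) := by
  funext i
  match i with
  | 0 => rfl
  | 1 => simp [sub, subIdx, h]
  | i + 2 => simp [sub, subIdx, h]

lemma sub_scons_false {g : Bool → Bool} {c : Bool} (h : g c = false) (x : ℕ → Bool) :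
    sub g (scons c x) = scons c (sub g x) := by
  funext i
  match i with
  | 0 => rfl
  | 1 => simp [sub, subIdx, h]
  | i + 2 => simp [sub, subIdx, h]

protected lemma slt.sub {c : Bool} (g : Bool → Bool) {u v : ℕ → Bool} (h : slt c u v) :
    slt c (sub g u) (sub g v) := by
  obtain ⟨n, hn, h1, h2⟩ := h
  induction n generalizing u v with
  | zero => exact slt_of_head h1 h2
  | succ n ih =>
    have h3 := ih (u := sh 1 u) (v := sh 1 v) hn.tail h1 h2
    have h0 : u 0 = v 0 := hn 0 (by omega)
    rw [← scons_head u, ← scons_head v, ← h0]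
    rcases hg : g (u 0) with _ | _
    · rw [sub_scons_false hg, sub_scons_false hg]; exact h3.scons _
    · rw [sub_scons_true hg, sub_scons_true hg]; exact (h3.scons _).scons _

protected lemma sle.sub {c : Bool} (g : Bool → Bool) {u v : ℕ → Bool} (h : sle c u v) :
    sle c (sub g u) (sub g v) := by
  rcases h with rfl | h
  · exact Or.inl rfl
  · exact Or.inr (h.sub g)

protected lemma slt.of_sub {c : Bool} {g : Bool → Bool} {u v : ℕ → Bool}
    (h : slt c (sub g u) (sub g v)) :
    slt c u v := by
  rcases slt_total c u v with h1 | rfl | h1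
  · exact h1
  · exact absurd rfl h.ne
  · exact absurd h (h1.sub g).asymm

protected lemma agree.sub (g : Bool → Bool) {n : ℕ} {u v : ℕ → Bool} (h : agree n u v) :
    agree n (sub g u) (sub g v) := by
  induction n generalizing u v with
  | zero => exact agree_zero _ _
  | succ n ih =>
    have h3 := ih h.tail
    have h0 : u 0 = v 0 := h 0 (by omega)
    rw [← scons_head u, ← scons_head v, ← h0]
    rcases hg : g (u 0) with _ | _
    · rw [sub_scons_false hg, sub_scons_false hg]; exact h3.scons _
    · rw [sub_scons_true hg, sub_scons_true hg]; exact ((h3.scons _).scons _).mono (by omega)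

protected lemma agree.sub_of_head {g : Bool → Bool} {n : ℕ} {u v : ℕ → Bool} (h : agree (n + 1) u v)
    (hg : g (u 0) = true) : agree (n + 2) (sub g u) (sub g v) := by
  have h3 := h.tail.sub g
  have h0 : u 0 = v 0 := h 0 (by omega)
  rw [← scons_head u, ← scons_head v, ← h0, sub_scons_true hg, sub_scons_true hg]
  exact (h3.scons _).scons _

protected lemma agree.sub_grow {g : Bool → Bool} (hg : g false = true ∨ g true = true) {n : ℕ}
    {u v : ℕ → Bool} (h : agree (n + 2) u v) (hu : u 1 = !u 0) :
    agree (n + 3) (sub g u) (sub g v) := by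
  rcases hg0 : g (u 0) with _ | _
  · have hg1 : g (u 1) = true := by
      rw [hu]; revert hg0; cases u 0 <;> intro hg0 <;> simp_all
    have h3 := h.tail.sub_of_head (g := g) hg1
    have h0 : u 0 = v 0 := h 0 (by omega)
    rw [← scons_head u, ← scons_head v, ← h0, sub_scons_false hg0, sub_scons_false hg0]
    exact h3.scons _
  · exact h.sub_of_head hg0

lemma sub_one {g : Bool → Bool} {u : ℕ → Bool} (hu : u 1 = !u 0) :
    sub g u 1 = !(sub g u 0) := by
  simp only [sub, subIdx]; split <;> simp_all

protected lemma agree.of_sub {g : Bool → Bool} {n : ℕ} {u v : ℕ → Bool}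
    (h : agree (2 * n) (sub g u) (sub g v)) : agree n u v := by
  induction n generalizing u v with
  | zero => exact agree_zero _ _
  | succ n ih =>
    have h0 : u 0 = v 0 := h 0 (by omega)
    refine agree_succ_iff.mpr ⟨h0, ih ?_⟩
    rw [← scons_head u, ← scons_head v, ← h0] at h
    rcases hg : g (u 0) with _ | _
    · rw [sub_scons_false hg, sub_scons_false hg] at h
      exact (agree.tail (n := 2 * n + 1) h).mono (by omega)
    · rw [sub_scons_true hg, sub_scons_true hg] at h
      exact (agree.tail (agree.tail (n := 2 * n + 1) h))

/-- Every shift of `sub g x` starts at the beginning or in the middle of a block. -/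
lemma sh_sub (g : Bool → Bool) (x : ℕ → Bool) (n : ℕ) :
    ∃ m, sh n (sub g x) = sub g (sh m x) ∨
      (g (x m) = true ∧ sh n (sub g x) = scons (!x m) (sub g (sh (m + 1) x))) := by
  induction n with
  | zero => exact ⟨0, Or.inl rfl⟩
  | succ n ih =>
    obtain ⟨m, h | ⟨hg, h⟩⟩ := ih
    · have e : sh (n + 1) (sub g x) = sh 1 (sub g (sh m x)) := by rw [← h, sh_sh, add_comm]
      rw [← scons_sh m x] at e
      rcases hg : g (x m) with _ | _
      · exact ⟨m + 1, Or.inl (by rw [e, sub_scons_false hg, sh_one_scons])⟩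
      · exact ⟨m, Or.inr ⟨hg, by rw [e, sub_scons_true hg, sh_one_scons]⟩⟩
    · exact ⟨m + 1, Or.inl (by rw [add_comm, ← sh_sh, h, sh_one_scons])⟩

/-- All shifts of `x` lie between the tails of `K true` and `K false`. -/
def Between (K : Bool → ℕ → Bool) (x : ℕ → Bool) : Prop :=
  ∀ n c, sle c (sh n x) (sh 1 (K c))

/-- `K c` starts with `c, !c` for both letters `c`. -/
def Framed (K : Bool → ℕ → Bool) : Prop := ∀ c, K c 0 = c ∧ K c 1 = !c

protected lemma Framed.sub {K : Bool → ℕ → Bool} (hK : Framed K) (g : Bool → Bool) :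
    Framed fun c => sub g (K c) := fun c =>
  ⟨(hK c).1, by
    show sub g (K c) 1 = !c
    rw [sub_one (by rw [(hK c).1, (hK c).2]), sub_zero, (hK c).1]⟩

protected lemma Between.sub {K : Bool → ℕ → Bool} (hK : Framed K) (g : Bool → Bool) {x : ℕ → Bool}
    (hx : Between K x) : Between (fun c => sub g (K c)) (sub g x) := by
  intro n c
  obtain ⟨h0, h1⟩ := hK c
  have hKe : K c = scons c (sh 1 (K c)) := eq_scons h0
  have hκ : sub g (sh 1 (K c)) 0 = !c := h1
  have bneg : ∀ d : Bool, d ≠ c → d = !c := by cases c <;> simp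
  simp only
  rcases hg : g c with _ | _
  · rw [hKe, sub_scons_false hg, sh_one_scons]
    obtain ⟨m, h | ⟨hgm, h⟩⟩ := sh_sub g x n
    · rw [h]; exact (hx m c).sub g
    · have hm : x m = !c := bneg _ (by rintro rfl; rw [hg] at hgm; cases hgm)
      rw [h, hm]
      exact Or.inr (slt_of_head (by simp) h1)
  · rw [hKe, sub_scons_true hg, sh_one_scons]
    obtain ⟨m, h | ⟨hgm, h⟩⟩ := sh_sub g x n
    · rw [h]
      by_cases hm : x m = c
      · exact Or.inr (slt_of_head (by simpa using hm) rfl)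
      · have hm := bneg _ hm
        rw [← scons_sh m x, hm]
        rcases hg' : g (!c) with _ | _
        · rw [sub_scons_false hg']; exact ((hx (m + 1) c).sub g).scons _
        · rw [sub_scons_true hg']
          exact Or.inr (slt.scons _ (slt_of_head (by simp) hκ))
    · rw [h]
      by_cases hm : x m = c
      · rw [hm]; exact ((hx (m + 1) c).sub g).scons _
      · rw [bneg _ hm]; exact Or.inr (slt_of_head (by simp) rfl)

/-! ### The outer codings -/

/-- The two families of outer codings. -/
inductive Outer
  | R (k : ℕ)
  | D (k : ℕ)

/-- The digit emitted by an outer coding at letter `c` after letter `p`. -/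
def Outer.f : Outer → Bool → Bool → ℕ
  | .R k, _, c => k + c.toNat
  | .D k, p, c => k + c.toNat + (!p).toNat

/-- The outer coding of a binary sequence. -/
def Outer.E (o : Outer) (x : ℕ → Bool) : ℕ → ℕ := fun i => o.f (x i) (x (i + 1))

/-- A bound for the digits of an outer coding. -/
def Outer.bd : Outer → ℕ
  | .R k => k + 2
  | .D k => k + 2

lemma Outer.f_le (o : Outer) (p c : Bool) : o.f p c ≤ o.bd := by
  cases o <;> cases p <;> cases c <;> simp [f, bd]

lemma Outer.f_false (o : Outer) (p : Bool) : o.f p true = o.f p false + 1 := by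
  cases o <;> cases p <;> simp [f]

lemma Outer.f_inj (o : Outer) {p c c' : Bool} (h : o.f p c = o.f p c') : c = c' := by
  cases c <;> cases c' <;> simp_all [Outer.f_false]

lemma Outer.sh_E (o : Outer) (n : ℕ) (x : ℕ → Bool) : sh n (o.E x) = o.E (sh n x) := by
  funext i; simp only [E, sh_apply]; congr 2; omega

protected lemma agree.E (o : Outer) {n : ℕ} {u v : ℕ → Bool} (h : agree (n + 1) u v) :
    agree n (o.E u) (o.E v) := fun i hi => by
  simp only [Outer.E]; rw [h i (by omega), h (i + 1) (by omega)]

protected lemma agree.of_E {o : Outer} {n : ℕ} {u v : ℕ → Bool} (h0 : u 0 = v 0)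
    (h : agree n (o.E u) (o.E v)) : agree (n + 1) u v := by
  intro i hi
  induction i with
  | zero => exact h0
  | succ i ih =>
    have h1 := h i (by omega)
    simp only [Outer.E] at h1
    rw [ih (by omega)] at h1
    exact o.f_inj h1

lemma seqLt_E {o : Outer} {u v : ℕ → Bool} (h0 : u 0 = v 0) (h : slt false u v) :
    seqLt (o.E u) (o.E v) := by
  obtain ⟨n, hn, h1, h2⟩ := h
  cases n with
  | zero => rw [h1, h2] at h0; simp at h0
  | succ n =>
    refine ⟨n, hn.E o, ?_⟩
    simp only [Outer.E, h1, h2, hn n (by omega), Bool.not_false]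
    rw [o.f_false]; omega

lemma seqLe_E {o : Outer} {u v : ℕ → Bool} (h0 : u 0 = v 0) (h : sle false u v) :
    seqLe (o.E u) (o.E v) := by
  rcases h with rfl | h
  · exact Or.inl rfl
  · exact Or.inr (seqLt_E h0 h)

lemma sle_not_iff {c : Bool} {u v : ℕ → Bool} : sle (!c) u v ↔ sle c v u := by
  rw [sle, sle, slt_not_iff, eq_comm]

lemma Outer.R_E_scons (k : ℕ) (c : Bool) (x : ℕ → Bool) (d : Bool) :
    (Outer.R k).E (scons c x) = (Outer.R k).E (scons d x) := by
  funext i; cases i <;> simp [E, f]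

protected lemma Between.E_le {K : Bool → ℕ → Bool} (hK : Framed K) (o : Outer) {x : ℕ → Bool}
    (hx : Between K x) (n : ℕ) : seqLe (sh n (o.E x)) (o.E (K false)) := by
  have hKe : K false = scons false (sh 1 (K false)) := eq_scons (hK false).1
  rw [o.sh_E, ← scons_sh, hKe]
  have key : seqLe (o.E (scons false (sh (n + 1) x))) (o.E (scons false (sh 1 (K false)))) :=
    seqLe_E rfl ((hx (n + 1) false).scons _)
  rcases hx0 : x n with _ | _
  · exact key
  · cases o with
    | R k => rw [Outer.R_E_scons k true _ false]; exact key
    | D k =>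
      refine Or.inr ⟨0, fun i hi => absurd hi (Nat.not_lt_zero _), ?_⟩
      have := (hK false).2
      simp only [Outer.E, Outer.f, scons_zero, zero_add, scons_one, sh_apply, this]
      cases x (1 + n) <;> cases x (n + 1) <;> simp

protected lemma Between.le_E {K : Bool → ℕ → Bool} (hK : Framed K) (o : Outer) {x : ℕ → Bool}
    (hx : Between K x) (n : ℕ) : seqLe (o.E (K true)) (sh n (o.E x)) := by
  have hKe : K true = scons true (sh 1 (K true)) := eq_scons (hK true).1
  rw [o.sh_E, ← scons_sh, hKe]
  have key : seqLe (o.E (scons true (sh 1 (K true)))) (o.E (scons true (sh (n + 1) x))) :=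
    seqLe_E rfl ((sle_not_iff (c := false).mp (hx (n + 1) true)).scons _)
  rcases hx0 : x n with _ | _
  · cases o with
    | R k => rw [Outer.R_E_scons k false _ true]; exact key
    | D k =>
      refine Or.inr ⟨0, fun i hi => absurd hi (Nat.not_lt_zero _), ?_⟩
      have := (hK true).2
      simp only [Outer.E, Outer.f, scons_zero, zero_add, scons_one, sh_apply, this]
      cases x (1 + n) <;> cases x (n + 1) <;> simp
  · exact key

/-! ### Nodes of the renormalization tree -/

/-- The three elementary substitutions. -/
inductive Gen
  | A
  | B
  | M

/-- The flags of an elementary substitution. -/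
def Gen.g : Gen → Bool → Bool
  | .A, c => c
  | .B, c => !c
  | .M, _ => true

lemma Gen.flag (a : Gen) : a.g false = true ∨ a.g true = true := by
  cases a <;> simp [g]

/-- Composition of elementary substitutions, the first one being outermost. -/
def subs (l : List Gen) (x : ℕ → Bool) : ℕ → Bool := l.foldr (fun a y => sub a.g y) x

@[simp] lemma subs_nil (x : ℕ → Bool) : subs [] x = x := rfl
@[simp] lemma subs_cons (a : Gen) (l : List Gen) (x : ℕ → Bool) :
    subs (a :: l) x = sub a.g (subs l x) := rfl

lemma subs_append (l l' : List Gen) (x : ℕ → Bool) : subs (l ++ l') x = subs l (subs l' x) := by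
  simp [subs]

@[simp] lemma subs_apply_zero (l : List Gen) (x : ℕ → Bool) : subs l x 0 = x 0 := by
  induction l with
  | nil => rfl
  | cons a l ih => exact ih

protected lemma slt.subs {c : Bool} (l : List Gen) {u v : ℕ → Bool} (h : slt c u v) :
    slt c (subs l u) (subs l v) := by
  induction l with
  | nil => exact h
  | cons a l ih => exact ih.sub _

lemma subs_one (l : List Gen) {u : ℕ → Bool} (hu : u 1 = !u 0) : subs l u 1 = !(subs l u 0) := by
  induction l with
  | nil => exact hu
  | cons a l ih => exact sub_one ih

lemma agree_subs_grow (l : List Gen) {u v : ℕ → Bool} (h : agree 2 u v) (hu : u 1 = !u 0) :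
    agree (l.length + 2) (subs l u) (subs l v) := by
  induction l with
  | nil => exact h
  | cons a l ih => exact ih.sub_grow a.flag (subs_one l hu)

lemma agree.of_subs (l : List Gen) {n : ℕ} {u v : ℕ → Bool}
    (h : agree (2 ^ l.length * n) (subs l u) (subs l v)) : agree n u v := by
  induction l with
  | nil => simpa using h
  | cons a l ih =>
    refine ih (agree.of_sub (g := a.g) ?_)
    rw [← mul_assoc, ← pow_succ']
    exact h

protected lemma Framed.subs {K : Bool → ℕ → Bool} (hK : Framed K) (l : List Gen) :
    Framed fun c => subs l (K c) := by
  induction l with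
  | nil => exact hK
  | cons a l ih => exact ih.sub a.g

protected lemma Between.subs {K : Bool → ℕ → Bool} (hK : Framed K) (l : List Gen) {x : ℕ → Bool}
    (hx : Between K x) : Between (fun c => subs l (K c)) (subs l x) := by
  induction l with
  | nil => exact hx
  | cons a l ih => exact ih.sub (hK.subs l) a.g

/-! ### Special sequences -/

/-- The constant sequence. -/
def cst (c : Bool) : ℕ → Bool := fun _ => c

/-- The alternating sequence starting with `c`. -/
def alt : Bool → ℕ → Bool
  | c, 0 => c
  | c, i + 1 => alt (!c) i

/-- `0 1^∞` -/
def s01 : ℕ → Bool := scons false (cst true)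
/-- `1 0^∞` -/
def s10 : ℕ → Bool := scons true (cst false)
/-- `1 0 1^∞` -/
def s101 : ℕ → Bool := scons true s01
/-- `0 1 0^∞` -/
def s010 : ℕ → Bool := scons false s10

lemma cst_eq (c : Bool) : cst c = scons c (cst c) := by funext i; cases i <;> rfl
lemma alt_eq (c : Bool) : alt c = scons c (alt (!c)) := by funext i; cases i <;> rfl

lemma eq_cst {c : Bool} {y : ℕ → Bool} (h : y = scons c y) : y = cst c := by
  funext i
  induction i with
  | zero => rw [h]; rfl
  | succ i ih => rw [h]; exact ih

lemma eq_alt {c : Bool} {y : ℕ → Bool} (h : y = scons c (scons (!c) y)) : y = alt c := by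
  have key : ∀ i, y i = alt c i ∧ y (i + 1) = alt c (i + 1) := by
    intro i
    induction i with
    | zero => rw [h]; exact ⟨rfl, rfl⟩
    | succ i ih =>
      refine ⟨ih.2, ?_⟩
      rw [h, alt_eq, alt_eq (!c), Bool.not_not]
      exact ih.1
  exact funext fun i => (key i).1

lemma sub_cst_false {g : Bool → Bool} {c : Bool} (h : g c = false) : sub g (cst c) = cst c :=
  eq_cst (by conv_lhs => rw [cst_eq, sub_scons_false h])

lemma sub_cst_true {g : Bool → Bool} {c : Bool} (h : g c = true) : sub g (cst c) = alt c :=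
  eq_alt (by conv_lhs => rw [cst_eq, sub_scons_true h])

lemma sub_A_s010 : sub Gen.A.g s010 = s010 := by
  rw [s010, sub_scons_false rfl, s10, sub_scons_true rfl, sub_cst_false rfl]
  simp [← cst_eq]

lemma sub_A_s10 : sub Gen.A.g s10 = s10 := by
  rw [s10, sub_scons_true rfl, sub_cst_false rfl]
  simp [← cst_eq]

lemma sub_B_s01 : sub Gen.B.g s01 = s01 := by
  rw [s01, sub_scons_true rfl, sub_cst_false rfl]
  simp [← cst_eq]

lemma sub_B_s101 : sub Gen.B.g s101 = s101 := by
  rw [s101, sub_scons_false rfl, sub_B_s01]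

lemma sub_M_s01 : sub Gen.M.g s01 = sub Gen.B.g s010 := by
  rw [s01, s010, s10, sub_scons_true rfl, sub_scons_true rfl, sub_scons_false rfl,
    sub_cst_true rfl, sub_cst_true rfl, alt_eq true]
  rfl

lemma sub_A_s101 : sub Gen.A.g s101 = sub Gen.M.g s10 := by
  rw [s101, s01, s10, sub_scons_true rfl, sub_scons_false rfl, sub_scons_true rfl,
    sub_cst_true rfl, sub_cst_true rfl, alt_eq false]
  rfl

lemma sub_B_s10 : sub Gen.B.g s10 = sub Gen.M.g (cst true) := by
  rw [s10, sub_scons_false rfl, sub_cst_true rfl, sub_cst_true rfl, alt_eq true]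
  rfl

lemma sub_A_s01 : sub Gen.A.g s01 = alt false := by
  rw [s01, sub_scons_false rfl, sub_cst_true rfl, alt_eq false]
  rfl

lemma sub_replicate {a : Gen} {x : ℕ → Bool} (h : sub a.g x = x) (n : ℕ) :
    subs (List.replicate n a) x = x := by
  induction n with
  | zero => rfl
  | succ n ih => rw [List.replicate_succ, subs_cons, ih, h]

lemma slt_s010_s01 : slt false s010 s01 :=
  slt.scons _ (by rw [cst_eq true, s10]; exact slt.scons _ (slt_of_head rfl rfl))

lemma agree_s10_s101 : agree 2 s10 s101 :=
  agree.scons _ (agree_succ_iff.mpr ⟨rfl, agree_zero _ _⟩)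

lemma agree_s010_s01 : agree 2 s010 s01 :=
  agree.scons _ (agree_succ_iff.mpr ⟨rfl, agree_zero _ _⟩)

lemma slt_alt_s01 : slt false (alt false) s01 := by
  rw [s01, alt_eq, Bool.not_false, alt_eq true, cst_eq true]
  exact slt.scons _ (slt.scons _ (slt_of_head rfl rfl))

/-! ### Coded sequences of a node -/

/-- The digit sequence coded by `x` at the node `(o, l)`. -/
def ev (o : Outer) (l : List Gen) (x : ℕ → Bool) : ℕ → ℕ := o.E (subs l x)

lemma ev_append (o : Outer) (l l' : List Gen) (x : ℕ → Bool) :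
    ev o (l ++ l') x = ev o l (subs l' x) := by rw [ev, subs_append, ev]

lemma ev_snoc (o : Outer) (l : List Gen) (a : Gen) (x : ℕ → Bool) :
    ev o (l ++ [a]) x = ev o l (sub a.g x) := ev_append o l [a] x

lemma ev_le (o : Outer) (l : List Gen) (x : ℕ → Bool) (i : ℕ) : ev o l x i ≤ o.bd := o.f_le _ _

lemma seqLt_ev (o : Outer) (l : List Gen) {u v : ℕ → Bool} (h0 : u 0 = v 0) (h : slt false u v) :
    seqLt (ev o l u) (ev o l v) := seqLt_E (by simpa using h0) (h.subs l)

lemma agree_ev (o : Outer) (l : List Gen) {u v : ℕ → Bool} (h : agree 2 u v) (hu : u 1 = !u 0) :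
    agree (l.length + 1) (ev o l u) (ev o l v) := (agree_subs_grow l h hu).E o

lemma agree.of_ev (o : Outer) (l : List Gen) {n : ℕ} {u v : ℕ → Bool} (h0 : u 0 = v 0)
    (h : agree (2 ^ l.length * n) (ev o l u) (ev o l v)) : agree n u v := by
  refine agree.of_subs l ?_
  exact (agree.of_E (o := o) (by simpa using h0) h).mono (by omega)

lemma ev_tails_le (o : Outer) (l : List Gen) {K : Bool → ℕ → Bool} (hK : Framed K) {x : ℕ → Bool}
    (hx : Between K x) (n : ℕ) : seqLe (sh n (ev o l x)) (ev o l (K false)) :=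
  (hx.subs hK l).E_le (hK.subs l) o n

lemma ev_le_tails (o : Outer) (l : List Gen) {K : Bool → ℕ → Bool} (hK : Framed K) {x : ℕ → Bool}
    (hx : Between K x) (n : ℕ) : seqLe (ev o l (K true)) (sh n (ev o l x)) :=
  (hx.subs hK l).le_E (hK.subs l) o n

lemma sle_cst (c : Bool) (u : ℕ → Bool) : sle c u (cst (!c)) := by
  refine sle_of_not_slt ?_
  rintro ⟨n, -, h1, -⟩
  cases c <;> simp [cst] at h1

/-- The frame `0 1^∞`, `1 0^∞`, which bounds everything. -/
def wide (c : Bool) : ℕ → Bool := scons c (cst (!c))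

lemma framed_wide : Framed wide := fun _ => ⟨rfl, rfl⟩

lemma between_wide (x : ℕ → Bool) : Between wide x := fun _ c => sle_cst c _

lemma ev_tail_le_b1 (o : Outer) (l : List Gen) (x : ℕ → Bool) (n : ℕ) :
    seqLe (sh n (ev o l x)) (ev o l s01) := ev_tails_le o l framed_wide (between_wide x) n

lemma a0_le_ev_tail (o : Outer) (l : List Gen) (x : ℕ → Bool) (n : ℕ) :
    seqLe (ev o l s10) (sh n (ev o l x)) := ev_le_tails o l framed_wide (between_wide x) n

lemma b0_tail_le_b0 (o : Outer) (l : List Gen) (n : ℕ) :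
    seqLe (sh n (ev o l s010)) (ev o l s010) := by
  let K : Bool → ℕ → Bool := fun c => bif c then s10 else s010
  have hK : Framed K := by intro c; cases c <;> exact ⟨rfl, rfl⟩
  have hx : Between K s010 := by
    intro n c
    cases c with
    | true => exact sle_cst true _
    | false =>
      show sle false (sh n s010) s10
      match n with
      | 0 => exact Or.inr (slt_of_head rfl rfl)
      | 1 => exact Or.inl rfl
      | n + 2 =>
        refine Or.inr (slt_of_head ?_ rfl)
        simp [s010, s10, ← add_assoc, cst]
  exact ev_tails_le o l hK hx n

/-! ### Infinitely many nonzero digits -/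

/-- Infinitely many letters `true`. -/
def InfTrue (x : ℕ → Bool) : Prop := ∀ n, ∃ i, sh n x i = true

/-- Infinitely many nonzero digits. -/
def InfNz (c : ℕ → ℕ) : Prop := ∀ n, ∃ i, 1 ≤ sh n c i

lemma exists_true_sub (g : Bool → Bool) {x : ℕ → Bool} (h : ∃ i, x i = true) :
    ∃ i, sub g x i = true := by
  obtain ⟨i, hi⟩ := h
  induction i generalizing x with
  | zero => exact ⟨0, hi⟩
  | succ i ih =>
    obtain ⟨j, hj⟩ := ih (x := sh 1 x) hi
    rw [← scons_head x]
    rcases hg : g (x 0) with _ | _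
    · exact ⟨j + 1, by rw [sub_scons_false hg]; exact hj⟩
    · exact ⟨j + 2, by rw [sub_scons_true hg]; exact hj⟩

lemma infTrue_sub_of {g : Bool → Bool} {x : ℕ → Bool} (h : ∀ m, ∃ i, sub g (sh m x) i = true) :
    InfTrue (sub g x) := by
  intro n
  obtain ⟨m, e | ⟨-, e⟩⟩ := sh_sub g x n
  · rw [e]; exact h m
  · obtain ⟨i, hi⟩ := h (m + 1)
    exact ⟨i + 1, by rw [e]; exact hi⟩

protected lemma InfTrue.sub {x : ℕ → Bool} (h : InfTrue x) (g : Bool → Bool) : InfTrue (sub g x) :=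
  infTrue_sub_of fun m => exists_true_sub g (h m)

protected lemma InfTrue.subs {x : ℕ → Bool} (h : InfTrue x) (l : List Gen) :
    InfTrue (subs l x) := by
  induction l with
  | nil => exact h
  | cons a l ih => exact ih.sub _

lemma infTrue_s01 : InfTrue s01 := fun n => ⟨1, by simp [s01, add_comm 1 n, cst]⟩

lemma InfTrue.infNz_ev {x : ℕ → Bool} (h : InfTrue x) (o : Outer) (l : List Gen) :
    InfNz (ev o l x) := by
  intro n
  obtain ⟨i, hi⟩ := h.subs l (n + 1)
  refine ⟨i, ?_⟩
  simp only [ev, sh_apply, Outer.E] at hi ⊢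
  rw [add_assoc, hi, o.f_false]
  omega

lemma infNz_b1 (o : Outer) (l : List Gen) : InfNz (ev o l s01) := infTrue_s01.infNz_ev o l

/-! ### Values of digit sequences -/

lemma valSeq_summable {β : ℝ} (hβ : 1 < β) {D : ℕ} {c : ℕ → ℕ} (hc : ∀ i, c i ≤ D) :
    Summable fun i => (c i : ℝ) / β ^ (i + 1) := by
  have h0 : (0 : ℝ) < β := by linarith
  refine Summable.of_nonneg_of_le (fun i => by positivity) (fun i => ?_)
    ((summable_geometric_of_lt_one (r := β⁻¹) (by positivity) (inv_lt_one_of_one_lt₀ hβ)).mul_left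
      (D : ℝ))
  rw [inv_pow, ← div_eq_mul_inv]
  have hD : (c i : ℝ) ≤ D := by exact_mod_cast hc i
  have hp : β ^ i ≤ β ^ (i + 1) := pow_le_pow_right₀ hβ.le (by omega)
  gcongr

lemma valSeq_nonneg {β : ℝ} (hβ : 1 < β) (c : ℕ → ℕ) : 0 ≤ valSeq β c :=
  tsum_nonneg fun i => by positivity

lemma valSeq_step {β : ℝ} (hβ : 1 < β) {D : ℕ} {c : ℕ → ℕ} (hc : ∀ i, c i ≤ D) :
    valSeq β c = (c 0 + valSeq β (sh 1 c)) / β := by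
  have h0 : (0 : ℝ) < β := by linarith
  rw [valSeq, (valSeq_summable hβ hc).tsum_eq_zero_add, valSeq, add_div, ← tsum_div_const]
  congr 1
  · simp
  · refine tsum_congr fun i => ?_
    rw [sh_apply, pow_succ β (i + 1), div_div]

lemma valSeq_const {β : ℝ} (hβ : 1 < β) (D : ℕ) : valSeq β (fun _ => D) = D / (β - 1) := by
  have h := valSeq_step hβ (c := fun _ => D) (D := D) (fun _ => le_rfl)
  have e : sh 1 (fun _ : ℕ => D) = fun _ => D := rfl
  rw [e] at h
  have h0 : β ≠ 0 := by linarith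
  have h1 : β - 1 ≠ 0 := by linarith
  field_simp at h ⊢
  linarith

lemma valSeq_le {β : ℝ} (hβ : 1 < β) {D : ℕ} {c : ℕ → ℕ} (hc : ∀ i, c i ≤ D) :
    valSeq β c ≤ D / (β - 1) := by
  rw [← valSeq_const hβ D]
  refine (valSeq_summable hβ hc).tsum_le_tsum (fun i => ?_) (valSeq_summable hβ fun _ => le_rfl)
  have hD : (c i : ℝ) ≤ D := by exact_mod_cast hc i
  gcongr

lemma bdd_sh {D : ℕ} {c : ℕ → ℕ} (hc : ∀ i, c i ≤ D) (n : ℕ) : ∀ i, sh n c i ≤ D :=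
  fun i => hc (i + n)

lemma valSeq_step_sh {β : ℝ} (hβ : 1 < β) {D : ℕ} {c : ℕ → ℕ} (hc : ∀ i, c i ≤ D) (n : ℕ) :
    valSeq β (sh n c) = (c n + valSeq β (sh (n + 1) c)) / β := by
  rw [valSeq_step hβ (bdd_sh hc n), sh_sh, add_comm 1 n, sh_apply, zero_add]

lemma valSeq_agree {β : ℝ} (hβ : 1 < β) {D : ℕ} {n : ℕ} {c c' : ℕ → ℕ} (hc : ∀ i, c i ≤ D)
    (hc' : ∀ i, c' i ≤ D) (h : agree n c c') :
    |valSeq β c - valSeq β c'| ≤ D / (β - 1) / β ^ n := by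
  induction n generalizing c c' with
  | zero =>
    rw [pow_zero, div_one, abs_le]
    constructor <;> linarith [valSeq_nonneg hβ c, valSeq_nonneg hβ c', valSeq_le hβ hc,
      valSeq_le hβ hc']
  | succ n ih =>
    have h0 : (0 : ℝ) < β := by linarith
    have h1 := ih (bdd_sh hc 1) (bdd_sh hc' 1) h.tail
    rw [valSeq_step hβ hc, valSeq_step hβ hc', h 0 (by omega), ← sub_div, add_sub_add_left_eq_sub,
      abs_div, abs_of_pos h0, pow_succ, ← div_div]
    gcongr

lemma valSeq_cmp {β : ℝ} (hβ : 1 < β) {D : ℕ} {m : ℕ} {u w : ℕ → ℕ} {e : ℝ} (hu : ∀ i, u i ≤ D)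
    (hw : ∀ i, w i ≤ D) (h : agree m u w) (hm : u m < w m)
    (he : valSeq β (sh (m + 1) u) ≤ 1 + e) :
    valSeq β u + valSeq β (sh (m + 1) w) / β ^ (m + 1) ≤ valSeq β w + e / β ^ (m + 1) := by
  have h0 : (0 : ℝ) < β := by linarith
  induction m generalizing u w with
  | zero =>
    rw [valSeq_step hβ hu, valSeq_step hβ hw, zero_add, pow_one, ← add_div, ← add_div]
    have : (u 0 : ℝ) + 1 ≤ w 0 := by exact_mod_cast hm
    rw [zero_add] at he
    gcongr ?_ / β
    linarith
  | succ m ih =>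
    have h1 := ih (bdd_sh hu 1) (bdd_sh hw 1) h.tail hm (by rwa [sh_sh])
    rw [sh_sh] at h1
    rw [valSeq_step hβ hu, valSeq_step hβ hw, h 0 (by omega), pow_succ, ← div_div, ← div_div,
      ← add_div, ← add_div]
    gcongr ?_ / β
    linarith

lemma le_of_forall_div_pow {β C a b : ℝ} (hβ : 1 < β) (h : ∀ k : ℕ, a ≤ b + C / β ^ k) : a ≤ b := by
  have h1 : Tendsto (fun k : ℕ => b + C / β ^ k) atTop (𝓝 (b + 0)) :=
    tendsto_const_nhds.add (tendsto_const_nhds.div_atTop (tendsto_pow_atTop_atTop_of_one_lt hβ))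
  rw [add_zero] at h1
  exact ge_of_tendsto' h1 h

lemma tails_le_one {β : ℝ} (hβ : 1 < β) {D : ℕ} {b c : ℕ → ℕ} (hb : ∀ i, b i ≤ D)
    (hc : ∀ i, c i ≤ D) (hb1 : valSeq β b ≤ 1) (h : ∀ n, seqLe (sh n c) b) (n : ℕ) :
    valSeq β (sh n c) ≤ 1 := by
  have h0 : (0 : ℝ) < β := by linarith
  have hC : (0 : ℝ) ≤ D / (β - 1) := div_nonneg (Nat.cast_nonneg _) (by linarith)
  refine le_of_forall_div_pow (C := D / (β - 1)) hβ fun k => ?_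
  induction k generalizing n with
  | zero =>
    have := valSeq_le hβ (bdd_sh hc n)
    rw [pow_zero, div_one]; linarith
  | succ k ih =>
    rcases h n with e | ⟨m, hm, hlt⟩
    · rw [e]
      have : 0 ≤ D / (β - 1) / β ^ (k + 1) := by positivity
      linarith
    · have h1 := valSeq_cmp hβ (bdd_sh hc n) hb hm hlt (e := D / (β - 1) / β ^ k)
        (by rw [sh_sh]; exact ih _)
      have h2 : 0 ≤ valSeq β (sh (m + 1) b) / β ^ (m + 1) :=
        div_nonneg (valSeq_nonneg hβ _) (by positivity)
      have h3 : D / (β - 1) / β ^ k / β ^ (m + 1) ≤ D / (β - 1) / β ^ (k + 1) := by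
        rw [div_div, ← pow_add]
        gcongr
        · exact hβ.le
        · omega
      linarith

lemma valSeq_pos {β : ℝ} (hβ : 1 < β) {D : ℕ} {c : ℕ → ℕ} (hc : ∀ i, c i ≤ D)
    (h : ∃ i, 1 ≤ c i) : 0 < valSeq β c := by
  obtain ⟨i, hi⟩ := h
  have hi' : (1 : ℝ) ≤ c i := by exact_mod_cast hi
  have h0 : (0 : ℝ) < β := by linarith
  exact (valSeq_summable hβ hc).tsum_pos (fun i => by positivity) i (by positivity)

lemma valSeq_mono {β : ℝ} (hβ : 1 < β) {D : ℕ} {c c' : ℕ → ℕ} (hc : ∀ i, c i ≤ D)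
    (hc' : ∀ i, c' i ≤ D) (ht : ∀ n, valSeq β (sh n c) ≤ 1) (h : seqLe c c') :
    valSeq β c ≤ valSeq β c' := by
  have h0 : (0 : ℝ) < β := by linarith
  rcases h with rfl | ⟨m, hm, hlt⟩
  · exact le_rfl
  · have h1 := valSeq_cmp hβ hc hc' hm hlt (e := 0) (by linarith [ht (m + 1)])
    have h2 : 0 ≤ valSeq β (sh (m + 1) c') / β ^ (m + 1) :=
      div_nonneg (valSeq_nonneg hβ _) (by positivity)
    simp only [zero_div] at h1
    linarith

lemma valSeq_strictMono {β : ℝ} (hβ : 1 < β) {D : ℕ} {c c' : ℕ → ℕ} (hc : ∀ i, c i ≤ D)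
    (hc' : ∀ i, c' i ≤ D) (ht : ∀ n, valSeq β (sh n c) ≤ 1) (h : seqLt c c') (hi : InfNz c') :
    valSeq β c < valSeq β c' := by
  have h0 : (0 : ℝ) < β := by linarith
  obtain ⟨m, hm, hlt⟩ := h
  have h1 := valSeq_cmp hβ hc hc' hm hlt (e := 0) (by linarith [ht (m + 1)])
  have h2 : 0 < valSeq β (sh (m + 1) c') / β ^ (m + 1) :=
    div_pos (valSeq_pos hβ (bdd_sh hc' _) (hi (m + 1))) (by positivity)
  simp only [zero_div] at h1
  linarith

/-! ### Dependence on the base -/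

lemma valSeq_anti {β β' : ℝ} (hβ : 1 < β) (h : β ≤ β') {D : ℕ} {c : ℕ → ℕ} (hc : ∀ i, c i ≤ D) :
    valSeq β' c ≤ valSeq β c := by
  refine (valSeq_summable (by linarith) hc).tsum_le_tsum (fun i => ?_) (valSeq_summable hβ hc)
  have h0 : (0 : ℝ) < β := by linarith
  gcongr

lemma valSeq_strictAnti {β β' : ℝ} (hβ : 1 < β) (h : β < β') {D : ℕ} {c : ℕ → ℕ}
    (hc : ∀ i, c i ≤ D) (hz : ∃ i, 1 ≤ c i) : valSeq β' c < valSeq β c := by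
  have h0 : (0 : ℝ) < β := by linarith
  obtain ⟨j, hj⟩ := hz
  have hj' : (0 : ℝ) < c j := by exact_mod_cast hj
  refine (valSeq_summable (by linarith) hc).tsum_lt_tsum (i := j) (fun i => ?_) ?_
    (valSeq_summable hβ hc)
  · gcongr
  · gcongr

lemma valSeq_continuousAt {β : ℝ} (hβ : 1 < β) {D : ℕ} {c : ℕ → ℕ} (hc : ∀ i, c i ≤ D) :
    ContinuousAt (fun x => valSeq x c) β := by
  obtain ⟨a, ha1, ha⟩ := exists_between hβ
  have h0 : (0 : ℝ) < a := by linarith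
  have h : ContinuousOn (fun x => valSeq x c) (Ici a) := by
    refine continuousOn_tsum (u := fun i => (c i : ℝ) / a ^ (i + 1)) (fun i => ?_)
      (valSeq_summable ha1 hc) (fun i x hx => ?_)
    · refine continuousOn_const.div (continuousOn_id.pow _) fun x hx => ?_
      have : 0 < x := lt_of_lt_of_le h0 hx
      positivity
    · have hx' : a ≤ x := hx
      have : 0 < x := lt_of_lt_of_le h0 hx
      rw [Real.norm_of_nonneg (by positivity)]
      gcongr
  exact h.continuousAt (Ici_mem_nhds ha)

lemma exists_base {β : ℝ} (hβ : 1 < β) {D : ℕ} {c : ℕ → ℕ} (hc : ∀ i, c i ≤ D)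
    (h : 1 ≤ valSeq β c) : ∃ β', β ≤ β' ∧ valSeq β' c = 1 := by
  set B : ℝ := max β (D + 1) with hB
  have hB1 : 1 < B := lt_of_lt_of_le hβ (le_max_left _ _)
  have h1 : valSeq B c ≤ 1 := by
    refine (valSeq_le hB1 hc).trans ?_
    rw [div_le_one (by linarith)]
    linarith [le_max_right β (D + 1 : ℝ)]
  have hcont : ContinuousOn (fun x => valSeq x c) (Icc β B) := fun x hx =>
    (valSeq_continuousAt (lt_of_lt_of_le hβ hx.1) hc).continuousWithinAt
  obtain ⟨x, hx, hx1⟩ := intermediate_value_Icc' (le_max_left β (D + 1 : ℝ)) hcont ⟨h1, h⟩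
  exact ⟨x, hx.1, hx1⟩

/-- Two nonzero digits force the value to exceed `1` for bases near `1`. -/
lemma exists_base_of_two {D : ℕ} {c : ℕ → ℕ} (hc : ∀ i, c i ≤ D) {i j : ℕ} (hij : i < j)
    (hi : 1 ≤ c i) (hj : 1 ≤ c j) : ∃ β, 1 < β ∧ valSeq β c = 1 := by
  have hcont : ContinuousAt (fun x : ℝ => 1 / x ^ (i + 1) + 1 / x ^ (j + 1)) 1 := by
    have h : ∀ k : ℕ, ContinuousAt (fun x : ℝ => 1 / x ^ (k + 1)) 1 := fun k =>
      continuousAt_const.div (continuousAt_id.pow _) (by simp)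
    exact (h i).add (h j)
  have hev : ∀ᶠ x : ℝ in 𝓝 1, 1 < 1 / x ^ (i + 1) + 1 / x ^ (j + 1) :=
    hcont.eventually (lt_mem_nhds (by norm_num))
  have hev' : ∀ᶠ x : ℝ in 𝓝[>] 1, 1 < 1 / x ^ (i + 1) + 1 / x ^ (j + 1) :=
    hev.filter_mono nhdsWithin_le_nhds
  obtain ⟨β, hβ, hβ1⟩ := (hev'.and self_mem_nhdsWithin).exists
  have hβ1 : 1 < β := hβ1
  have h0 : 0 < β := by linarith
  have hle : 1 ≤ valSeq β c := by
    have h1 := (valSeq_summable hβ1 hc).sum_le_tsum {i, j} (fun k _ => by positivity)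
    rw [Finset.sum_pair hij.ne] at h1
    have hi' : (1 : ℝ) ≤ c i := by exact_mod_cast hi
    have hj' : (1 : ℝ) ≤ c j := by exact_mod_cast hj
    have h2 : 1 / β ^ (i + 1) ≤ c i / β ^ (i + 1) := by gcongr
    have h3 : 1 / β ^ (j + 1) ≤ c j / β ^ (j + 1) := by gcongr
    rw [valSeq]; linarith
  obtain ⟨β', h1, h2⟩ := exists_base hβ1 hc hle
  exact ⟨β', by linarith, h2⟩

/-! ### Orbits and greedy digits -/

lemma Tbeta_iterate_valSeq {β : ℝ} (hβ : 1 < β) {D : ℕ} {c : ℕ → ℕ} (hc : ∀ i, c i ≤ D)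
    (h : ∀ n, valSeq β (sh n c) < 1) (n : ℕ) : (Tbeta β)^[n] (valSeq β c) = valSeq β (sh n c) := by
  induction n with
  | zero => rfl
  | succ n ih =>
    rw [Function.iterate_succ_apply', ih, valSeq_step_sh hβ hc, Tbeta,
      mul_div_cancel₀ _ (by linarith), Int.fract_natCast_add, Int.fract_eq_self]
    exact ⟨valSeq_nonneg hβ _, h _⟩

/-- The greedy digits of `x` in base `β`. -/
noncomputable def dig (β x : ℝ) : ℕ → ℕ := fun n => ⌊β * (Tbeta β)^[n] x⌋₊

lemma Tbeta_iterate_mem {β x : ℝ} (hx : x ∈ Ico (0 : ℝ) 1) (n : ℕ) :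
    (Tbeta β)^[n] x ∈ Ico (0 : ℝ) 1 := by
  cases n with
  | zero => exact hx
  | succ n =>
    rw [Function.iterate_succ_apply']
    exact ⟨Int.fract_nonneg _, Int.fract_lt_one _⟩

lemma dig_le {β x : ℝ} (hβ : 1 < β) (hx : x ∈ Ico (0 : ℝ) 1) (n : ℕ) : dig β x n ≤ ⌊β⌋₊ := by
  refine Nat.floor_le_floor ?_
  have h := Tbeta_iterate_mem (β := β) hx n
  nlinarith [h.1, h.2]

lemma dig_step {β x : ℝ} (hβ : 1 < β) (hx : x ∈ Ico (0 : ℝ) 1) (n : ℕ) :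
    (Tbeta β)^[n] x = (dig β x n + (Tbeta β)^[n + 1] x) / β := by
  have h0 : 0 < β := by linarith
  have h := Tbeta_iterate_mem (β := β) hx n
  have hn : 0 ≤ β * (Tbeta β)^[n] x := mul_nonneg h0.le h.1
  rw [Function.iterate_succ_apply', Tbeta, dig, eq_div_iff h0.ne',
    natCast_floor_eq_intCast_floor hn,
    Int.floor_add_fract, mul_comm]

lemma Tbeta_iterate_eq_valSeq_dig {β x : ℝ} (hβ : 1 < β) (hx : x ∈ Ico (0 : ℝ) 1) (n : ℕ) :
    (Tbeta β)^[n] x = valSeq β (sh n (dig β x)) := by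
  have h0 : 0 < β := by linarith
  set C : ℝ := 1 + ⌊β⌋₊ / (β - 1) with hC
  have key : ∀ k n : ℕ, |(Tbeta β)^[n] x - valSeq β (sh n (dig β x))| ≤ C / β ^ k := by
    intro k
    induction k with
    | zero =>
      intro n
      have h := Tbeta_iterate_mem (β := β) hx n
      have h1 := valSeq_nonneg hβ (sh n (dig β x))
      have h2 := valSeq_le hβ (bdd_sh (dig_le hβ hx) n)
      rw [pow_zero, div_one, abs_le]
      constructor <;> linarith [h.1, h.2]
    | succ k ih =>
      intro n
      rw [dig_step hβ hx, valSeq_step_sh hβ (dig_le hβ hx), ← sub_div, add_sub_add_left_eq_sub,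
        abs_div, abs_of_pos h0, pow_succ, ← div_div]
      gcongr
      exact ih _
  have h1 : |(Tbeta β)^[n] x - valSeq β (sh n (dig β x))| ≤ 0 :=
    le_of_forall_div_pow (C := C) hβ fun k => by rw [zero_add]; exact key k n
  exact sub_eq_zero.mp (abs_nonpos_iff.mp h1)

lemma seqLt_of_not_seqLe {x y : ℕ → ℕ} (h : ¬ seqLe y x) : seqLt x y := by
  have hne : x ≠ y := fun e => h (Or.inl e.symm)
  obtain ⟨n, hn, hd⟩ := exists_first_diff hne
  rcases lt_or_gt_of_ne hd with h1 | h1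
  · exact ⟨n, hn, h1⟩
  · exact absurd (Or.inr ⟨n, hn.symm, h1⟩) h

/-- Greedy expansions stay below every self-admissible sequence of value at least `1`. -/
lemma dig_lt {β x : ℝ} (hβ : 1 < β) (hx : x ∈ Ico (0 : ℝ) 1) {D : ℕ} {b : ℕ → ℕ}
    (hb : ∀ i, b i ≤ D) (hself : ∀ n, seqLe (sh n b) b) (h1 : 1 ≤ valSeq β b) (n : ℕ) :
    seqLt (sh n (dig β x)) b := by
  refine seqLt_of_not_seqLe fun hle => ?_
  obtain ⟨β', hββ', h2⟩ := exists_base hβ hb h1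
  have hβ' : 1 < β' := by linarith
  have hd := bdd_sh (dig_le hβ hx) n
  have h3 : valSeq β' b ≤ valSeq β' (sh n (dig β x)) :=
    valSeq_mono hβ' (D := max D ⌊β⌋₊) (fun i => (hb i).trans (le_max_left _ _))
      (fun i => (hd i).trans (le_max_right _ _)) (tails_le_one hβ' hb hb h2.le hself) hle
  have h4 := valSeq_anti hβ hββ' hd
  rw [← Tbeta_iterate_eq_valSeq_dig hβ hx] at h4
  linarith [(Tbeta_iterate_mem (β := β) hx n).2]

lemma lt_dig {β x t : ℝ} (hβ : 1 < β) (hx : x ∈ survivor β t) {D : ℕ} {a : ℕ → ℕ}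
    (ha : ∀ i, a i ≤ D) (h1 : valSeq β a < t) (n : ℕ) : seqLt a (sh n (dig β x)) := by
  refine seqLt_of_not_seqLe fun hle => ?_
  have hd := bdd_sh (dig_le hβ hx.1) n
  have h3 : valSeq β (sh n (dig β x)) ≤ valSeq β a := by
    refine valSeq_mono hβ (D := max D ⌊β⌋₊) (fun i => (hd i).trans (le_max_right _ _))
      (fun i => (ha i).trans (le_max_left _ _)) (fun m => ?_) hle
    rw [sh_sh, ← Tbeta_iterate_eq_valSeq_dig hβ hx.1]
    exact (Tbeta_iterate_mem hx.1 _).2.le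
  rw [← Tbeta_iterate_eq_valSeq_dig hβ hx.1] at h3
  linarith [hx.2 n]

/-! ### Lower bounds for the critical value -/

/-- A uniformly separated binary tree of points has positive Hausdorff dimension. -/
lemma dimH_range_pos {G : (ℕ → Fin 2) → ℝ} {c ρ : ℝ} (hc : 0 < c) (hρ : 0 < ρ) (hρ1 : ρ < 1)
    (hG : ∀ δ δ' : ℕ → Fin 2, ∀ m, δ m ≠ δ' m → c * ρ ^ m ≤ |G δ - G δ'|) :
    0 < dimH (range G) := by
  set r : ℝ := Real.logb ρ (1 / 2) with hr
  have hr0 : 0 < r := Real.logb_pos_of_base_lt_one hρ hρ1 (by norm_num) (by norm_num)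
  have hρr : ρ ^ r = 1 / 2 := Real.rpow_logb hρ hρ1.ne (by norm_num)
  have hinj : Function.Injective G := by
    intro δ δ' h
    by_contra hne
    obtain ⟨m, -, hm⟩ := exists_first_diff hne
    have := hG δ δ' m hm
    rw [h, sub_self, abs_zero] at this
    have : 0 < c * ρ ^ m := by positivity
    linarith
  set H : ℝ → ℝ := fun x => Real.ofDigits (Function.invFun G x) with hH
  have hHG : ∀ δ, H (G δ) = Real.ofDigits δ := fun δ => by
    simp only [hH, Function.leftInverse_invFun hinj δ]
  have hold : HolderOnWith (Real.toNNReal (c⁻¹ ^ r)) (Real.toNNReal r) H (range G) := by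
    rintro _ ⟨δ, rfl⟩ _ ⟨δ', rfl⟩
    rw [hHG, hHG, edist_dist, edist_dist, Real.coe_toNNReal _ hr0.le,
      ENNReal.ofReal_rpow_of_nonneg dist_nonneg hr0.le, ← ENNReal.ofReal_coe_nnreal,
      Real.coe_toNNReal _ (by positivity), ← ENNReal.ofReal_mul (by positivity)]
    refine ENNReal.ofReal_le_ofReal ?_
    rw [Real.dist_eq, Real.dist_eq, ← Real.mul_rpow (by positivity) (abs_nonneg _)]
    by_cases hne : δ = δ'
    · rw [hne, sub_self, abs_zero]; positivity
    · obtain ⟨m, hm, hmne⟩ := exists_first_diff hne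
      calc |Real.ofDigits δ - Real.ofDigits δ'| ≤ ((2 : ℕ) ^ m : ℝ)⁻¹ := by
            simpa using Real.abs_ofDigits_sub_ofDigits_le (x := δ) (y := δ') (n := m) hm
        _ = (ρ ^ m) ^ r := by
            rw [← Real.rpow_natCast ρ m, ← Real.rpow_mul hρ.le, mul_comm, Real.rpow_mul hρ.le, hρr,
              Real.rpow_natCast]
            simp
        _ ≤ (c⁻¹ * |G δ - G δ'|) ^ r := by
            refine Real.rpow_le_rpow (by positivity) ?_ hr0.le
            rw [inv_mul_eq_div, le_div_iff₀ hc, mul_comm]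
            exact hG δ δ' m hmne
  have hle := hold.dimH_image_le (Real.toNNReal_pos.mpr hr0)
  have hsub : Ico (0 : ℝ) 1 ⊆ H '' range G := by
    intro x hx
    exact ⟨G (Real.digits x 2), ⟨_, rfl⟩, by rw [hHG, Real.ofDigits_digits (by norm_num) hx]⟩
  have h1 : dimH (Ico (0 : ℝ) 1) = 1 := by
    rw [Real.dimH_of_nonempty_interior (by rw [interior_Ico]; exact ⟨1 / 2, by norm_num⟩)]
    simp
  have h2 : 1 ≤ dimH (range G) / (Real.toNNReal r : ENNReal) :=
    h1 ▸ (dimH_mono hsub).trans hle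
  rw [pos_iff_ne_zero]
  intro h0
  rw [h0, ENNReal.zero_div] at h2
  simp at h2

lemma valSeq_separation {β t : ℝ} (hβ : 1 < β) (ht : 0 < t) {D N : ℕ} {u w : ℕ → ℕ}
    (hu : ∀ i, u i ≤ D) (hw : ∀ i, w i ≤ D) (hu1 : ∀ n, valSeq β (sh n u) ≤ 1)
    (hw1 : ∀ n, valSeq β (sh n w) ≤ 1) (hut : ∀ n, t ≤ valSeq β (sh n u))
    (hwt : ∀ n, t ≤ valSeq β (sh n w)) (h : ¬ agree N u w) :
    t / β ^ N ≤ |valSeq β u - valSeq β w| := by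
  have h0 : 0 < β := by linarith
  obtain ⟨j, hj, hne⟩ := exists_first_diff (fun e => h (by rw [e]; exact fun _ _ => rfl) : u ≠ w)
  have hjN : j < N := by
    by_contra hlt
    exact h (hj.mono (by omega))
  have hpow : t / β ^ N ≤ t / β ^ (j + 1) := by
    gcongr
    · exact hβ.le
    · omega
  have key : ∀ {u w : ℕ → ℕ}, (∀ i, u i ≤ D) → (∀ i, w i ≤ D) → (∀ n, valSeq β (sh n u) ≤ 1) →
      (∀ n, t ≤ valSeq β (sh n w)) → agree j u w → u j < w j →
      t / β ^ (j + 1) ≤ valSeq β w - valSeq β u := by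
    intro u w hu hw hu1 hwt hj hlt
    have h1 := valSeq_cmp hβ hu hw hj hlt (e := 0) (by linarith [hu1 (j + 1)])
    have h2 : t / β ^ (j + 1) ≤ valSeq β (sh (j + 1) w) / β ^ (j + 1) := by
      have := hwt (j + 1)
      gcongr
    rw [zero_div] at h1
    linarith
  rcases lt_or_gt_of_ne hne with hlt | hlt
  · rw [abs_sub_comm]
    exact hpow.trans ((key hu hw hu1 hwt hj hlt).trans (le_abs_self _))
  · exact hpow.trans ((key hw hu hw1 hut hj.symm hlt).trans (le_abs_self _))

lemma dimH_survivor_pos {β t : ℝ} (hβ : 1 < β) (o : Outer) (l : List Gen)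
    (hb : valSeq β (ev o l s01) < 1) (ht : 0 < t) (hta : t ≤ valSeq β (ev o l s10)) :
    0 < dimH (survivor β t) := by
  have h0 : 0 < β := by linarith
  set X : (ℕ → Fin 2) → ℕ → Bool := fun δ => scons false fun i => decide (δ i = 1) with hX
  have tails1 : ∀ (x : ℕ → Bool) n, valSeq β (sh n (ev o l x)) ≤ 1 := fun x n =>
    tails_le_one hβ (ev_le o l _) (ev_le o l _) hb.le (ev_tail_le_b1 o l x) n
  have tailslt : ∀ (x : ℕ → Bool) n, valSeq β (sh n (ev o l x)) < 1 := fun x n =>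
    lt_of_le_of_lt (valSeq_mono hβ (bdd_sh (ev_le o l x) n) (ev_le o l _)
      (fun m => by rw [sh_sh]; exact tails1 x _) (ev_tail_le_b1 o l x n)) hb
  have tailst : ∀ (x : ℕ → Bool) n, t ≤ valSeq β (sh n (ev o l x)) := fun x n =>
    hta.trans (valSeq_mono hβ (ev_le o l _) (bdd_sh (ev_le o l x) n) (tails1 _)
      (a0_le_ev_tail o l x n))
  set G : (ℕ → Fin 2) → ℝ := fun δ => valSeq β (ev o l (X δ)) with hG
  have hsub : range G ⊆ survivor β t := by
    rintro _ ⟨δ, rfl⟩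
    refine ⟨⟨valSeq_nonneg hβ _, tailslt (X δ) 0⟩, fun n => ?_⟩
    rw [hG, Tbeta_iterate_valSeq hβ (ev_le o l _) (tailslt (X δ))]
    exact tailst _ n
  refine lt_of_lt_of_le ?_ (dimH_mono hsub)
  set q : ℕ := 2 ^ l.length with hq
  refine dimH_range_pos (c := t / β ^ (q * 2)) (ρ := (β ^ q)⁻¹) (by positivity) (by positivity)
    (inv_lt_one_of_one_lt₀ (one_lt_pow₀ hβ (by positivity))) fun δ δ' m hm => ?_
  have hna : ¬ agree (q * (m + 2)) (ev o l (X δ)) (ev o l (X δ')) := by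
    intro hag
    have h1 := agree.of_ev o l (n := m + 2) (u := X δ) (v := X δ') rfl hag (m + 1) (by omega)
    simp only [hX, scons_succ, decide_eq_decide] at h1
    apply hm
    revert h1
    generalize δ m = a
    generalize δ' m = b
    fin_cases a <;> fin_cases b <;> simp
  have hsep := valSeq_separation hβ ht (ev_le o l _) (ev_le o l _) (tails1 (X δ)) (tails1 (X δ'))
    (tailst _) (tailst _) hna
  refine le_of_eq_of_le ?_ hsep
  rw [inv_pow, ← pow_mul, ← div_eq_mul_inv, div_div, ← pow_add]
  congr 2
  ring

lemma survivor_two (β : ℝ) : survivor β 2 = ∅ := by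
  refine eq_empty_iff_forall_notMem.mpr fun x hx => ?_
  have h := hx.2 0
  have h1 := hx.1.2
  simp only [Function.iterate_zero, id] at h
  linarith

lemma le_tau {β a : ℝ} (h : ∀ t, 0 < t → t ≤ a → dimH (survivor β t) ≠ 0) : a ≤ tau β := by
  refine le_csInf ⟨2, by norm_num, by rw [survivor_two, dimH_empty]⟩ fun t ht => ?_
  by_contra hlt
  exact h t ht.1 (not_le.mp hlt).le ht.2

lemma tau_le {β a : ℝ} (ha : 0 ≤ a) (h : ∀ t, a < t → dimH (survivor β t) = 0) : tau β ≤ a :=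
  le_of_forall_gt_imp_ge_of_dense fun t ht =>
    csInf_le ⟨0, fun _ hs => hs.1.le⟩ ⟨lt_of_le_of_lt ha ht, h t ht⟩

lemma a0_le_tau {β : ℝ} (hβ : 1 < β) (o : Outer) (l : List Gen)
    (hb : valSeq β (ev o l s01) < 1) : valSeq β (ev o l s10) ≤ tau β :=
  le_tau fun _ ht hta => ne_of_gt (dimH_survivor_pos hβ o l hb ht hta)

/-! ### Countability of the strictly bounded sequences -/

/-- Sequences all of whose shifts are strictly bounded by the frame `K`. -/
def Strict (K : Bool → ℕ → Bool) : Set (ℕ → Bool) := {x | ∀ n, slt (x n) (sh n x) (K (x n))}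

lemma Strict.sh_mem {K : Bool → ℕ → Bool} {x : ℕ → Bool} (hx : x ∈ Strict K) (m : ℕ) :
    sh m x ∈ Strict K := fun n => by
  rw [sh_sh, sh_apply]; exact hx (n + m)

lemma countable_shift {α : Type*} [Countable α] {T : Set (ℕ → α)} (hT : T.Countable) :
    {x : ℕ → α | ∃ n, sh n x ∈ T}.Countable := by
  rw [Set.ofPred_exists]
  refine countable_iUnion fun n => ?_
  have h : ((univ : Set (Fin n → α)) ×ˢ T).Countable := (to_countable _).prod hT
  refine (h.image fun p i => if h : i < n then p.1 ⟨i, h⟩ else p.2 (i - n)).mono fun x hx => ?_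
  refine ⟨(fun i => x i, sh n x), ⟨mem_univ _, hx⟩, ?_⟩
  funext i
  by_cases hi : i < n
  · simp [hi]
  · simp only [hi, dite_false, sh_apply]; congr 1; omega

/-- The last occurrence of `c` before a block of `!c`. -/
lemma exists_last {x : ℕ → Bool} {c : Bool} {j n : ℕ} (hjn : j ≤ n) (hj : x j = c)
    (hn : x n = !c) : ∃ i, j ≤ i ∧ i < n ∧ x i = c ∧ ∀ r, i < r → r ≤ n → x r = !c := by
  induction n, hjn using Nat.le_induction with
  | base => rw [hj] at hn; cases c <;> simp at hn
  | succ n hjn ih =>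
    by_cases h : x n = c
    · refine ⟨n, hjn, by omega, h, fun r h1 h2 => ?_⟩
      rw [show r = n + 1 by omega, hn]
    · have h' : x n = !c := by revert h; cases x n <;> cases c <;> simp
      obtain ⟨i, h1, h2, h3, h4⟩ := ih h'
      refine ⟨i, h1, by omega, h3, fun r h5 h6 => ?_⟩
      by_cases hr : r = n + 1
      · rw [hr, hn]
      · exact h4 r h5 (by omega)

lemma slt.letter {d : Bool} {u v : ℕ → Bool} {n : ℕ} (h : slt d u v) (hn : agree n u v)
    (hv : v n = d) : u n = d := by
  by_contra hne
  refine h.asymm ⟨n, hn.symm, hv, ?_⟩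
  revert hne; cases u n <;> cases d <;> simp

/-! #### Desubstitution -/

/-- Parsing a sequence into blocks of the substitution with flags `g`. -/
def desIdx (g : Bool → Bool) : ℕ → (ℕ → Bool) → Bool
  | 0, x => x 0
  | m + 1, x => desIdx g m (if g (x 0) then sh 2 x else sh 1 x)

lemma exists_sub_eq {g : Bool → Bool} {P : (ℕ → Bool) → Prop}
    (h1 : ∀ y, P y → g (y 0) = true → y 1 = !y 0 ∧ P (sh 2 y))
    (h2 : ∀ y, P y → g (y 0) = false → P (sh 1 y)) {y : ℕ → Bool} (hy : P y) :
    ∃ x, sub g x = y := by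
  have hdes : ∀ y : ℕ → Bool, (fun m => desIdx g m y) =
      scons (y 0) (fun m => desIdx g m (if g (y 0) then sh 2 y else sh 1 y)) := fun y => by
    funext i; cases i <;> rfl
  refine ⟨fun m => desIdx g m y, funext fun i => ?_⟩
  induction i using Nat.strong_induction_on generalizing y with
  | _ i ih =>
    rw [hdes]
    rcases hg : g (y 0) with _ | _
    · rw [sub_scons_false hg]
      cases i with
      | zero => rfl
      | succ i => exact ih i (by omega) (h2 y hy hg)
    · rw [sub_scons_true hg]
      obtain ⟨h3, h4⟩ := h1 y hy hg
      match i with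
      | 0 => rfl
      | 1 => exact h3.symm
      | i + 2 => exact ih i (by omega) h4

lemma sub_sh (g : Bool → Bool) (x : ℕ → Bool) (m : ℕ) : ∃ n, sh n (sub g x) = sub g (sh m x) := by
  induction m with
  | zero => exact ⟨0, rfl⟩
  | succ m ih =>
    obtain ⟨n, hn⟩ := ih
    rw [← scons_sh m x] at hn
    rcases hg : g (x m) with _ | _
    · exact ⟨1 + n, by rw [← sh_sh, hn, sub_scons_false hg, sh_one_scons]⟩
    · exact ⟨2 + n, by rw [← sh_sh, hn, sub_scons_true hg]; rfl⟩

lemma Strict.of_sub {K : Bool → ℕ → Bool} {g : Bool → Bool} {x : ℕ → Bool}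
    (h : sub g x ∈ Strict fun c => sub g (K c)) : x ∈ Strict K := by
  intro m
  obtain ⟨n, hn⟩ := sub_sh g x m
  have h1 := h n
  have h0 : sub g x n = x m := by
    have := congrFun hn 0
    simpa using this
  rw [hn, h0] at h1
  exact h1.of_sub

/-- The special sequences which may escape desubstitution. -/
def special : Set (ℕ → Bool) := {cst false, cst true, alt false, alt true}

lemma countable_special : special.Countable := by
  unfold special; exact Set.to_countable _

lemma cst_mem (c : Bool) : cst c ∈ special := by cases c <;> simp [special]
lemma alt_mem (c : Bool) : alt c ∈ special := by cases c <;> simp [special]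

lemma Strict.bound {K : Bool → ℕ → Bool} (hK : Framed K) {g : Bool → Bool} {x : ℕ → Bool}
    (hx : x ∈ Strict fun c => sub g (K c)) {n : ℕ} {c : Bool} (hn : x n = c) :
    slt c (sh n x) (sub g (scons c (cst (!c)))) := by
  have h := hx n
  rw [hn] at h
  refine h.trans_le (sle.sub g ?_)
  rw [eq_scons (hK c).1]
  exact (sle_cst c _).scons c

lemma Strict.parse_single {K : Bool → ℕ → Bool} (hK : Framed K) {g : Bool → Bool} {c : Bool}
    (hc : g c = false) (hc' : g (!c) = true) {x : ℕ → Bool}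
    (hx : x ∈ Strict fun c => sub g (K c)) :
    ∃ n, sh n x ∈ special ∨ ∃ y, sub g y = sh n x := by
  by_cases hex : ∃ n, x n = c
  · obtain ⟨n₀, hn₀⟩ := hex
    refine ⟨n₀, Or.inr ?_⟩
    have key : ∀ n, n₀ ≤ n → x n = !c → x (n + 1) = c := by
      intro n hn hxn
      by_contra hne
      have hne : x (n + 1) = !c := by revert hne; cases x (n + 1) <;> cases c <;> simp
      obtain ⟨j, h1, h2, h3, h4⟩ := exists_last (show n₀ ≤ n + 1 by omega) hn₀ hne
      have hj1 : j < n := by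
        by_contra hjn
        have : j = n := by omega
        rw [this, hxn] at h3
        cases c <;> simp at h3
      have h5 := Strict.bound hK hx h3
      rw [sub_scons_false hc, sub_cst_true hc', alt_eq, Bool.not_not, alt_eq c] at h5
      have h6 := h5.letter (n := 2) (by
        refine agree_succ_iff.mpr ⟨by simpa using h3, agree_succ_iff.mpr ⟨?_, agree_zero _ _⟩⟩
        simpa [add_comm 1 j] using h4 (j + 1) (by omega) (by omega)) rfl
      rw [sh_apply, add_comm, h4 (j + 2) (by omega) (by omega)] at h6
      cases c <;> simp at h6
    refine exists_sub_eq (P := fun y => ∀ n, y n = !c → y (n + 1) = c) (fun y hy hg => ?_)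
      (fun y hy _ n => hy (n + 1)) (y := sh n₀ x) fun n hn => ?_
    · have h0 : y 0 = !c := by
        by_contra hne
        have : y 0 = c := by revert hne; cases y 0 <;> cases c <;> simp
        rw [this, hc] at hg
        cases hg
      exact ⟨by rw [hy 0 h0, h0, Bool.not_not], fun n => hy (n + 2)⟩
    · have := key (n + n₀) (by omega) hn
      rw [sh_apply, ← this]; congr 1; omega
  · refine ⟨0, Or.inl ?_⟩
    have : x = cst (!c) := funext fun n => by
      have : x n ≠ c := fun h => hex ⟨n, h⟩
      revert this; simp only [cst]; cases x n <;> cases c <;> simp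
    rw [sh_zero, this]
    exact cst_mem _

lemma alt_even (c : Bool) (q : ℕ) : alt c (2 * q) = c ∧ alt c (2 * q + 1) = !c := by
  induction q with
  | zero => exact ⟨rfl, rfl⟩
  | succ q ih =>
    rw [alt_eq, alt_eq (!c), Bool.not_not]
    exact ih

/-- The bound `c (!c) ((!c) c)^∞` for the substitution with two flags. -/
lemma sub_M_wide (c : Bool) :
    sub Gen.M.g (scons c (cst (!c))) = scons c (scons (!c) (alt (!c))) := by
  rw [sub_scons_true rfl, sub_cst_true rfl]

lemma Strict.parse_double {K : Bool → ℕ → Bool} (hK : Framed K) {x : ℕ → Bool}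
    (hx : x ∈ Strict fun c => sub Gen.M.g (K c)) :
    ∃ n, sh n x ∈ special ∨ ∃ y, sub Gen.M.g y = sh n x := by
  have bound : ∀ {n c}, x n = c → slt c (sh n x) (scons c (scons (!c) (alt (!c)))) :=
    fun {n c} h => by rw [← sub_M_wide]; exact Strict.bound hK hx h
  by_cases hpat : ∃ n c, x n = c ∧ x (n + 1) = !c ∧ x (n + 2) = !c
  · obtain ⟨n₀, c, h0, h1, h2⟩ := hpat
    refine ⟨n₀, Or.inr ?_⟩
    have h3 : x (n₀ + 3) = c := by
      have := (bound h0).letter (n := 3) (by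
        refine agree_succ_iff.mpr ⟨by simpa using h0, agree_succ_iff.mpr ⟨?_,
          agree_succ_iff.mpr ⟨?_, agree_zero _ _⟩⟩⟩
        · simpa [add_comm 1 n₀] using h1
        · show x (0 + 1 + 1 + n₀) = _
          rw [show 0 + 1 + 1 + n₀ = n₀ + 2 by omega, h2]; rfl) (by simp [alt])
      rwa [sh_apply, add_comm] at this
    have state : ∀ k, ∃ j d q, n₀ + 2 * k + 4 = j + 2 * q + 4 ∧
        agree (2 * q + 4) (sh j x) (scons d (scons (!d) (alt (!d)))) := by
      intro k
      induction k with
      | zero =>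
        refine ⟨n₀, c, 0, by omega, ?_⟩
        refine agree_succ_iff.mpr ⟨by simpa using h0, agree_succ_iff.mpr ⟨?_,
          agree_succ_iff.mpr ⟨?_, agree_succ_iff.mpr ⟨?_, agree_zero _ _⟩⟩⟩⟩
        · simpa [add_comm 1 n₀] using h1
        · show x (0 + 1 + 1 + n₀) = _
          rw [show 0 + 1 + 1 + n₀ = n₀ + 2 by omega, h2]; rfl
        · show x (0 + 1 + 1 + 1 + n₀) = _
          rw [show 0 + 1 + 1 + 1 + n₀ = n₀ + 3 by omega, h3]; cases c <;> rfl
      | succ k ih =>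
        obtain ⟨j, d, q, hp, hag⟩ := ih
        have hj : x j = d := by simpa using hag 0 (by omega)
        have hb := bound hj
        have snoc : ∀ {n : ℕ} {u v : ℕ → Bool}, agree n u v → u n = v n → agree (n + 1) u v := by
          intro n u v h h' i hi
          rcases Nat.lt_succ_iff_lt_or_eq.mp hi with h1 | rfl
          · exact h i h1
          · exact h'
        have ea := alt_even (!d) (q + 1)
        by_cases hxp : sh j x (2 * q + 4) = !d
        · have hag5 := snoc hag (by rw [hxp]; exact ea.1.symm)
          have e5 : scons d (scons (!d) (alt (!d))) (2 * q + 5) = d := by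
            have := ea.2; rw [Bool.not_not] at this; exact this
          have h5 := hb.letter hag5 e5
          exact ⟨j, d, q + 1, by omega, snoc hag5 (h5.trans e5.symm)⟩
        · have hxp : sh j x (2 * q + 4) = d := by
            revert hxp; cases sh j x (2 * q + 4) <;> cases d <;> simp
          have ea := alt_even (!d) q
          have x2 : sh j x (2 * q + 2) = !d := (hag _ (by omega)).trans ea.1
          have x3 : sh j x (2 * q + 3) = d := by
            have := (hag (2 * q + 3) (by omega)).trans ea.2
            rwa [Bool.not_not] at this
          set p := 2 * q + 2 + j with hpdef
          have y0 : x p = !d := x2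
          have y1 : x (1 + p) = d := by rw [← x3, sh_apply]; congr 1; omega
          have y2 : x (2 + p) = d := by rw [← hxp, sh_apply]; congr 1; omega
          have hag3 : agree 3 (sh p x) (scons (!d) (scons (!!d) (alt (!!d)))) := by
            refine agree_succ_iff.mpr ⟨by simpa using y0, agree_succ_iff.mpr ⟨?_,
              agree_succ_iff.mpr ⟨?_, agree_zero _ _⟩⟩⟩
            · simpa using y1
            · show x (0 + 1 + 1 + p) = _
              rw [show 0 + 1 + 1 + p = 2 + p by omega, y2]; cases d <;> rfl
          have e3 : scons (!d) (scons (!!d) (alt (!!d))) 3 = !d := by simp [alt]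
          exact ⟨p, !d, 0, by omega, snoc hag3 (by rw [(bound y0).letter hag3 e3, e3])⟩
    have good : ∀ k, sh n₀ x (2 * k + 1) = !sh n₀ x (2 * k) := by
      intro k
      match k with
      | 0 => simp [h0, add_comm 1 n₀, h1]
      | k + 1 =>
        obtain ⟨j, d, q, hp, hag⟩ := state k
        have ea := alt_even (!d) q
        have x2 : sh j x (2 * q + 2) = !d := (hag _ (by omega)).trans ea.1
        have x3 : sh j x (2 * q + 3) = !!d := (hag (2 * q + 3) (by omega)).trans ea.2
        rw [sh_apply] at x2 x3 ⊢
        rw [sh_apply, show 2 * (k + 1) + 1 + n₀ = 2 * q + 3 + j by omega,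
          show 2 * (k + 1) + n₀ = 2 * q + 2 + j by omega, x2, x3]
    exact exists_sub_eq (P := fun y => ∀ k, y (2 * k + 1) = !y (2 * k))
      (fun y hy _ => ⟨hy 0, fun k => hy (k + 1)⟩) (fun y _ hg => by simp [Gen.g] at hg) good
  · push Not at hpat
    by_cases hch : ∃ n, x (n + 1) = !x n
    · obtain ⟨n, hn⟩ := hch
      refine ⟨n, Or.inl ?_⟩
      have hstep : ∀ i, x (n + i + 1) = !x (n + i) := by
        intro i
        induction i with
        | zero => exact hn
        | succ i ih =>
          have := hpat (n + i) (x (n + i)) rfl ih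
          rw [show n + (i + 1) = n + i + 1 by omega, ih]
          revert this
          rw [show n + i + 2 = n + i + 1 + 1 by omega]
          cases x (n + i + 1 + 1) <;> cases x (n + i) <;> simp
      have : sh n x = alt (x n) := by
        refine eq_alt (funext fun i => ?_)
        match i with
        | 0 => simp
        | 1 => simpa [add_comm 1 n] using hn
        | i + 2 =>
          have a := hstep i
          have b := hstep (i + 1)
          rw [← add_assoc, a] at b
          simp only [sh_apply, scons_succ]
          rw [show i + 2 + n = n + i + 1 + 1 by omega, b, Bool.not_not, add_comm]
      rw [this]
      exact alt_mem _
    · push Not at hch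
      refine ⟨0, Or.inl ?_⟩
      have : x = cst (x 0) := by
        funext i
        induction i with
        | zero => rfl
        | succ i ih =>
          have h := hch i
          rw [ih] at h
          revert h; simp only [cst]; cases x (i + 1) <;> cases x 0 <;> simp
      rw [sh_zero, this]
      exact cst_mem _

lemma Strict.parse {K : Bool → ℕ → Bool} (hK : Framed K) (a : Gen) {x : ℕ → Bool}
    (hx : x ∈ Strict fun c => sub a.g (K c)) :
    ∃ n, sh n x ∈ special ∨ ∃ y, sub a.g y = sh n x := by
  cases a with
  | A => exact Strict.parse_single hK (c := false) rfl rfl hx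
  | B => exact Strict.parse_single hK (c := true) rfl rfl hx
  | M => exact Strict.parse_double hK hx

lemma countable_strict_sub {K : Bool → ℕ → Bool} (hK : Framed K) (a : Gen)
    (h : (Strict K).Countable) : (Strict fun c => sub a.g (K c)).Countable := by
  refine (countable_shift (countable_special.union (h.image (sub a.g)))).mono fun x hx => ?_
  obtain ⟨n, hn | ⟨y, hy⟩⟩ := Strict.parse hK a hx
  · exact ⟨n, Or.inl hn⟩
  · refine ⟨n, Or.inr ⟨y, Strict.of_sub (g := a.g) ?_, hy⟩⟩
    rw [hy]
    exact Strict.sh_mem hx n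

/-- The frame `0 1^∞`, `1 0 1^∞`. -/
def narrow (c : Bool) : ℕ → Bool := bif c then s101 else s01

lemma framed_narrow : Framed narrow := by intro c; cases c <;> exact ⟨rfl, rfl⟩

lemma countable_strict_narrow : (Strict narrow).Countable := by
  refine (countable_shift countable_special).mono fun x hx => ?_
  have step : ∀ n, x n = true → x (n + 1) = true := by
    intro n hn
    by_contra hne
    have hne : x (n + 1) = false := by simpa using hne
    have h := hx n
    rw [hn, ← scons_sh n x, hn] at h
    have h1 : slt true (sh (n + 1) x) s01 := h.of_scons
    rw [← scons_sh (n + 1) x, hne] at h1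
    have h2 : slt (!false) (sh (n + 1 + 1) x) (cst true) := h1.of_scons
    rw [slt_not_iff] at h2
    rcases sle_cst false (sh (n + 1 + 1) x) with e | e
    · exact h2.ne e.symm
    · exact h2.asymm e
  by_cases hex : ∃ n, x n = true
  · obtain ⟨n, hn⟩ := hex
    refine ⟨n, ?_⟩
    have : sh n x = cst true := funext fun i => by
      induction i with
      | zero => simpa [cst] using hn
      | succ i ih =>
        have := step _ ih
        rw [sh_apply, show i + 1 + n = i + n + 1 by omega]; exact this
    rw [this]; exact cst_mem _
  · refine ⟨0, ?_⟩
    have : x = cst false := funext fun n => by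
      by_contra h
      exact hex ⟨n, by simpa [cst] using h⟩
    rw [sh_zero, this]; exact cst_mem _

lemma countable_strict (l : List Gen) : (Strict fun c => subs l (narrow c)).Countable := by
  induction l with
  | nil => exact countable_strict_narrow
  | cons a l ih => exact countable_strict_sub (framed_narrow.subs l) a ih

/-! ### Countability for the outer codings -/

lemma seqLt_trans {x y z : ℕ → ℕ} (h : seqLt x y) (h' : seqLt y z) : seqLt x z := by
  obtain ⟨n, hn, h1⟩ := h
  obtain ⟨m, hm, h2⟩ := h'
  rcases lt_trichotomy n m with hnm | rfl | hnm
  · exact ⟨n, fun i hi => (hn i hi).trans (hm i (by omega)), (hm n hnm) ▸ h1⟩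
  · exact ⟨n, fun i hi => (hn i hi).trans (hm i hi), h1.trans h2⟩
  · exact ⟨m, fun i hi => (hn i (by omega)).trans (hm i hi), (hn m hnm) ▸ h2⟩

lemma seqLt_irrefl (x : ℕ → ℕ) : ¬ seqLt x x := fun ⟨_, _, h⟩ => lt_irrefl _ h

lemma seqLt_of_lt_of_le {x y z : ℕ → ℕ} (h : seqLt x y) (h' : seqLe y z) : seqLt x z := by
  rcases h' with rfl | h'
  · exact h
  · exact seqLt_trans h h'

lemma seqLt_of_le_of_lt {x y z : ℕ → ℕ} (h : seqLe x y) (h' : seqLt y z) : seqLt x z := by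
  rcases h with rfl | h
  · exact h'
  · exact seqLt_trans h h'

lemma seqLt_head {x y : ℕ → ℕ} (h : seqLt x y) : x 0 ≤ y 0 := by
  obtain ⟨n, hn, h1⟩ := h
  cases n with
  | zero => exact h1.le
  | succ n => exact (hn 0 (by omega)).le

lemma slt_of_seqLt_E {o : Outer} {u v : ℕ → Bool} (h0 : u 0 = v 0)
    (h : seqLt (o.E u) (o.E v)) : slt false u v := by
  rcases slt_total false u v with h1 | rfl | h1
  · exact h1
  · exact absurd h (seqLt_irrefl _)
  · exact absurd (seqLt_trans h (seqLt_E h0.symm h1)) (seqLt_irrefl _)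

/-- Digit sequences all of whose shifts lie strictly between the codings of the frame `K`. -/
def StrictE (o : Outer) (K : Bool → ℕ → Bool) : Set (ℕ → ℕ) :=
  {y | ∀ n, seqLt (o.E (K true)) (sh n y) ∧ seqLt (sh n y) (o.E (K false))}

lemma StrictE.sh_mem {o : Outer} {K : Bool → ℕ → Bool} {y : ℕ → ℕ} (hy : y ∈ StrictE o K)
    (m : ℕ) : sh m y ∈ StrictE o K := fun n => by
  rw [sh_sh]; exact hy (n + m)

lemma StrictE.of_E {o : Outer} {K : Bool → ℕ → Bool} (hK : Framed K) {x : ℕ → Bool}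
    (hx : o.E x ∈ StrictE o K) : x ∈ Strict K := by
  intro n
  obtain ⟨h1, h2⟩ := hx n
  rw [o.sh_E] at h1 h2
  rcases hc : x n with _ | _
  · exact slt_of_seqLt_E (by rw [sh_apply, zero_add, hc, (hK false).1]) h2
  · exact slt_not_iff.mpr (slt_of_seqLt_E (by rw [sh_apply, zero_add, hc, (hK true).1]) h1)

lemma Framed.E_head {K : Bool → ℕ → Bool} (hK : Framed K) (o : Outer) (c : Bool) :
    o.E (K c) 0 = o.f c (!c) := by
  rw [Outer.E, (hK c).1, zero_add, (hK c).2]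

lemma StrictE.exists_R {k : ℕ} {K : Bool → ℕ → Bool} (hK : Framed K) {y : ℕ → ℕ}
    (hy : y ∈ StrictE (Outer.R k) K) : ∃ x, (Outer.R k).E x = y := by
  refine ⟨scons false fun n => decide (y n = k + 1), funext fun n => ?_⟩
  have h1 := seqLt_head (hy n).1
  have h2 := seqLt_head (hy n).2
  rw [hK.E_head, sh_apply, zero_add] at h1 h2
  simp only [Outer.f, Bool.not_true, Bool.not_false, Bool.toNat_true, Bool.toNat_false] at h1 h2
  simp only [Outer.E, Outer.f, scons_succ]
  by_cases h : y n = k + 1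
  · simp [h]
  · simp [h]; omega

/-- Reading a digit sequence through the coding `Outer.D k`. -/
def unD (k : ℕ) (z : ℕ → ℕ) : ℕ → Bool
  | 0 => decide (z 0 = k)
  | n + 1 => if z n = k + 1 then unD k z n else decide (z n = k + 2)

lemma StrictE.unD_eq {k : ℕ} {K : Bool → ℕ → Bool} (hK : Framed K) {z : ℕ → ℕ}
    (hz : z ∈ StrictE (Outer.D k) K) (h0 : z 0 ≠ k + 1) (n : ℕ) :
    (Outer.D k).E (unD k z) n = z n := by
  have hrange : ∀ n, k ≤ z n ∧ z n ≤ k + 2 := fun n => by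
    have h1 := seqLt_head (hz n).1
    have h2 := seqLt_head (hz n).2
    rw [hK.E_head, sh_apply, zero_add] at h1 h2
    simpa [Outer.f] using And.intro h1 h2
  have hlo : ∀ n, seqLt ((Outer.D k).E s10) (sh n z) := fun n => by
    refine seqLt_of_le_of_lt (seqLe_E (by rw [(hK true).1]; rfl) ?_) (hz n).1
    rw [eq_scons (hK true).1]
    exact sle.scons _ (sle_not_iff.mp (sle_cst true _))
  have hhi : ∀ n, seqLt (sh n z) ((Outer.D k).E s01) := fun n => by
    refine seqLt_of_lt_of_le (hz n).2 (seqLe_E (by rw [(hK false).1]; rfl) ?_)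
    rw [eq_scons (hK false).1]
    exact sle.scons _ (sle_cst false _)
  set x := unD k z with hx
  have hsucc : ∀ n, x (n + 1) = if z n = k + 1 then x n else decide (z n = k + 2) := fun n => rfl
  have hx0 : x 0 = decide (z 0 = k) := rfl
  induction n using Nat.strong_induction_on with
  | _ n ih =>
  -- a mismatch at `n` contradicts one of the bounds
  have key : ∀ c, x n = !c → z n ≠ (Outer.D k).f c (!c) := by
    intro c hxn hzn
    have hn0 : n ≠ 0 := by
      rintro rfl
      rw [hx0, hzn] at hxn
      cases c <;> simp [Outer.f] at hxn
      omega
    have hj : ∃ j, j ≤ n ∧ x j = c := by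
      by_cases h : x 0 = c
      · exact ⟨0, by omega, h⟩
      · refine ⟨1, by omega, ?_⟩
        rw [hx0] at h
        rw [hsucc 0, if_neg h0]
        have := hrange 0
        revert h
        by_cases h3 : z 0 = k
        · simp [h3]
        · have : z 0 = k + 2 := by omega
          simp [this]
    obtain ⟨j, hjn, hj⟩ := hj
    obtain ⟨i, -, hin, hi, hall⟩ := exists_last hjn hj hxn
    have hag : agree (n - i) (sh i z) ((Outer.D k).E (scons c (cst (!c)))) := by
      intro r hr
      rw [sh_apply, ← ih (r + i) (by omega)]
      cases r with
      | zero =>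
        simp only [Outer.E, zero_add, hi, scons_zero, scons_one, cst]
        rw [hall (i + 1) (by omega) (by omega)]
      | succ r =>
        simp only [Outer.E, scons_succ, cst]
        rw [hall (r + 1 + i) (by omega) (by omega), hall (r + 1 + i + 1) (by omega) (by omega)]
    have hv : (Outer.D k).E (scons c (cst (!c))) (n - i) = k + 1 := by
      obtain ⟨r, hr⟩ : ∃ r, n - i = r + 1 := ⟨n - i - 1, by omega⟩
      rw [hr]
      cases c <;> simp [Outer.E, Outer.f, cst]
    have hu : sh i z (n - i) = (Outer.D k).f c (!c) := by
      rw [sh_apply, Nat.sub_add_cancel hin.le, hzn]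
    cases c with
    | false =>
      refine seqLt_irrefl _ (seqLt_trans (hhi i) ⟨n - i, hag.symm, ?_⟩)
      have := hv.trans_lt (show k + 1 < sh i z (n - i) by rw [hu]; simp [Outer.f])
      exact this
    | true =>
      refine seqLt_irrefl _ (seqLt_trans (hlo i) ⟨n - i, hag, ?_⟩)
      have := (show sh i z (n - i) < k + 1 by rw [hu]; simp [Outer.f]).trans_eq hv.symm
      exact this
  have h := hrange n
  have k0 := key false
  have k1 := key true
  simp only [Outer.E, hsucc n]
  have : z n = k ∨ z n = k + 1 ∨ z n = k + 2 := by omega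
  rcases this with h | h | h <;> rw [h] at k0 k1 <;> cases hxn : x n <;>
    simp_all [Outer.f]

lemma countable_strictE (o : Outer) {K : Bool → ℕ → Bool} (hK : Framed K)
    (h : (Strict K).Countable) : (StrictE o K).Countable := by
  cases o with
  | R k =>
    refine (h.image (Outer.R k).E).mono fun y hy => ?_
    obtain ⟨x, rfl⟩ := StrictE.exists_R hK hy
    exact ⟨x, StrictE.of_E hK hy, rfl⟩
  | D k =>
    refine (countable_shift ((h.image (Outer.D k).E).union
      (countable_singleton fun _ => k + 1))).mono fun y hy => ?_
    by_cases hN : ∃ N, y N ≠ k + 1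
    · obtain ⟨N, hN⟩ := hN
      have hm := StrictE.sh_mem hy N
      have he : (Outer.D k).E (unD k (sh N y)) = sh N y :=
        funext fun n => StrictE.unD_eq hK hm (by simpa using hN) n
      exact ⟨N, Or.inl ⟨_, StrictE.of_E hK (by rwa [he]), he⟩⟩
    · push Not at hN
      exact ⟨0, Or.inr (funext hN)⟩

/-- The critical value is at most `a1` as soon as `b1` is at least one. -/
lemma tau_le_a1 {β : ℝ} (hβ : 1 < β) (o : Outer) (l : List Gen)
    (hb : 1 ≤ valSeq β (ev o l s01)) : tau β ≤ valSeq β (ev o l s101) := by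
  refine tau_le (valSeq_nonneg hβ _) fun t ht => dimH_countable ?_
  refine ((countable_strictE o (framed_narrow.subs l) (countable_strict l)).image
    (valSeq β)).mono fun x hx => ?_
  refine ⟨dig β x, fun n => ⟨?_, ?_⟩, ?_⟩
  · exact lt_dig hβ hx (ev_le o l s101) ht n
  · exact dig_lt hβ hx.1 (ev_le o l s01) (ev_tail_le_b1 o l s01) hb n
  · exact (Tbeta_iterate_eq_valSeq_dig hβ hx.1 0).symm

/-! ### Bounds for the critical value -/

lemma ev_append_replicate (o : Outer) (l : List Gen) {a : Gen} {x : ℕ → Bool}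
    (h : sub a.g x = x) (n : ℕ) : ev o (l ++ List.replicate n a) x = ev o l x := by
  rw [ev_append, sub_replicate h]

lemma valSeq_close {β : ℝ} (hβ : 1 < β) (o : Outer) (l : List Gen) {u v : ℕ → Bool}
    (h : agree 2 u v) (hu : u 1 = !u 0) {n : ℕ} (hn : n ≤ l.length) :
    |valSeq β (ev o l u) - valSeq β (ev o l v)| ≤ o.bd / (β - 1) / β ^ n := by
  refine (valSeq_agree hβ (ev_le o l u) (ev_le o l v) (agree_ev o l h hu)).trans ?_
  have h1 : 0 < β - 1 := by linarith
  have h2 : 0 < β := by linarith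
  gcongr
  · exact hβ.le
  · omega

lemma a_close {β : ℝ} (hβ : 1 < β) (o : Outer) (l : List Gen) {n : ℕ} (hn : n ≤ l.length) :
    |valSeq β (ev o l s10) - valSeq β (ev o l s101)| ≤ o.bd / (β - 1) / β ^ n :=
  valSeq_close hβ o l agree_s10_s101 rfl hn

lemma b_close {β : ℝ} (hβ : 1 < β) (o : Outer) (l : List Gen) {n : ℕ} (hn : n ≤ l.length) :
    |valSeq β (ev o l s010) - valSeq β (ev o l s01)| ≤ o.bd / (β - 1) / β ^ n :=
  valSeq_close hβ o l agree_s010_s01 rfl hn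

lemma valSeq_lt_b1 {β : ℝ} (hβ : 1 < β) (o : Outer) (l : List Gen) {x : ℕ → Bool}
    (hx : x 0 = false) (h : slt false x s01) (hb : valSeq β (ev o l s01) ≤ 1) :
    valSeq β (ev o l x) < valSeq β (ev o l s01) :=
  valSeq_strictMono hβ (ev_le o l x) (ev_le o l s01)
    (tails_le_one hβ (ev_le o l s01) (ev_le o l x) hb (ev_tail_le_b1 o l x))
    (seqLt_ev o l hx h) (infNz_b1 o l)

lemma a1_le_tau {β : ℝ} (hβ : 1 < β) (o : Outer) (l : List Gen)
    (hb : valSeq β (ev o l s01) ≤ 1) : valSeq β (ev o l s101) ≤ tau β := by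
  refine le_of_forall_div_pow (C := o.bd / (β - 1)) hβ fun n => ?_
  set l' := l ++ List.replicate n Gen.B
  have e1 : ev o l' s01 = ev o l s01 := ev_append_replicate o l sub_B_s01 n
  have e2 : ev o l' s101 = ev o l s101 := ev_append_replicate o l sub_B_s101 n
  have h1 : valSeq β (ev o (l' ++ [Gen.A]) s01) < 1 := by
    rw [ev_snoc, sub_A_s01]
    refine (valSeq_lt_b1 hβ o l' rfl slt_alt_s01 (by rwa [e1])).trans_le (by rwa [e1])
  have h2 := a0_le_tau hβ o _ h1
  rw [ev_snoc, sub_A_s10] at h2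
  have h3 := abs_le.mp (a_close hβ o l' (n := n) (by simp [l']))
  rw [e2] at h3
  linarith [h3.1]

lemma exists_b1_lt {β : ℝ} (hβ : 1 < β) (o : Outer) (l : List Gen) {r : ℝ}
    (hb : valSeq β (ev o l s010) < r) :
    ∃ n, valSeq β (ev o (l ++ List.replicate n Gen.A) s01) < r := by
  by_contra hcon
  push Not at hcon
  refine absurd (le_of_forall_div_pow (C := o.bd / (β - 1)) hβ fun n => ?_) (not_le.mpr hb)
  have h3 := abs_le.mp (b_close hβ o (l ++ List.replicate n Gen.A) (n := n) (by simp))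
  rw [ev_append_replicate o l sub_A_s010] at h3
  linarith [h3.1, hcon n]

lemma a0_le_tau_of_b0 {β : ℝ} (hβ : 1 < β) (o : Outer) (l : List Gen)
    (hb : valSeq β (ev o l s010) < 1) : valSeq β (ev o l s10) ≤ tau β := by
  obtain ⟨n, hn⟩ := exists_b1_lt hβ o l hb
  have h2 := a0_le_tau hβ o _ hn
  rwa [ev_append_replicate o l sub_A_s10] at h2

lemma one_lt_b1 {β : ℝ} (hβ : 1 < β) (o : Outer) (l : List Gen)
    (hb : valSeq β (ev o l s010) = 1) : 1 < valSeq β (ev o l s01) := by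
  rw [← hb]
  exact valSeq_strictMono hβ (ev_le o l _) (ev_le o l s01)
    (tails_le_one hβ (ev_le o l s010) (ev_le o l _) hb.le (b0_tail_le_b0 o l))
    (seqLt_ev o l rfl slt_s010_s01) (infNz_b1 o l)

lemma exists_a1_lt {β : ℝ} (hβ : 1 < β) (o : Outer) (l : List Gen) {r : ℝ}
    (hr : valSeq β (ev o l s10) < r) :
    ∃ n, valSeq β (ev o (l ++ List.replicate n Gen.A) s101) < r := by
  by_contra hcon
  push Not at hcon
  refine absurd (le_of_forall_div_pow (C := o.bd / (β - 1)) hβ fun n => ?_) (not_le.mpr hr)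
  have h3 := abs_le.mp (a_close hβ o (l ++ List.replicate n Gen.A) (n := n) (by simp))
  rw [ev_append_replicate o l sub_A_s10] at h3
  linarith [h3.1, hcon n]

lemma exists_lt_a0 {β : ℝ} (hβ : 1 < β) (o : Outer) (l : List Gen) {r : ℝ}
    (hr : r < valSeq β (ev o l s101)) :
    ∃ n, r < valSeq β (ev o (l ++ List.replicate n Gen.B) s10) := by
  by_contra hcon
  push Not at hcon
  refine absurd (le_of_forall_div_pow (C := o.bd / (β - 1)) hβ fun n => ?_) (not_le.mpr hr)
  have h3 := abs_le.mp (a_close hβ o (l ++ List.replicate n Gen.B) (n := n) (by simp))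
  rw [ev_append_replicate o l sub_B_s101] at h3
  linarith [h3.1, hcon n]

lemma tau_le_a0 {β : ℝ} (hβ : 1 < β) (o : Outer) (l : List Gen)
    (hb : 1 ≤ valSeq β (ev o l s010)) : tau β ≤ valSeq β (ev o l s10) := by
  refine le_of_forall_gt_imp_ge_of_dense fun r hr => ?_
  obtain ⟨n, hn⟩ := exists_a1_lt hβ o l hr
  obtain ⟨β', h1, h2⟩ := exists_base hβ (ev_le o l s010) hb
  refine (tau_le_a1 hβ o _ ?_).trans hn.le
  refine (one_lt_b1 (hβ.trans_le h1) o _ ?_).le.trans (valSeq_anti hβ h1 (ev_le o _ _))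
  rw [ev_append_replicate o l sub_A_s010, h2]

/-! ### One-sided limits -/

lemma exists_nz_of_valSeq {β : ℝ} {c : ℕ → ℕ} (h : valSeq β c = 1) : ∃ i, 1 ≤ c i := by
  by_contra hcon
  push Not at hcon
  have : valSeq β c = 0 := by
    rw [valSeq]
    convert tsum_zero with i
    have := hcon i
    simp [show c i = 0 by omega]
  linarith

lemma eventually_valSeq_lt {β r : ℝ} (hβ : 1 < β) {o : Outer} {l : List Gen} {x : ℕ → Bool}
    (h : valSeq β (ev o l x) < r) : ∀ᶠ b in 𝓝 β, valSeq b (ev o l x) < r :=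
  (valSeq_continuousAt hβ (ev_le o l x)).eventually_lt continuousAt_const h

lemma eventually_lt_valSeq {β r : ℝ} (hβ : 1 < β) {o : Outer} {l : List Gen} {x : ℕ → Bool}
    (h : r < valSeq β (ev o l x)) : ∀ᶠ b in 𝓝 β, r < valSeq b (ev o l x) :=
  continuousAt_const.eventually_lt (valSeq_continuousAt hβ (ev_le o l x)) h

lemma eventually_one_lt {β : ℝ} (hβ : 1 < β) : ∀ᶠ b in 𝓝 β, 1 < b := Ioi_mem_nhds hβ

lemma tendsto_tau_right {β : ℝ} (hβ : 1 < β) (o : Outer) (l : List Gen)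
    (hb : valSeq β (ev o l s010) = 1) :
    Tendsto tau (𝓝[>] β) (𝓝 (valSeq β (ev o l s10))) := by
  refine tendsto_order.mpr ⟨fun r hr => ?_, fun r hr => ?_⟩
  · filter_upwards [nhdsWithin_le_nhds (eventually_lt_valSeq hβ hr), self_mem_nhdsWithin]
      with b h1 h2
    refine h1.trans_le (a0_le_tau_of_b0 (hβ.trans h2) o l ?_)
    rw [← hb]
    exact valSeq_strictAnti hβ h2 (ev_le o l _) (exists_nz_of_valSeq hb)
  · obtain ⟨n, hn⟩ := exists_a1_lt hβ o l hr
    have h1 : 1 < valSeq β (ev o (l ++ List.replicate n Gen.A) s01) :=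
      one_lt_b1 hβ o _ (by rwa [ev_append_replicate o l sub_A_s010])
    filter_upwards [nhdsWithin_le_nhds (eventually_lt_valSeq hβ h1),
      nhdsWithin_le_nhds (eventually_valSeq_lt hβ hn), self_mem_nhdsWithin] with b h1 h2 h3
    exact (tau_le_a1 (hβ.trans h3) o _ h1.le).trans_lt h2

lemma tendsto_tau_left {β : ℝ} (hβ : 1 < β) (o : Outer) (l : List Gen)
    (hb : valSeq β (ev o l s01) = 1) :
    Tendsto tau (𝓝[<] β) (𝓝 (valSeq β (ev o l s101))) := by
  refine tendsto_order.mpr ⟨fun r hr => ?_, fun r hr => ?_⟩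
  · obtain ⟨n, hn⟩ := exists_lt_a0 hβ o l hr
    have e : ev o (l ++ List.replicate n Gen.B) s01 = ev o l s01 :=
      ev_append_replicate o l sub_B_s01 n
    have h1 : valSeq β (ev o (l ++ List.replicate n Gen.B) s010) < 1 := by
      have := valSeq_lt_b1 hβ o (l ++ List.replicate n Gen.B) rfl slt_s010_s01
        (by rw [e, hb])
      rwa [e, hb] at this
    filter_upwards [nhdsWithin_le_nhds (eventually_valSeq_lt hβ h1),
      nhdsWithin_le_nhds (eventually_lt_valSeq hβ hn),
      nhdsWithin_le_nhds (eventually_one_lt hβ)] with b h1 h2 h3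
    exact h2.trans_le (a0_le_tau_of_b0 h3 o _ h1)
  · filter_upwards [nhdsWithin_le_nhds (eventually_valSeq_lt hβ hr), self_mem_nhdsWithin,
      nhdsWithin_le_nhds (eventually_one_lt hβ)] with b h1 h2 h3
    refine (tau_le_a1 h3 o l ?_).trans_lt h1
    rw [← hb]
    exact valSeq_anti h3 (le_of_lt h2) (ev_le o l _)

lemma continuousAt_tau_of_gap {β : ℝ} (hβ : 1 < β) {o o' : Outer} {l l' : List Gen}
    (ha : ev o l s101 = ev o' l' s10) (h1 : valSeq β (ev o l s01) ≤ 1)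
    (h2 : 1 ≤ valSeq β (ev o' l' s010)) : ContinuousAt tau β := by
  have hval : tau β = valSeq β (ev o l s101) :=
    le_antisymm (by rw [ha]; exact tau_le_a0 hβ o' l' h2) (a1_le_tau hβ o l h1)
  have hlim : Tendsto (fun b => valSeq b (ev o l s101)) (𝓝 β) (𝓝 (valSeq β (ev o l s101))) :=
    valSeq_continuousAt hβ (ev_le o l _)
  refine continuousAt_iff_continuous_left'_right'.mpr ⟨?_, ?_⟩
  · rw [ContinuousWithinAt, hval]
    rcases h1.lt_or_eq with h1 | h1
    · refine tendsto_of_tendsto_of_tendsto_of_le_of_le' (hlim.mono_left nhdsWithin_le_nhds)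
        (hlim.mono_left nhdsWithin_le_nhds) ?_ ?_
      · filter_upwards [nhdsWithin_le_nhds (eventually_valSeq_lt hβ h1),
          nhdsWithin_le_nhds (eventually_one_lt hβ)] with b h3 h4
        exact a1_le_tau h4 o l h3.le
      · filter_upwards [self_mem_nhdsWithin, nhdsWithin_le_nhds (eventually_one_lt hβ)]
          with b h3 h4
        rw [ha]
        exact tau_le_a0 h4 o' l' (h2.trans (valSeq_anti h4 (le_of_lt h3) (ev_le o' l' _)))
    · exact tendsto_tau_left hβ o l h1
  · rw [ContinuousWithinAt, hval]
    rcases h2.lt_or_eq with h2 | h2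
    · refine tendsto_of_tendsto_of_tendsto_of_le_of_le' (hlim.mono_left nhdsWithin_le_nhds)
        (hlim.mono_left nhdsWithin_le_nhds) ?_ ?_
      · filter_upwards [self_mem_nhdsWithin] with b h3
        exact a1_le_tau (hβ.trans h3) o l
          ((valSeq_anti hβ (le_of_lt h3) (ev_le o l _)).trans h1)
      · filter_upwards [nhdsWithin_le_nhds (eventually_lt_valSeq hβ h2),
          nhdsWithin_le_nhds (eventually_one_lt hβ)] with b h3 h4
        rw [ha]
        exact tau_le_a0 h4 o' l' h3.le
    · rw [ha]
      exact tendsto_tau_right hβ _ _ h2.symm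

/-! ### Renormalization of the base -/

/-- The base lies strictly inside the interval coded by `l`. -/
def Interior (β : ℝ) (o : Outer) (l : List Gen) : Prop :=
  valSeq β (ev o l s010) < 1 ∧ 1 < valSeq β (ev o l s01)

lemma continuousAt_tau_of_interior {β : ℝ} (hβ : 1 < β) (o : Outer)
    (h : ∀ n, ∃ l, n ≤ l.length ∧ Interior β o l) : ContinuousAt tau β := by
  refine tendsto_order.mpr ⟨fun r hr => ?_, fun r hr => ?_⟩
  · obtain ⟨l, hl, hr'⟩ : ∃ l, Interior β o l ∧ r < valSeq β (ev o l s10) := by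
      by_contra hcon
      push Not at hcon
      refine absurd (le_of_forall_div_pow (C := o.bd / (β - 1)) hβ fun n => ?_) (not_le.mpr hr)
      obtain ⟨l, hn, hl⟩ := h n
      have h3 := abs_le.mp (a_close hβ o l hn)
      linarith [h3.1, hcon l hl, tau_le_a1 hβ o l hl.2.le]
    filter_upwards [eventually_lt_valSeq hβ hr', eventually_valSeq_lt hβ hl.1,
      eventually_one_lt hβ] with b h1 h2 h3
    exact h1.trans_le (a0_le_tau_of_b0 h3 o l h2)
  · obtain ⟨l, hl, hr'⟩ : ∃ l, Interior β o l ∧ valSeq β (ev o l s101) < r := by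
      by_contra hcon
      push Not at hcon
      refine absurd (le_of_forall_div_pow (C := o.bd / (β - 1)) hβ fun n => ?_) (not_le.mpr hr)
      obtain ⟨l, hn, hl⟩ := h n
      have h3 := abs_le.mp (a_close hβ o l hn)
      linarith [h3.1, hcon l hl, a0_le_tau_of_b0 hβ o l hl.1]
    filter_upwards [eventually_valSeq_lt hβ hr', eventually_lt_valSeq hβ hl.2,
      eventually_one_lt hβ] with b h1 h2 h3
    exact (tau_le_a1 h3 o l h2.le).trans_lt h1

lemma Interior.step {β : ℝ} (hβ : 1 < β) {o : Outer} {l : List Gen} (h : Interior β o l) :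
    ContinuousAt tau β ∨ (∃ a, Interior β o (l ++ [a])) ∨
      valSeq β (ev o (l ++ [Gen.M]) s01) = 1 := by
  rcases lt_or_ge 1 (valSeq β (ev o (l ++ [Gen.A]) s01)) with hA | hA
  · refine Or.inr (Or.inl ⟨Gen.A, ?_, hA⟩)
    rw [ev_snoc, sub_A_s010]; exact h.1
  rcases lt_or_ge (valSeq β (ev o (l ++ [Gen.M]) s010)) 1 with hM | hM
  · rcases lt_trichotomy 1 (valSeq β (ev o (l ++ [Gen.M]) s01)) with hM' | hM' | hM'
    · exact Or.inr (Or.inl ⟨Gen.M, hM, hM'⟩)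
    · exact Or.inr (Or.inr hM'.symm)
    · refine Or.inr (Or.inl ⟨Gen.B, ?_, ?_⟩)
      · rw [ev_snoc, ← sub_M_s01, ← ev_snoc]; exact hM'
      · rw [ev_snoc, sub_B_s01]; exact h.2
  · exact Or.inl (continuousAt_tau_of_gap hβ (by rw [ev_snoc, ev_snoc, sub_A_s101]) hA hM)

/-- The nodes carrying a jump of the critical value. -/
def Full (o : Outer) (l : List Gen) : Prop :=
  (∃ k, o = Outer.D k ∧ l = []) ∨ ∃ l', l = l' ++ [Gen.M]

lemma E_R_s01 (k : ℕ) : (Outer.R k).E s01 = fun _ => k + 1 := by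
  funext i; simp [Outer.E, Outer.f, s01, cst]

lemma E_R_s101 (k : ℕ) : (Outer.R k).E s101 = (Outer.D k).E s10 := by
  funext i
  rcases i with _ | _ | i <;> simp [Outer.E, Outer.f, s101, s10, s01, cst]

lemma E_D_s01 (k : ℕ) : (Outer.D k).E s01 = (Outer.R (k + 1)).E s010 := by
  funext i
  rcases i with _ | _ | i <;> simp [Outer.E, Outer.f, s010, s10, s01, cst]

lemma E_D_cst (k : ℕ) : (Outer.D k).E (cst true) = (Outer.R (k + 1)).E s10 := by
  funext i
  rcases i with _ | _ | i <;> simp [Outer.E, Outer.f, s10, cst]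

lemma continuousAt_tau {β : ℝ} (hβ : 1 < β)
    (h : ∀ o l, Full o l → valSeq β (ev o l s01) ≠ 1) : ContinuousAt tau β := by
  by_contra hcon
  have hroot : ∃ o, Interior β o [] := by
    have hex : ∃ k : ℕ, 1 < valSeq β ((Outer.R k).E s01) := by
      obtain ⟨k, hk⟩ := exists_nat_gt (β - 1)
      refine ⟨k, ?_⟩
      rw [E_R_s01, valSeq_const hβ, one_lt_div (by linarith)]
      push_cast; linarith
    classical
    have hk := Nat.find_spec hex
    have hmin := fun m => Nat.find_min hex (m := m)
    generalize Nat.find hex = k at hk hmin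
    cases k with
    | zero =>
      refine ⟨Outer.R 0, ?_, hk⟩
      show valSeq β ((Outer.R 0).E s010) < 1
      have e : sh 1 ((Outer.R 0).E s010) = fun _ => 0 := by
        funext i; simp [Outer.E, Outer.f, s010, s10, cst]
      rw [valSeq_step (c := (Outer.R 0).E s010) hβ (ev_le (Outer.R 0) [] s010), e, valSeq_const hβ,
        div_lt_one (by linarith)]
      simpa [Outer.E, Outer.f, s010, s10] using hβ
    | succ j =>
      have hj : valSeq β ((Outer.R j).E s01) ≤ 1 := not_lt.mp (hmin j (by omega))
      rcases lt_or_ge (valSeq β ((Outer.D j).E s010)) 1 with hD | hD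
      · rcases lt_trichotomy 1 (valSeq β ((Outer.D j).E s01)) with hD' | hD' | hD'
        · exact ⟨Outer.D j, hD, hD'⟩
        · exact absurd hD'.symm (h (Outer.D j) [] (Or.inl ⟨j, rfl, rfl⟩))
        · refine ⟨Outer.R (j + 1), ?_, hk⟩
          show valSeq β ((Outer.R (j + 1)).E s010) < 1
          rw [← E_D_s01]; exact hD'
      · exact absurd (continuousAt_tau_of_gap hβ (o := Outer.R j) (o' := Outer.D j)
          (l := []) (l' := []) (E_R_s101 j) hj hD) hcon
  obtain ⟨o, ho⟩ := hroot
  refine hcon (continuousAt_tau_of_interior hβ o fun n => ?_)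
  suffices ∃ l, l.length = n ∧ Interior β o l by
    obtain ⟨l, h1, h2⟩ := this; exact ⟨l, h1.ge, h2⟩
  induction n with
  | zero => exact ⟨[], rfl, ho⟩
  | succ n ih =>
    obtain ⟨l, h1, h2⟩ := ih
    rcases h2.step hβ with h3 | ⟨a, h3⟩ | h3
    · exact absurd h3 hcon
    · exact ⟨l ++ [a], by simp [h1], h3⟩
    · exact absurd h3 (h o _ (Or.inr ⟨l, rfl⟩))

lemma tau_eq_of_full {β : ℝ} (hβ : 1 < β) {o : Outer} {l : List Gen}
    (hb : valSeq β (ev o l s01) = 1) : tau β = valSeq β (ev o l s101) :=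
  le_antisymm (tau_le_a1 hβ o l hb.ge) (a1_le_tau hβ o l hb.le)

lemma tendsto_tau_of_full {β : ℝ} (hβ : 1 < β) {o : Outer} {l : List Gen} (h : Full o l)
    (hb : valSeq β (ev o l s01) = 1) :
    Tendsto tau (𝓝[>] β) (𝓝 (valSeq β (ev o l (cst true)))) := by
  rcases h with ⟨k, rfl, rfl⟩ | ⟨l', rfl⟩
  · have h1 := tendsto_tau_right hβ (Outer.R (k + 1)) []
    simp only [ev, subs_nil] at h1 hb ⊢
    rw [← E_D_s01, ← E_D_cst] at h1
    exact h1 hb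
  · have h1 := tendsto_tau_right hβ o (l' ++ [Gen.B])
    rw [ev_snoc, ev_snoc, ← sub_M_s01, sub_B_s10, ← ev_snoc, ← ev_snoc] at h1
    exact h1 hb

/-! ### Substitutions and codings of words -/

/-- The sequence `w` followed by `x`. -/
def app {α : Type*} (w : List α) (x : ℕ → α) : ℕ → α := w.foldr scons x

@[simp] lemma app_nil {α : Type*} (x : ℕ → α) : app [] x = x := rfl
@[simp] lemma app_cons {α : Type*} (a : α) (w : List α) (x : ℕ → α) :
    app (a :: w) x = scons a (app w x) := rfl

lemma app_append {α : Type*} (u v : List α) (x : ℕ → α) : app (u ++ v) x = app u (app v x) := by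
  simp [app]

/-- The substitution with flags `g`, on words. -/
def wsub (g : Bool → Bool) (w : List Bool) : List Bool :=
  w.flatMap fun c => if g c then [c, !c] else [c]

/-- Composition of elementary substitutions, on words. -/
def wsubs (l : List Gen) (w : List Bool) : List Bool := l.foldr (fun a y => wsub a.g y) w

@[simp] lemma wsubs_nil (w : List Bool) : wsubs [] w = w := rfl
@[simp] lemma wsubs_cons (a : Gen) (l : List Gen) (w : List Bool) :
    wsubs (a :: l) w = wsub a.g (wsubs l w) := rfl

lemma wsubs_wsubs (l l' : List Gen) (w : List Bool) :
    wsubs (l ++ l') w = wsubs l (wsubs l' w) := by simp [wsubs]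

lemma wsub_append (g : Bool → Bool) (u v : List Bool) : wsub g (u ++ v) = wsub g u ++ wsub g v := by
  simp [wsub]

lemma wsubs_append (l : List Gen) (u v : List Bool) :
    wsubs l (u ++ v) = wsubs l u ++ wsubs l v := by
  induction l with
  | nil => rfl
  | cons a l ih => rw [wsubs_cons, ih, wsub_append]; rfl

lemma wsub_cons (g : Bool → Bool) (c : Bool) (w : List Bool) :
    wsub g (c :: w) = c :: ((if g c then [!c] else []) ++ wsub g w) := by
  simp only [wsub, List.flatMap_cons]; split <;> simp

lemma exists_wsubs_cons (l : List Gen) (c : Bool) (w : List Bool) :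
    ∃ t, wsubs l (c :: w) = c :: t := by
  induction l with
  | nil => exact ⟨w, rfl⟩
  | cons a l ih =>
    obtain ⟨t, ht⟩ := ih
    exact ⟨_, by rw [wsubs_cons, ht, wsub_cons]⟩

lemma sub_app (g : Bool → Bool) (w : List Bool) (x : ℕ → Bool) :
    sub g (app w x) = app (wsub g w) (sub g x) := by
  induction w with
  | nil => rfl
  | cons c w ih =>
    rw [app_cons, wsub_cons]
    rcases hg : g c with _ | _
    · rw [sub_scons_false hg, ih]; simp
    · rw [sub_scons_true hg, ih]; simp

lemma subs_app (l : List Gen) (w : List Bool) (x : ℕ → Bool) :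
    subs l (app w x) = app (wsubs l w) (subs l x) := by
  induction l with
  | nil => rfl
  | cons a l ih => rw [subs_cons, ih, sub_app]; rfl

/-- The outer coding of a word: one digit for each pair of consecutive letters. -/
def ew (o : Outer) : List Bool → List ℕ
  | [] => []
  | [_] => []
  | a :: b :: w => o.f a b :: ew o (b :: w)

lemma ew_append (o : Outer) (u : List Bool) (a : Bool) (v : List Bool) :
    ew o (u ++ a :: v) = ew o (u ++ [a]) ++ ew o (a :: v) := by
  induction u with
  | nil => simp [ew]
  | cons b u ih =>
    cases u with
    | nil => simp [ew]
    | cons c u => simpa [ew] using ih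

lemma E_scons (o : Outer) (a : Bool) (y : ℕ → Bool) :
    o.E (scons a y) = scons (o.f a (y 0)) (o.E y) := by
  funext i; cases i <;> rfl

lemma E_app (o : Outer) (w : List Bool) (x : ℕ → Bool) :
    o.E (app w x) = app (ew o (w ++ [x 0])) (o.E x) := by
  induction w with
  | nil => rfl
  | cons a w ih =>
    rw [app_cons, E_scons, ih]
    cases w with
    | nil => rfl
    | cons b w => rfl

lemma ev_app (o : Outer) (l : List Gen) (w : List Bool) (x : ℕ → Bool) :
    ev o l (app w x) = app (ew o (wsubs l w ++ [x 0])) (ev o l x) := by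
  rw [ev, subs_app, E_app, subs_apply_zero]; rfl

lemma wordSeq_eq_app (w : List ℕ) (c : ℕ → ℕ) : wordSeq w c = app w c := by
  induction w with
  | nil => funext i; simp [wordSeq]
  | cons a w ih =>
    rw [app_cons, ← ih]
    funext i
    cases i with
    | zero => simp [wordSeq]
    | succ i => simp [wordSeq]

lemma eq_perSeq {w : List ℕ} (hw : w ≠ []) {y : ℕ → ℕ} (h : y = app w y) : y = perSeq w := by
  rw [← wordSeq_eq_app] at h
  have hpos : 0 < w.length := List.length_pos_iff.mpr hw
  funext i
  induction i using Nat.strong_induction_on with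
  | _ i ih =>
    rw [h, wordSeq]
    split
    · rw [perSeq, Nat.mod_eq_of_lt ‹_›]
    · rw [ih _ (by omega), perSeq, perSeq, ← Nat.mod_eq_sub_mod (by omega)]

/-! ### The words attached to a node -/

/-- The coding of the letter `p` followed by the letter `c`. -/
def block (o : Outer) (l : List Gen) (p c : Bool) : List ℕ := ew o (wsubs l [p] ++ [c])

lemma exists_block (o : Outer) (l : List Gen) (p : Bool) :
    ∃ t q, ∀ c, block o l p c = t ++ [o.f q c] := by
  obtain ⟨t, ht⟩ := exists_wsubs_cons l p []
  obtain ⟨u, q, hu⟩ : ∃ u q, wsubs l [p] = u ++ [q] := by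
    rcases List.eq_nil_or_concat (wsubs l [p]) with h | ⟨u, q, h⟩
    · rw [h] at ht; cases ht
    · exact ⟨u, q, by simpa using h⟩
  refine ⟨ew o (u ++ [q]), q, fun c => ?_⟩
  rw [block, hu, List.append_assoc, List.singleton_append, ew_append]
  rfl

lemma wplus_block (o : Outer) (l : List Gen) (p : Bool) :
    wplus (block o l p false) = block o l p true := by
  obtain ⟨t, q, h⟩ := exists_block o l p
  rw [h, h, o.f_false]; simp [wplus]

lemma wminus_block (o : Outer) (l : List Gen) (p : Bool) :
    wminus (block o l p true) = block o l p false := by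
  obtain ⟨t, q, h⟩ := exists_block o l p
  rw [h, h, o.f_false]; simp [wminus]

lemma block_ne_nil (o : Outer) (l : List Gen) (p c : Bool) : block o l p c ≠ [] := by
  obtain ⟨t, q, h⟩ := exists_block o l p
  rw [h]; simp

lemma ev_scons (o : Outer) (l : List Gen) (p : Bool) (x : ℕ → Bool) :
    ev o l (scons p x) = app (block o l p (x 0)) (ev o l x) := ev_app o l [p] x

lemma perSeq_block (o : Outer) (l : List Gen) (c : Bool) :
    perSeq (block o l c c) = ev o l (cst c) := by
  refine (eq_perSeq (block_ne_nil o l c c) ?_).symm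
  conv_lhs => rw [cst_eq, ev_scons]
  rfl

lemma wordSeq_block (o : Outer) (l : List Gen) :
    wordSeq (block o l false true) (perSeq (block o l true true)) = ev o l s01 := by
  rw [wordSeq_eq_app, perSeq_block, s01, ev_scons]; rfl

lemma valWord_concat (β : ℝ) (w : List ℕ) (a : ℕ) :
    valWord β (w ++ [a]) = valWord β w + a / β ^ (w.length + 1) := by
  rw [valWord, List.length_append, List.length_singleton, Finset.sum_range_succ, valWord]
  congr 1
  · refine Finset.sum_congr rfl fun i hi => ?_
    rw [List.getD_append _ _ _ _ (Finset.mem_range.mp hi)]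
  · simp

lemma valSeq_app {β : ℝ} (hβ : 1 < β) {D : ℕ} {w : List ℕ} {y : ℕ → ℕ}
    (hy : ∀ i, app w y i ≤ D) : valSeq β (app w y) = valWord β w + valSeq β y / β ^ w.length := by
  induction w using List.reverseRecOn generalizing y with
  | nil => simp [valWord]
  | append_singleton w a ih =>
    rw [app_append] at hy ⊢
    rw [ih hy, valWord_concat]
    have hb : ∀ i, scons a y i ≤ D := by
      intro i
      have := hy (i + w.length)
      rw [← wordSeq_eq_app] at this
      simpa [wordSeq] using this
    have h0 : (0 : ℝ) < β := by linarith
    rw [app_cons, app_nil, valSeq_step hβ hb]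
    simp only [scons_zero, sh_one_scons, List.length_append, List.length_singleton]
    field_simp
    ring

lemma valSeq_a1 {β : ℝ} (hβ : 1 < β) {o : Outer} {l : List Gen}
    (hb : valSeq β (ev o l s01) = 1) :
    valSeq β (ev o l s101) = valWord β (block o l true true) := by
  have e : ev o l s101 = app (block o l true false) (ev o l s01) := ev_scons o l true s01
  have hbd := ev_le o l s101
  rw [e] at hbd ⊢
  obtain ⟨t, q, h⟩ := exists_block o l true
  rw [valSeq_app hβ hbd, hb, h, h, valWord_concat, valWord_concat, o.f_false]
  simp only [List.length_append, List.length_singleton]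
  push_cast
  ring

lemma valWord_lt {β : ℝ} (hβ : 1 < β) (o : Outer) (l : List Gen) :
    valWord β (block o l true true) < valSeq β (ev o l (cst true)) := by
  have e : ev o l (cst true) = app (block o l true true) (ev o l (cst true)) := by
    conv_lhs => rw [cst_eq, ev_scons]
    rfl
  have hbd := ev_le o l (cst true)
  rw [e] at hbd ⊢
  rw [valSeq_app hβ hbd]
  have hinf : InfTrue (cst true) := fun n => ⟨0, rfl⟩
  have hpos := valSeq_pos hβ (ev_le o l (cst true)) (by
    obtain ⟨i, hi⟩ := hinf.infNz_ev o l 0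
    exact ⟨i, hi⟩)
  have : 0 < valSeq β (ev o l (cst true)) / β ^ (block o l true true).length := by
    have h0 : 0 < β := by linarith
    positivity
  linarith

/-! ### The largest cyclic permutation -/

lemma foldl_max_eq {α : Type*} [LinearOrder α] {m : α} (L : List α) (a : α) (ha : a ≤ m)
    (hL : ∀ x ∈ L, x ≤ m) (hm : m ∈ L ∨ a = m) : L.foldl max a = m := by
  induction L generalizing a with
  | nil => simpa using hm
  | cons b L ih =>
    have hb := hL b (by simp)
    refine ih (max a b) (max_le ha hb) (fun x hx => hL x (by simp [hx])) ?_
    rcases hm with hm | rfl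
    · rcases List.mem_cons.mp hm with rfl | hm
      · exact Or.inr (max_eq_right ha)
      · exact Or.inl hm
    · exact Or.inr (max_eq_left hb)

lemma word_le_of_seqLe {u v : List ℕ} (hlen : u.length = v.length) {x y : ℕ → ℕ}
    (hx : ∀ i (h : i < u.length), u[i] = x i) (hy : ∀ i (h : i < v.length), v[i] = y i)
    (h : seqLe x y) : u ≤ v := by
  by_contra hlt
  rcases List.lt_iff_exists.mp (not_le.mp hlt) with ⟨-, h1⟩ | ⟨i, h1, h2, h3, h4⟩
  · omega
  · have : seqLt y x := ⟨i, fun j hj => by rw [← hx j (by omega), ← hy j (by omega)]; exact h3 j hj,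
      by rwa [← hx i h2, ← hy i h1]⟩
    exact seqLt_irrefl _ (seqLt_of_lt_of_le this h)

lemma nil_le_word (w : List ℕ) : ([] : List ℕ) ≤ w := not_lt.mp (List.not_lt_nil w)

lemma sh_alt (n : ℕ) (c : Bool) : ∃ d, sh n (alt c) = alt d := by
  induction n with
  | zero => exact ⟨c, rfl⟩
  | succ n ih =>
    obtain ⟨d, hd⟩ := ih
    exact ⟨!d, by rw [add_comm, ← sh_sh, hd, alt_eq, sh_one_scons]⟩

lemma sh_perSeq_le (o : Outer) (l : List Gen) (n : ℕ) :
    seqLe (sh n (perSeq (block o (l ++ [Gen.M]) true true)))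
      (perSeq (block o (l ++ [Gen.M]) false false)) := by
  rw [perSeq_block, perSeq_block, ev_snoc, ev_snoc, sub_cst_true rfl, sub_cst_true rfl]
  refine ev_tails_le o l (K := alt) (fun c => ⟨rfl, rfl⟩) (fun n c => ?_) n
  obtain ⟨d, hd⟩ := sh_alt n true
  rw [hd, alt_eq c, sh_one_scons]
  by_cases h : d = !c
  · rw [h]; exact sle.refl _ _
  · have : d = c := by revert h; cases d <;> cases c <;> simp
    rw [this]
    exact Or.inr (slt_of_head rfl rfl)

lemma block_M (o : Outer) (l : List Gen) (p : Bool) :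
    block o (l ++ [Gen.M]) p p = block o l p (!p) ++ block o l (!p) p := by
  obtain ⟨t, ht⟩ := exists_wsubs_cons l (!p) []
  have e : wsubs [Gen.M] [p] = [p] ++ [!p] := by simp [wsub, Gen.g]
  rw [block, wsubs_wsubs, e, wsubs_append, block, block, ht, List.append_assoc,
    List.cons_append, ew_append]

lemma maxCyc_block {o : Outer} {l : List Gen} (h : Full o l) :
    maxCyc (block o l true true) = block o l false false := by
  rcases h with ⟨k, rfl, rfl⟩ | ⟨l, rfl⟩
  · simp [block, ew, maxCyc, Outer.f, nil_le_word]
  · have hS := block_M o l true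
    have hL := block_M o l false
    rw [Bool.not_true] at hS
    rw [Bool.not_false] at hL
    have hle := sh_perSeq_le o l
    set S := block o (l ++ [Gen.M]) true true
    set L := block o (l ++ [Gen.M]) false false
    have hne : block o l false true ≠ [] := block_ne_nil o l _ _
    have hlen : S.length = L.length := by rw [hS, hL]; simp [add_comm]
    have hper : ∀ (w : List ℕ) i (h : i < w.length), w[i] = perSeq w i := fun w i h => by
      rw [perSeq, Nat.mod_eq_of_lt h, List.getD_eq_getElem]
    refine foldl_max_eq _ _ (nil_le_word L) (fun x hx => ?_) (Or.inl ?_)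
    · obtain ⟨i, hi, rfl⟩ := List.mem_map.mp hx
      refine word_le_of_seqLe (by rw [List.length_rotate, hlen]) (fun j hj => ?_) (hper L) (hle i)
      rw [List.length_rotate] at hj
      rw [List.getElem_rotate, sh_apply, perSeq, List.getD_eq_getElem]
    · refine List.mem_map.mpr ⟨(block o l true false).length, ?_, ?_⟩
      · rw [List.mem_range, hS, List.length_append]
        have := List.length_pos_iff.mpr hne
        omega
      · rw [hS, hL, List.rotate_append_length_eq]

/-! ### The substitution `subst` on the words of a node -/

lemma phiBlock_block {o : Outer} {l : List Gen} (h : Full o l) (p c : Bool) :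
    phiBlock (block o l true true) p.toNat c.toNat = block o l p c := by
  cases p <;> cases c <;> simp [phiBlock, maxCyc_block h, wplus_block, wminus_block]

lemma phiAux_block {o : Outer} {l : List Gen} (h : Full o l) (w : List Bool) (p c : Bool) :
    phiAux (block o l true true) p.toNat ((w ++ [c]).map Bool.toNat) =
      ew o (wsubs l (p :: w) ++ [c]) := by
  induction w generalizing p with
  | nil =>
    rw [List.nil_append, List.map_singleton, phiAux, phiAux, List.append_nil,
      phiBlock_block h, block]
  | cons d w ih =>
    obtain ⟨t, ht⟩ := exists_wsubs_cons l d w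
    have e : wsubs l (p :: d :: w) = wsubs l [p] ++ d :: t := by
      rw [← ht, ← wsubs_append]; rfl
    rw [List.cons_append, List.map_cons, phiAux, phiBlock_block h, ih, e, ht, List.append_assoc,
      List.cons_append, ew_append, block]

/-- `ρ` is the binary Farey word produced by the substitutions `l`. -/
def IsFarey (l : List Gen) (ρ : List Bool) : Prop :=
  true :: ρ = wsubs l [true, false] ++ [true]

lemma exists_isFarey (l : List Gen) : ∃ ρ, IsFarey l ρ := by
  obtain ⟨t, ht⟩ := exists_wsubs_cons l true [false]
  exact ⟨t ++ [true], by rw [IsFarey, ht]; rfl⟩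

lemma exists_wsubs_cons_cons (l : List Gen) :
    ∃ t, wsubs l [true, false] = true :: false :: t := by
  induction l with
  | nil => exact ⟨[], rfl⟩
  | cons a l ih =>
    obtain ⟨t, ht⟩ := ih
    rw [wsubs_cons, ht, wsub_cons, wsub_cons]
    cases a <;> exact ⟨_, rfl⟩

lemma IsFarey.exists_eq {l : List Gen} {ρ : List Bool} (h : IsFarey l ρ) :
    ∃ t, ρ = false :: t ++ [true] ∧ wsubs l [true, false] = true :: false :: t := by
  obtain ⟨t, ht⟩ := exists_wsubs_cons_cons l
  refine ⟨t, ?_, ht⟩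
  rw [IsFarey, ht] at h
  simpa using h

lemma wsubs_M (l : List Gen) : wsubs (l ++ [Gen.M]) [true] = wsubs l [true, false] := by
  rw [wsubs_wsubs]; rfl

lemma subst_block {o : Outer} {l l' : List Gen} (h : Full o l) {ρ : List Bool}
    (hρ : IsFarey l' ρ) :
    subst (block o l true true) (ρ.map Bool.toNat) =
      block o (l ++ (l' ++ [Gen.M])) true true := by
  obtain ⟨t, rfl, ht⟩ := hρ.exists_eq
  have e := phiAux_block h (false :: t) true true
  rw [← ht, ← wsubs_M, ← wsubs_wsubs] at e
  exact e

/-! ### Farey words -/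

/-- The morphism `0 ↦ 0`, `1 ↦ 01`. -/
def mA (w : List ℕ) : List ℕ := w.flatMap fun d => if d = 0 then [0] else [0, 1]

/-- The morphism `0 ↦ 01`, `1 ↦ 1`. -/
def mB (w : List ℕ) : List ℕ := w.flatMap fun d => if d = 0 then [0, 1] else [1]

lemma fareyInsert_map {m : List ℕ → List ℕ} (hm : ∀ u v, m (u ++ v) = m u ++ m v)
    (X : List (List ℕ)) : fareyInsert (X.map m) = (fareyInsert X).map m := by
  induction X with
  | nil => rfl
  | cons a X ih =>
    cases X with
    | nil => rfl
    | cons b X =>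
      simp only [List.map_cons] at ih
      simp [fareyInsert, ih, hm]

lemma exists_fareyInsert_cons (a : List ℕ) (X : List (List ℕ)) :
    ∃ Y, fareyInsert (a :: X) = a :: Y := by
  cases X with
  | nil => exact ⟨[], rfl⟩
  | cons b X => exact ⟨_, rfl⟩

lemma fareyInsert_append (X : List (List ℕ)) (a : List ℕ) (Y : List (List ℕ)) :
    fareyInsert (X ++ a :: Y) = fareyInsert (X ++ [a]) ++ (fareyInsert (a :: Y)).tail := by
  induction X with
  | nil =>
    obtain ⟨Z, hZ⟩ := exists_fareyInsert_cons a Y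
    simp [hZ, fareyInsert]
  | cons b X ih =>
    cases X with
    | nil => simpa [fareyInsert] using ih
    | cons c X => simpa [fareyInsert] using ih

lemma exists_fareyInsert_concat (X : List (List ℕ)) (a : List ℕ) :
    ∃ Y, fareyInsert (X ++ [a]) = Y ++ [a] := by
  induction X with
  | nil => exact ⟨[], rfl⟩
  | cons b X ih =>
    obtain ⟨Y, hY⟩ := ih
    cases X with
    | nil => exact ⟨[b, b ++ a], rfl⟩
    | cons c X => exact ⟨b :: (b ++ c) :: Y, by simpa [fareyInsert] using hY⟩

lemma exists_fareyLevel_cons (n : ℕ) : ∃ Y, fareyLevel n = [0] :: Y := by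
  induction n with
  | zero => exact ⟨_, rfl⟩
  | succ n ih =>
    obtain ⟨Y, hY⟩ := ih
    rw [fareyLevel, hY]
    exact exists_fareyInsert_cons _ _

lemma exists_fareyLevel_concat (n : ℕ) : ∃ X, fareyLevel n = X ++ [[1]] := by
  induction n with
  | zero => exact ⟨[[0]], rfl⟩
  | succ n ih =>
    obtain ⟨Y, hY⟩ := ih
    rw [fareyLevel, hY]
    exact exists_fareyInsert_concat _ _

lemma fareyLevel_succ (n : ℕ) :
    fareyLevel (n + 1) = (fareyLevel n).map mA ++ ((fareyLevel n).map mB).tail := by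
  induction n with
  | zero => rfl
  | succ n ih =>
    obtain ⟨X, hX⟩ := exists_fareyLevel_concat n
    obtain ⟨Y, hY⟩ := exists_fareyLevel_cons n
    have hA : (fareyLevel n).map mA = X.map mA ++ [[0, 1]] := by simp [hX, mA]
    have hB : (fareyLevel n).map mB = [0, 1] :: Y.map mB := by simp [hY, mB]
    have e : fareyLevel (n + 1) = fareyInsert (fareyLevel n) := rfl
    rw [fareyLevel, ih, ← ih, e, ← fareyInsert_map fun u v => by simp [mA],
      ← fareyInsert_map fun u v => by simp [mB], ← e, ih, hA, hB, List.tail_cons,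
      List.append_assoc, List.singleton_append, fareyInsert_append]

lemma mem_fareyLevel_succ {n : ℕ} {w : List ℕ} :
    w ∈ fareyLevel (n + 1) ↔ ∃ v ∈ fareyLevel n, w = mA v ∨ w = mB v := by
  rw [fareyLevel_succ, List.mem_append]
  constructor
  · rintro (h | h)
    · obtain ⟨v, hv, rfl⟩ := List.mem_map.mp h
      exact ⟨v, hv, Or.inl rfl⟩
    · obtain ⟨v, hv, rfl⟩ := List.mem_map.mp (List.mem_of_mem_tail h)
      exact ⟨v, hv, Or.inr rfl⟩
  · rintro ⟨v, hv, rfl | rfl⟩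
    · exact Or.inl (List.mem_map_of_mem hv)
    · obtain ⟨X, hX⟩ := exists_fareyLevel_concat n
      obtain ⟨Y, hY⟩ := exists_fareyLevel_cons n
      rw [hY, List.mem_cons] at hv
      rcases hv with rfl | hv
      · exact Or.inl (by simp [hX, mA, mB])
      · exact Or.inr (by rw [hY]; exact List.mem_map_of_mem hv)

lemma mB_toNat (ρ : List Bool) : mB (ρ.map Bool.toNat) = (wsub Gen.B.g ρ).map Bool.toNat := by
  induction ρ with
  | nil => rfl
  | cons c ρ ih =>
    rw [wsub_cons, List.map_cons, mB, List.flatMap_cons, ← mB, ih]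
    cases c <;> simp [Gen.g]

/-- The morphism `0 ↦ 0`, `1 ↦ 01` on binary words. -/
def bA (ρ : List Bool) : List Bool := ρ.flatMap fun c => if c then [false, true] else [false]

lemma mA_toNat (ρ : List Bool) : mA (ρ.map Bool.toNat) = (bA ρ).map Bool.toNat := by
  induction ρ with
  | nil => rfl
  | cons c ρ ih =>
    rw [bA, List.map_cons, mA, List.flatMap_cons, ← mA, ih, List.flatMap_cons, ← bA]
    cases c <;> simp

lemma false_cons_wsub_A (ρ : List Bool) : false :: wsub Gen.A.g ρ = bA ρ ++ [false] := by
  induction ρ with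
  | nil => rfl
  | cons c ρ ih =>
    rw [wsub_cons, bA, List.flatMap_cons, ← bA, List.append_assoc, ← ih]
    cases c <;> simp [Gen.g]

lemma IsFarey.B {l : List Gen} {ρ : List Bool} (h : IsFarey l ρ) :
    IsFarey (Gen.B :: l) (wsub Gen.B.g ρ) := by
  have := congrArg (wsub Gen.B.g) h
  rw [wsub_append, wsub_cons] at this
  exact this

lemma IsFarey.A {l : List Gen} {ρ : List Bool} (h : IsFarey l ρ) : IsFarey (Gen.A :: l) (bA ρ) := by
  have := congrArg (wsub Gen.A.g) h
  rw [wsub_append, wsub_cons] at this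
  have e : true :: (false :: wsub Gen.A.g ρ) =
      (wsubs (Gen.A :: l) [true, false] ++ [true]) ++ [false] := by
    simpa [Gen.g, wsub] using this
  rw [false_cons_wsub_A, ← List.cons_append] at e
  exact List.append_cancel_right e

lemma mem_FareySet {w : List ℕ} :
    w ∈ FareySet ↔ ∃ l ρ, Gen.M ∉ l ∧ IsFarey l ρ ∧ w = ρ.map Bool.toNat := by
  constructor
  · rintro ⟨⟨n, hn⟩, h0, h1⟩
    induction n generalizing w with
    | zero => simp [fareyLevel, h0, h1] at hn
    | succ n ih =>
      obtain ⟨v, hv, hw⟩ := mem_fareyLevel_succ.mp hn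
      have base : ∃ l ρ, Gen.M ∉ l ∧ IsFarey l ρ ∧ [0, 1] = ρ.map Bool.toNat :=
        ⟨[], [false, true], by simp, rfl, rfl⟩
      by_cases hv0 : v = [0]
      · subst hv0
        rcases hw with rfl | rfl
        · exact absurd rfl h0
        · exact base
      by_cases hv1 : v = [1]
      · subst hv1
        rcases hw with rfl | rfl
        · exact base
        · exact absurd rfl h1
      obtain ⟨l, ρ, hl, hρ, rfl⟩ := ih hv hv0 hv1
      rcases hw with rfl | rfl
      · exact ⟨_, _, by simp [hl], hρ.A, mA_toNat ρ⟩
      · exact ⟨_, _, by simp [hl], hρ.B, mB_toNat ρ⟩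
  · rintro ⟨l, ρ, hl, hρ, rfl⟩
    refine ⟨?_, ?_⟩
    · induction l generalizing ρ with
      | nil =>
        obtain ⟨t, rfl, ht⟩ := hρ.exists_eq
        obtain rfl : t = [] := by simpa using ht.symm
        exact ⟨1, by simp [fareyLevel, fareyInsert]⟩
      | cons a l ih =>
        obtain ⟨σ, hσ⟩ := exists_isFarey l
        obtain ⟨n, hn⟩ := ih σ (fun h => hl (List.mem_cons_of_mem _ h)) hσ
        refine ⟨n + 1, mem_fareyLevel_succ.mpr ⟨_, hn, ?_⟩⟩
        rw [mA_toNat, mB_toNat]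
        cases a with
        | A => exact Or.inl (congrArg _ (List.cons_injective (hρ.trans hσ.A.symm)))
        | B => exact Or.inr (congrArg _ (List.cons_injective (hρ.trans hσ.B.symm)))
        | M => simp at hl
    · obtain ⟨t, rfl, -⟩ := hρ.exists_eq
      simp

/-! ### The words of `LambdaExt` -/

lemma mem_LambdaExt {w : List ℕ} :
    w ∈ LambdaExt ↔ ∃ s ∈ FareyExt, ∃ rs : List (List ℕ), (∀ r ∈ rs, r ∈ FareySet) ∧
      w = rs.foldl subst s := by
  simp only [LambdaExt, LambdaE, mem_iUnion, mem_Ici, mem_ofPred_eq, exists_prop]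
  constructor
  · rintro ⟨m, -, s, hs, rs, -, h⟩
    exact ⟨s, hs, rs, h⟩
  · rintro ⟨s, hs, rs, h⟩
    exact ⟨rs.length + 1, by simp, s, hs, rs, by simp, h⟩

lemma subst_mem_LambdaExt {S r : List ℕ} (hS : S ∈ LambdaExt) (hr : r ∈ FareySet) :
    subst S r ∈ LambdaExt := by
  obtain ⟨s, hs, rs, h, rfl⟩ := mem_LambdaExt.mp hS
  refine mem_LambdaExt.mpr ⟨s, hs, rs ++ [r], fun q hq => ?_, by simp⟩
  rcases List.mem_append.mp hq with hq | hq
  · exact h q hq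
  · rwa [List.mem_singleton.mp hq]

lemma theta_iterate (k : ℕ) (w : List ℕ) : theta^[k] w = w.map (k + ·) := by
  induction k with
  | zero => simp
  | succ k ih =>
    rw [Function.iterate_succ_apply', ih, theta, List.map_map]
    exact List.map_congr_left fun a _ => by simp; omega

lemma ew_R (k : ℕ) (a : Bool) (w : List Bool) :
    ew (Outer.R k) (a :: w) = theta^[k] (w.map Bool.toNat) := by
  rw [theta_iterate]
  induction w generalizing a with
  | nil => rfl
  | cons b w ih => rw [ew, ih]; rfl

lemma block_R {l : List Gen} {ρ : List Bool} (h : IsFarey l ρ) (k : ℕ) :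
    block (Outer.R k) (l ++ [Gen.M]) true true = theta^[k] (ρ.map Bool.toNat) := by
  rw [block, wsubs_M, ← h, ew_R]

lemma block_D (k : ℕ) : block (Outer.D k) [] true true = theta^[k] [1] := by
  rw [theta_iterate]; rfl

lemma exists_last_split {α : Type*} (a : α) (l : List α) :
    a ∉ l ∨ ∃ l₁ l₂, l = l₁ ++ a :: l₂ ∧ a ∉ l₂ := by
  classical
  induction l with
  | nil => simp
  | cons b l ih =>
    rcases ih with h | ⟨l₁, l₂, rfl, h⟩
    · by_cases hb : a = b
      · exact Or.inr ⟨[], l, by simp [hb], h⟩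
      · exact Or.inl (by simp [hb, h])
    · exact Or.inr ⟨b :: l₁, l₂, rfl, h⟩

lemma block_mem_LambdaExt_append {o : Outer} {l l' : List Gen} (hF : Full o l)
    (h : block o l true true ∈ LambdaExt) (hl' : Gen.M ∉ l') :
    block o (l ++ (l' ++ [Gen.M])) true true ∈ LambdaExt := by
  obtain ⟨ρ, hρ⟩ := exists_isFarey l'
  rw [← subst_block hF hρ]
  exact subst_mem_LambdaExt h (mem_FareySet.mpr ⟨l', ρ, hl', hρ, rfl⟩)

lemma block_mem_LambdaExt {o : Outer} {l : List Gen} (h : Full o l) :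
    block o l true true ∈ LambdaExt := by
  have hD (k : ℕ) : block (Outer.D k) [] true true ∈ LambdaExt :=
    mem_LambdaExt.mpr ⟨_, ⟨[1], Or.inr rfl, k, block_D k⟩, [], by simp, rfl⟩
  rcases h with ⟨k, rfl, rfl⟩ | ⟨l, rfl⟩
  · exact hD k
  induction hn : l.length using Nat.strong_induction_on generalizing l with
  | _ n ih =>
    rcases exists_last_split Gen.M l with hM | ⟨l₁, l₂, rfl, hM⟩
    · cases o with
      | R k =>
        obtain ⟨ρ, hρ⟩ := exists_isFarey l
        exact mem_LambdaExt.mpr ⟨_, ⟨_, Or.inl (mem_FareySet.mpr ⟨l, ρ, hM, hρ, rfl⟩), k,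
          block_R hρ k⟩, [], by simp, rfl⟩
      | D k => exact block_mem_LambdaExt_append (Or.inl ⟨k, rfl, rfl⟩) (hD k) hM
    · have := block_mem_LambdaExt_append (Or.inr ⟨l₁, rfl⟩)
        (ih l₁.length (by simp at hn; omega) l₁ rfl) hM
      simpa using this

lemma exists_block_of_mem_LambdaExt {S : List ℕ} (hS : S ∈ LambdaExt) :
    ∃ o l, Full o l ∧ S = block o l true true := by
  obtain ⟨s, ⟨v, hv, k, rfl⟩, rs, hrs, rfl⟩ := mem_LambdaExt.mp hS
  have base : ∃ o l, Full o l ∧ theta^[k] v = block o l true true := by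
    rcases hv with hv | rfl
    · obtain ⟨l, ρ, -, hρ, rfl⟩ := mem_FareySet.mp hv
      exact ⟨Outer.R k, l ++ [Gen.M], Or.inr ⟨l, rfl⟩, (block_R hρ k).symm⟩
    · exact ⟨Outer.D k, [], Or.inl ⟨k, rfl, rfl⟩, (block_D k).symm⟩
  clear hS
  induction rs using List.reverseRecOn with
  | nil => exact base
  | append_singleton rs r ih =>
    obtain ⟨o, l, hF, h⟩ := ih fun q hq => hrs q (by simp [hq])
    obtain ⟨l', ρ, -, hρ, rfl⟩ := mem_FareySet.mp (hrs r (by simp))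
    refine ⟨o, l ++ (l' ++ [Gen.M]), Or.inr ⟨l ++ l', by simp⟩, ?_⟩
    rw [List.foldl_concat, h, subst_block hF hρ]

/-! ### The right end points -/

lemma betaR_spec {o : Outer} {l : List Gen} (h : Full o l) :
    1 < betaR (block o l true true) ∧
      valSeq (betaR (block o l true true)) (ev o l s01) = 1 := by
  have e : wordSeq (wplus (maxCyc (block o l true true))) (perSeq (block o l true true)) =
      ev o l s01 := by rw [maxCyc_block h, wplus_block, wordSeq_block]
  obtain ⟨i, hi⟩ := infNz_b1 o l 0
  obtain ⟨j, hj⟩ := infNz_b1 o l (i + 1)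
  obtain ⟨β, hβ⟩ := exists_base_of_two (ev_le o l s01) (show i < j + (i + 1) by omega) hi hj
  rw [← e] at hβ ⊢
  exact Classical.epsilon_spec
    (p := fun β : ℝ => 1 < β ∧ valSeq β (wordSeq (wplus (maxCyc (block o l true true)))
      (perSeq (block o l true true))) = 1) ⟨β, hβ⟩

lemma eq_betaR {o : Outer} {l : List Gen} (h : Full o l) {β : ℝ} (hβ : 1 < β)
    (hb : valSeq β (ev o l s01) = 1) : β = betaR (block o l true true) := by
  obtain ⟨h1, h2⟩ := betaR_spec h
  have hnz := exists_nz_of_valSeq hb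
  rcases lt_trichotomy β (betaR (block o l true true)) with hlt | heq | hlt
  · have := valSeq_strictAnti hβ hlt (ev_le o l s01) hnz
    linarith
  · exact heq
  · have := valSeq_strictAnti h1 hlt (ev_le o l s01) hnz
    linarith

end BetaTau

open BetaTau in
/-- `τ` is continuous at every point of `(1,∞) ∖ {β_r^S : S ∈ Λ_e}`,
while at each `β_r^S`, `S ∈ Λ_e`, it has an upward jump:
`lim_{β↘β_r^S} τ(β) = (S^∞)_{β_r^S} > (S 0^∞)_{β_r^S} = τ(β_r^S)`. -/
theorem tau_continuity_and_jumps :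
    (∀ β₀ : ℝ, 1 < β₀ → (¬ ∃ S ∈ LambdaExt, β₀ = betaR S) →
      ContinuousWithinAt tau (Set.Ioi 1) β₀) ∧
    (∀ S ∈ LambdaExt,
      Filter.Tendsto tau (𝓝[>] betaR S) (𝓝 (valSeq (betaR S) (perSeq S))) ∧
      valWord (betaR S) S < valSeq (betaR S) (perSeq S) ∧
      tau (betaR S) = valWord (betaR S) S) := by
  refine ⟨fun β hβ h => (continuousAt_tau hβ fun o l hF hb =>
    h ⟨_, block_mem_LambdaExt hF, eq_betaR hF hβ hb⟩).continuousWithinAt, fun S hS => ?_⟩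
  obtain ⟨o, l, hF, rfl⟩ := exists_block_of_mem_LambdaExt hS
  obtain ⟨h1, h2⟩ := betaR_spec hF
  rw [perSeq_block]
  exact ⟨tendsto_tau_of_full h1 hF h2, valWord_lt h1 o l,
    (tau_eq_of_full h1 h2).trans (valSeq_a1 h1 h2)⟩
end

section
/- Let k ≥ 2 be an integer and let β ∈ E ∩ (k, k+1]. Then the quasi-greedy expansion α(β) of 1 in base β is a sequence over the two-letter alphabet {k−1, k}. -/
open Set Filter MeasureTheory Topology

/-- `a` is the quasi-greedy expansion of `1` in base `β`: the lexicographically largest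
sequence over the alphabet `{0,1,…,⌈β⌉-1}` not ending in `0^∞` whose value is `1`. -/
def IsQuasiGreedyOne (β : ℝ) (a : ℕ → ℕ) : Prop :=
  (∀ i, a i ≤ ⌈β⌉₊ - 1) ∧ (∀ N : ℕ, ∃ i, N ≤ i ∧ a i ≠ 0) ∧ valSeq β a = 1 ∧
    ∀ b : ℕ → ℕ,
      ((∀ i, b i ≤ ⌈β⌉₊ - 1) ∧ (∀ N : ℕ, ∃ i, N ≤ i ∧ b i ≠ 0) ∧ valSeq β b = 1) →
      seqLe b a

/-! ### Values of digit sequences -/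

/-- A digit sequence bounded by a constant. -/
def BddDigits (x : ℕ → ℕ) : Prop := ∃ M : ℕ, ∀ i, x i ≤ M

lemma BddDigits.shiftn {x : ℕ → ℕ} (hx : BddDigits x) (m : ℕ) : BddDigits (shiftn m x) :=
  let ⟨M, hM⟩ := hx
  ⟨M, fun i => hM (i + m)⟩

lemma hasSum_const_digits {β : ℝ} (hβ : 1 < β) (M : ℝ) :
    HasSum (fun i : ℕ => M / β ^ (i + 1)) (M / (β - 1)) := by
  have h := (hasSum_geometric_of_lt_one (inv_nonneg.2 (by linarith : (0:ℝ) ≤ β))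
    (inv_lt_one_of_one_lt₀ hβ)).mul_left (M / β)
  have h0 : β ≠ 0 := by linarith
  have h1 : β - 1 ≠ 0 := by linarith
  have e : (fun i : ℕ => M / β ^ (i + 1)) = fun i => M / β * β⁻¹ ^ i := by
    funext i
    rw [inv_pow, pow_succ]
    field_simp
  have e' : M / (β - 1) = M / β * (1 - β⁻¹)⁻¹ := by
    rw [show 1 - β⁻¹ = (β - 1) / β by field_simp]
    field_simp
  rwa [e, e']

lemma summable_digits {β : ℝ} (hβ : 1 < β) {x : ℕ → ℕ} (hx : BddDigits x) :
    Summable fun i : ℕ => (x i : ℝ) / β ^ (i + 1) := by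
  obtain ⟨M, hM⟩ := hx
  refine Summable.of_nonneg_of_le (fun i => by positivity) (fun i => ?_)
    (hasSum_const_digits hβ M).summable
  have : (x i : ℝ) ≤ M := by exact_mod_cast hM i
  gcongr

lemma valSeq_le_const {β : ℝ} (hβ : 1 < β) {x : ℕ → ℕ} {M : ℕ} (hM : ∀ i, x i ≤ M) :
    valSeq β x ≤ M / (β - 1) := by
  rw [← (hasSum_const_digits hβ M).tsum_eq]
  refine (summable_digits hβ ⟨M, hM⟩).tsum_le_tsum (fun i => ?_)
    (hasSum_const_digits hβ M).summable
  have : (x i : ℝ) ≤ M := by exact_mod_cast hM i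
  gcongr

lemma valSeq_anti {β γ : ℝ} (hβ : 1 < β) (h : β ≤ γ) {x : ℕ → ℕ} (hx : BddDigits x) :
    valSeq γ x ≤ valSeq β x := by
  refine (summable_digits (hβ.trans_le h) hx).tsum_le_tsum (fun i => ?_) (summable_digits hβ hx)
  gcongr

lemma valSeq_split {β : ℝ} (hβ : 1 < β) {x : ℕ → ℕ} (hx : BddDigits x) (n : ℕ) :
    valSeq β x = ∑ i ∈ Finset.range n, (x i : ℝ) / β ^ (i + 1)
      + valSeq β (shiftn n x) / β ^ n := by
  rw [valSeq, ← (summable_digits hβ hx).sum_add_tsum_nat_add n, valSeq, ← tsum_div_const]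
  congr 2
  funext i
  rw [shiftn, div_div, ← pow_add]
  congr 2
  omega

lemma valSeq_split_succ {β : ℝ} (hβ : 1 < β) {x : ℕ → ℕ} (hx : BddDigits x) (n : ℕ) :
    valSeq β x = ∑ i ∈ Finset.range n, (x i : ℝ) / β ^ (i + 1)
      + (x n + valSeq β (shiftn (n + 1) x)) / β ^ (n + 1) := by
  rw [valSeq_split hβ hx (n + 1), Finset.sum_range_succ]
  ring

lemma valSeq_pos {β : ℝ} (hβ : 1 < β) {x : ℕ → ℕ} (hx : BddDigits x) (h : ∃ i, x i ≠ 0) :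
    0 < valSeq β x := by
  obtain ⟨i, hi⟩ := h
  have : 0 < x i := Nat.pos_of_ne_zero hi
  exact (summable_digits hβ hx).tsum_pos (fun i => by positivity) i (by positivity)

lemma valSeq_shiftn_pos {β : ℝ} (hβ : 1 < β) {x : ℕ → ℕ} (hx : BddDigits x)
    (h : ∀ N : ℕ, ∃ i, N ≤ i ∧ x i ≠ 0) (m : ℕ) : 0 < valSeq β (shiftn m x) := by
  obtain ⟨i, hi, hxi⟩ := h m
  refine valSeq_pos hβ (hx.shiftn m) ⟨i - m, ?_⟩
  rwa [shiftn, Nat.sub_add_cancel hi]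

lemma shiftn_shiftn (m n : ℕ) (x : ℕ → ℕ) : shiftn n (shiftn m x) = shiftn (m + n) x := by
  funext i
  simp only [shiftn]
  congr 1
  omega

lemma exists_valSeq_eq_one {x : ℕ → ℕ} (hx : BddDigits x) (hpos : ∀ i, 1 ≤ x i) :
    ∃ β : ℝ, 1 < β ∧ valSeq β x = 1 := by
  obtain ⟨M, hM⟩ := hx
  have hM1 : (1 : ℝ) ≤ M := by exact_mod_cast (hpos 0).trans (hM 0)
  have hcont : ContinuousOn (fun β : ℝ => valSeq β x) (Icc 2 (M + 1)) := by
    refine continuousOn_tsum (u := fun i : ℕ => (M : ℝ) / 2 ^ (i + 1)) (fun i => ?_)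
      (hasSum_const_digits one_lt_two M).summable (fun i β hβ => ?_)
    · refine continuousOn_const.div (by fun_prop) fun β hβ => ?_
      have : 0 < β := by linarith [hβ.1]
      positivity
    · have h0 : 0 < β := by linarith [hβ.1]
      have : (x i : ℝ) ≤ M := by exact_mod_cast hM i
      rw [Real.norm_of_nonneg (by positivity)]
      have := hβ.1
      gcongr
  have htwo : 1 ≤ valSeq 2 x := by
    have h := hasSum_const_digits one_lt_two (1 : ℝ)
    have e : (1 : ℝ) = ∑' i : ℕ, (1 : ℝ) / 2 ^ (i + 1) := by rw [h.tsum_eq]; norm_num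
    rw [e]
    refine h.summable.tsum_le_tsum (fun i => ?_) (summable_digits one_lt_two ⟨M, hM⟩)
    have : (1 : ℝ) ≤ x i := by exact_mod_cast hpos i
    gcongr
  have htop : valSeq (M + 1) x ≤ 1 := by
    refine (valSeq_le_const (by linarith) hM).trans_eq ?_
    rw [add_sub_cancel_right, div_self (by linarith)]
  obtain ⟨β, hβ, h⟩ := intermediate_value_Icc' (by linarith) hcont ⟨htop, htwo⟩
  exact ⟨β, by linarith [hβ.1], h⟩

/-! ### Lexicographic order and values -/

lemma seqLe_or_seqLt (x y : ℕ → ℕ) : seqLe x y ∨ seqLt y x := by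
  classical
  by_cases h : x = y
  · exact Or.inl (Or.inl h)
  have hex : ∃ n, x n ≠ y n := Function.ne_iff.1 h
  have hmin : ∀ i < Nat.find hex, x i = y i := fun i hi => not_not.1 (Nat.find_min hex hi)
  rcases lt_or_gt_of_ne (Nat.find_spec hex) with hlt | hgt
  · exact Or.inl (Or.inr ⟨_, hmin, hlt⟩)
  · exact Or.inr ⟨_, fun i hi => (hmin i hi).symm, hgt⟩

lemma seqLe.trans_lt {x y z : ℕ → ℕ} (h : seqLe x y) (h' : seqLt y z) : seqLt x z := by
  rcases h with rfl | ⟨n, hn, hlt⟩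
  · exact h'
  obtain ⟨m, hm, hlt'⟩ := h'
  rcases lt_trichotomy n m with hnm | rfl | hmn
  · exact ⟨n, fun i hi => (hn i hi).trans (hm i (hi.trans hnm)), hm n hnm ▸ hlt⟩
  · exact ⟨n, fun i hi => (hn i hi).trans (hm i hi), hlt.trans hlt'⟩
  · exact ⟨m, fun i hi => (hn i (hi.trans hmn)).trans (hm i hi), (hn m hmn).symm ▸ hlt'⟩

lemma seqLt.not_seqLe {x y : ℕ → ℕ} (h : seqLt x y) : ¬ seqLe y x := by
  intro h'
  obtain ⟨n, -, hn⟩ := h'.trans_lt h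
  exact lt_irrefl _ hn

lemma seqLe_of_sum_le {x y : ℕ → ℕ}
    (h : ∀ n, ∑ i ∈ Finset.range n, x i ≤ ∑ i ∈ Finset.range n, y i) : seqLe x y := by
  rcases seqLe_or_seqLt x y with hle | ⟨n, hn, hlt⟩
  · exact hle
  have hs := h (n + 1)
  have he : ∑ i ∈ Finset.range n, y i = ∑ i ∈ Finset.range n, x i :=
    Finset.sum_congr rfl fun i hi => hn i (Finset.mem_range.1 hi)
  rw [Finset.sum_range_succ, Finset.sum_range_succ, he] at hs
  omega

/-- A sequence squeezed between two sequences with a common prefix has that prefix too. -/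
lemma eq_of_seqLe_of_seqLe {x y z : ℕ → ℕ} {N : ℕ} (hxy : seqLe x y) (hyz : seqLe y z)
    (h : ∀ i < N, x i = z i) : ∀ i < N, y i = z i := by
  intro i hi
  rcases hyz with rfl | ⟨n, hn, hlt⟩
  · rfl
  rcases lt_or_ge i n with hin | hni
  · exact hn i hin
  refine absurd hxy (seqLt.not_seqLe ⟨n, fun j hj => ?_, ?_⟩)
  · rw [hn j hj, h j (by omega)]
  · rwa [h n (by omega)]

lemma valSeq_lt_one_of_shiftn_seqLt {β : ℝ} (hβ : 1 < β) {x c : ℕ → ℕ} (hx : BddDigits x)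
    (hc : BddDigits c) (hcpos : ∀ m, 0 < valSeq β (shiftn m c)) (hc1 : valSeq β c = 1)
    (hlt : ∀ m, seqLt (shiftn m x) c) : valSeq β x < 1 := by
  have key : ∀ m, ∃ n, valSeq β (shiftn m x)
      < 1 + (valSeq β (shiftn (m + (n + 1)) x) - 1) / β ^ (n + 1) := by
    intro m
    obtain ⟨n, hn, hltn⟩ := hlt m
    refine ⟨n, ?_⟩
    have h1 := valSeq_split_succ hβ (hx.shiftn m) n
    have h2 := valSeq_split_succ hβ hc n
    rw [Finset.sum_congr rfl fun i hi => by rw [hn i (Finset.mem_range.1 hi)],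
      shiftn_shiftn] at h1
    have h3 : ((shiftn m x n : ℕ) : ℝ) + 1 ≤ c n := by exact_mod_cast hltn
    have h4 := hcpos (n + 1)
    have h5 : ((shiftn m x n : ℝ) + valSeq β (shiftn (m + (n + 1)) x)) / β ^ (n + 1)
        < (c n + valSeq β (shiftn (n + 1) c)) / β ^ (n + 1)
          + (valSeq β (shiftn (m + (n + 1)) x) - 1) / β ^ (n + 1) := by
      rw [← add_div]
      exact div_lt_div_of_pos_right (by linarith) (by positivity)
    linarith
  obtain ⟨M, hM⟩ := hx
  have hbdd : BddAbove (range fun m => valSeq β (shiftn m x)) := by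
    refine ⟨M / (β - 1), ?_⟩
    rintro _ ⟨m, rfl⟩
    exact valSeq_le_const hβ fun i => hM (i + m)
  have hone : ∀ m, valSeq β (shiftn m x) ≤ 1 := by
    set S := ⨆ m, valSeq β (shiftn m x) with hS
    have hle : ∀ m, valSeq β (shiftn m x) ≤ S := fun m => le_ciSup hbdd m
    suffices S ≤ 1 from fun m => (hle m).trans this
    by_contra! hS1
    have : S ≤ 1 + (S - 1) / β := by
      refine ciSup_le fun m => ?_
      obtain ⟨n, hn⟩ := key m
      refine hn.le.trans ?_
      have hpow : β ≤ β ^ (n + 1) := le_self_pow₀ hβ.le (Nat.succ_ne_zero n)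
      have h1 : (valSeq β (shiftn (m + (n + 1)) x) - 1) / β ^ (n + 1)
          ≤ (S - 1) / β ^ (n + 1) := by
        have := hle (m + (n + 1))
        gcongr
      have h2 : (S - 1) / β ^ (n + 1) ≤ (S - 1) / β := by
        have : 0 ≤ S - 1 := by linarith
        gcongr
      linarith
    have h3 : (S - 1) / β < S - 1 := div_lt_self (by linarith) hβ
    linarith
  obtain ⟨n, hn⟩ := key 0
  have h1 : (valSeq β (shiftn (0 + (n + 1)) x) - 1) / β ^ (n + 1) ≤ 0 :=
    div_nonpos_of_nonpos_of_nonneg (by linarith [hone (0 + (n + 1))]) (by positivity)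
  have h2 : shiftn 0 x = x := rfl
  rw [h2] at hn
  linarith

/-! ### The quasi-greedy expansion of one -/

/-- The remainders produced by the quasi-greedy algorithm started at `1`. -/
noncomputable def qgRem (β : ℝ) : ℕ → ℝ
  | 0 => 1
  | n + 1 => β * qgRem β n - (⌈β * qgRem β n⌉₊ - 1 : ℕ)

/-- The digits produced by the quasi-greedy algorithm started at `1`. -/
noncomputable def qgDigit (β : ℝ) (n : ℕ) : ℕ := ⌈β * qgRem β n⌉₊ - 1

lemma qgRem_mem {β : ℝ} (hβ : 1 < β) : ∀ n, 0 < qgRem β n ∧ qgRem β n ≤ 1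
  | 0 => by simp [qgRem]
  | n + 1 => by
    have hpos : 0 < β * qgRem β n := mul_pos (by linarith) (qgRem_mem hβ n).1
    have h1 : 1 ≤ ⌈β * qgRem β n⌉₊ := Nat.ceil_pos.2 hpos
    have h2 := Nat.le_ceil (β * qgRem β n)
    have h3 := Nat.ceil_lt_add_one hpos.le
    rw [qgRem, Nat.cast_sub h1]
    push_cast
    constructor <;> linarith

lemma qgDigit_le {β : ℝ} (hβ : 1 < β) (n : ℕ) : qgDigit β n ≤ ⌈β⌉₊ - 1 := by
  refine Nat.sub_le_sub_right (Nat.ceil_mono ?_) 1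
  exact mul_le_of_le_one_right (by linarith) (qgRem_mem hβ n).2

lemma valSeq_shiftn_qgDigit {β : ℝ} (hβ : 1 < β) (m : ℕ) :
    valSeq β (shiftn m (qgDigit β)) = qgRem β m := by
  have hβ0 : β ≠ 0 := by linarith
  have hpart : ∀ n, ∑ i ∈ Finset.range n, (shiftn m (qgDigit β) i : ℝ) / β ^ (i + 1)
      = qgRem β m - qgRem β (m + n) * (β⁻¹) ^ n := by
    intro n
    induction n with
    | zero => simp
    | succ n ih =>
      have hrec : qgRem β (m + (n + 1)) = β * qgRem β (m + n) - qgDigit β (m + n) := rfl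
      rw [Finset.sum_range_succ, ih, hrec, shiftn, add_comm n m, inv_pow, inv_pow, pow_succ]
      field_simp
      ring
  have hb : BddDigits (shiftn m (qgDigit β)) := ⟨_, fun i => qgDigit_le hβ (i + m)⟩
  have h1 := (summable_digits hβ hb).hasSum.tendsto_sum_nat
  have h2 : Tendsto (fun n => qgRem β (m + n) * (β⁻¹) ^ n) atTop (𝓝 0) := by
    have hz := tendsto_pow_atTop_nhds_zero_of_lt_one (inv_nonneg.2 (by linarith : (0:ℝ) ≤ β))
      (inv_lt_one_of_one_lt₀ hβ)
    have hβi : 0 < β⁻¹ := inv_pos.2 (by linarith)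
    refine squeeze_zero (fun n => ?_) (fun n => ?_) hz
    · exact mul_nonneg (qgRem_mem hβ _).1.le (by positivity)
    · exact mul_le_of_le_one_left (by positivity) (qgRem_mem hβ _).2
  have h3 := (tendsto_const_nhds (x := qgRem β m)).sub h2
  rw [sub_zero] at h3
  simp_rw [hpart] at h1
  exact tendsto_nhds_unique h1 h3

lemma IsQuasiGreedyOne.eq_qgDigit {β : ℝ} (hβ : 1 < β) {a : ℕ → ℕ} (ha : IsQuasiGreedyOne β a) :
    a = qgDigit β := by
  obtain ⟨hle, hinf, hval, hmax⟩ := ha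
  have hb : BddDigits (qgDigit β) := ⟨_, qgDigit_le hβ⟩
  have hbv : valSeq β (qgDigit β) = 1 := valSeq_shiftn_qgDigit hβ 0
  have hbinf : ∀ N : ℕ, ∃ i, N ≤ i ∧ qgDigit β i ≠ 0 := by
    intro N
    by_contra! h
    have hz : valSeq β (shiftn N (qgDigit β)) = 0 := by
      simp [valSeq, shiftn, fun i => h (i + N) (Nat.le_add_left N i)]
    rw [valSeq_shiftn_qgDigit hβ] at hz
    exact (qgRem_mem hβ N).1.ne' hz
  rcases hmax _ ⟨qgDigit_le hβ, hbinf, hbv⟩ with heq | ⟨n, hn, hlt⟩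
  · exact heq.symm
  exfalso
  have ha' : BddDigits a := ⟨_, hle⟩
  have h1 := valSeq_split_succ hβ ha' n
  have h2 := valSeq_split_succ hβ hb n
  rw [Finset.sum_congr rfl fun i hi => by rw [hn i (Finset.mem_range.1 hi)],
    valSeq_shiftn_qgDigit hβ, hbv] at h2
  have h3 : (qgDigit β n : ℝ) + 1 ≤ a n := by exact_mod_cast hlt
  have h4 := valSeq_shiftn_pos hβ ha' hinf (n + 1)
  have h5 := (qgRem_mem hβ (n + 1)).2
  have h6 : (qgDigit β n + qgRem β (n + 1)) / β ^ (n + 1)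
      < (a n + valSeq β (shiftn (n + 1) a)) / β ^ (n + 1) := by
    gcongr ?_ / _
    linarith
  linarith

lemma shiftn_qgDigit_seqLe {β : ℝ} (hβ : 1 < β) (m : ℕ) :
    seqLe (shiftn m (qgDigit β)) (qgDigit β) := by
  rcases seqLe_or_seqLt (shiftn m (qgDigit β)) (qgDigit β) with h | ⟨n, hn, hlt⟩
  · exact h
  exfalso
  have hb : BddDigits (qgDigit β) := ⟨_, qgDigit_le hβ⟩
  have h1 := valSeq_split_succ hβ (hb.shiftn m) n
  have h2 := valSeq_split_succ hβ hb n
  have hbv : valSeq β (qgDigit β) = 1 := valSeq_shiftn_qgDigit hβ 0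
  rw [Finset.sum_congr rfl fun i hi => by rw [hn i (Finset.mem_range.1 hi)],
    valSeq_shiftn_qgDigit hβ, hbv] at h2
  rw [shiftn_shiftn, valSeq_shiftn_qgDigit hβ, valSeq_shiftn_qgDigit hβ] at h1
  have h3 : (qgDigit β n : ℝ) + 1 ≤ (shiftn m (qgDigit β) n : ℕ) := by exact_mod_cast hlt
  have h4 := (qgRem_mem hβ (m + (n + 1))).1
  have h5 := (qgRem_mem hβ (n + 1)).2
  have h6 : (qgDigit β n + qgRem β (n + 1)) / β ^ (n + 1)
      < ((shiftn m (qgDigit β) n : ℕ) + qgRem β (m + (n + 1))) / β ^ (n + 1) := by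
    gcongr ?_ / _
    linarith
  have h7 := (qgRem_mem hβ m).2
  linarith

/-! ### Christoffel words -/

/-- The sequence of increments of the height function `h`, with `r` added to every term. -/
def stepSeq (h : ℕ → ℕ) (r i : ℕ) : ℕ := h (i + 1) - h i + r

/-- The heights `⌊i p / q⌋`. -/
def lowerHeight (p q i : ℕ) : ℕ := i * p / q

/-- The heights `⌈i p / q⌉`. -/
def upperHeight (p q i : ℕ) : ℕ := (i * p + q - 1) / q

/-- The heights `⌊i p / q⌋ + 1` for `i ≥ 1`, started at `0`. -/
def jumpHeight (p q i : ℕ) : ℕ := if i = 0 then 0 else i * p / q + 1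

/-- The lower Christoffel word of slope `p / q` with all letters raised by `r`. -/
def lowerWord (p q r : ℕ) : List ℕ := (List.range q).map (stepSeq (lowerHeight p q) r)

/-- The upper Christoffel word of slope `p / q` with all letters raised by `r`. -/
def upperWord (p q r : ℕ) : List ℕ := (List.range q).map (stepSeq (upperHeight p q) r)

lemma lowerHeight_mono (p q : ℕ) : Monotone (lowerHeight p q) := fun i j h => by
  unfold lowerHeight
  gcongr

lemma upperHeight_mono (p q : ℕ) : Monotone (upperHeight p q) := fun i j h => by
  unfold upperHeight
  gcongr

lemma upperHeight_le_iff {p q : ℕ} (hq : 0 < q) {i t : ℕ} :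
    upperHeight p q i ≤ t ↔ i * p ≤ t * q := by
  rw [upperHeight, ← Nat.lt_succ_iff, Nat.div_lt_iff_lt_mul hq, Nat.succ_mul]
  omega

lemma upperHeight_zero {p q : ℕ} (hq : 0 < q) : upperHeight p q 0 = 0 :=
  Nat.le_zero.1 ((upperHeight_le_iff hq).2 (by simp))

lemma upperHeight_add_le {p q : ℕ} (hq : 0 < q) (i j : ℕ) :
    upperHeight p q (i + j) ≤ upperHeight p q i + upperHeight p q j := by
  rw [upperHeight_le_iff hq, add_mul, add_mul]
  exact Nat.add_le_add ((upperHeight_le_iff hq).1 le_rfl) ((upperHeight_le_iff hq).1 le_rfl)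

lemma lowerHeight_add_le {p q : ℕ} (hq : 0 < q) (i j : ℕ) :
    lowerHeight p q (i + j) ≤ upperHeight p q i + lowerHeight p q j := by
  have h : i * p ≤ upperHeight p q i * q := (upperHeight_le_iff hq).1 le_rfl
  calc lowerHeight p q (i + j) ≤ (j * p + upperHeight p q i * q) / q := by
        unfold lowerHeight
        gcongr
        rw [add_mul]
        omega
    _ = upperHeight p q i + lowerHeight p q j := by
        rw [Nat.add_mul_div_right _ _ hq, add_comm, lowerHeight]

lemma lowerHeight_add_period {p q : ℕ} (hq : 0 < q) (i : ℕ) :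
    lowerHeight p q (i + q) = lowerHeight p q i + p := by
  rw [lowerHeight, add_mul, mul_comm q p, Nat.add_mul_div_right _ _ hq, lowerHeight]

lemma upperHeight_add_period {p q : ℕ} (hq : 0 < q) (i : ℕ) :
    upperHeight p q (i + q) = upperHeight p q i + p := by
  rw [upperHeight, add_mul, show i * p + q * p + q - 1 = i * p + q - 1 + p * q by
    rw [mul_comm q p]; omega, Nat.add_mul_div_right _ _ hq, upperHeight]

lemma stepSeq_periodic {h : ℕ → ℕ} {p q : ℕ} (hper : ∀ i, h (i + q) = h i + p) (r : ℕ) :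
    Function.Periodic (stepSeq h r) q := fun i => by
  simp only [stepSeq, show i + q + 1 = i + 1 + q by omega, hper]
  omega

lemma stepSeq_bddDigits {h : ℕ → ℕ} {p q : ℕ} (hper : ∀ i, h (i + q) = h i + p) (hq : 0 < q)
    (hmono : Monotone h) (r : ℕ) : BddDigits (stepSeq h r) := by
  refine ⟨p + r, fun i => ?_⟩
  have h1 := hmono (show i + 1 ≤ i + q by omega)
  have h2 := hper i
  unfold stepSeq
  omega

lemma add_sum_shiftn_stepSeq {h : ℕ → ℕ} (hmono : Monotone h) (r m n : ℕ) :
    h m + ∑ i ∈ Finset.range n, shiftn m (stepSeq h r) i = h (n + m) + n * r := by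
  induction n with
  | zero => simp
  | succ n ih =>
    have := hmono (show n + m ≤ n + 1 + m by omega)
    rw [Finset.sum_range_succ, ← add_assoc, ih, Nat.succ_mul, shiftn, stepSeq,
      show n + m + 1 = n + 1 + m by omega]
    omega

lemma shiftn_stepSeq_seqLe {h g : ℕ → ℕ} (hmono : Monotone h) (gmono : Monotone g)
    (g0 : g 0 = 0) {m : ℕ} (hle : ∀ n, h (n + m) ≤ g n + h m) (r : ℕ) :
    seqLe (shiftn m (stepSeq h r)) (stepSeq g r) := by
  refine seqLe_of_sum_le fun n => ?_
  have h1 := add_sum_shiftn_stepSeq hmono r m n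
  have h2 := add_sum_shiftn_stepSeq gmono r 0 n
  have h3 := hle n
  have h4 : shiftn 0 (stepSeq g r) = stepSeq g r := rfl
  rw [g0, h4, zero_add, add_zero] at h2
  omega

lemma map_range_le_of_seqLe {x y : ℕ → ℕ} (h : seqLe x y) (q : ℕ) :
    (List.range q).map x ≤ (List.range q).map y := by
  rcases h with rfl | ⟨n, hn, hlt⟩
  · exact le_rfl
  rcases lt_or_ge n q with hnq | hqn
  · refine le_of_lt (List.lt_iff_exists.2 (Or.inr ⟨n, by simpa, by simpa, fun j hj => ?_, ?_⟩))
    · simpa using hn j hj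
    · simpa using hlt
  · refine le_of_eq (List.map_congr_left fun i hi => hn i ?_)
    exact (List.mem_range.1 hi).trans_le hqn

lemma rotate_map_range {x : ℕ → ℕ} {q : ℕ} (hx : Function.Periodic x q) (m : ℕ) :
    ((List.range q).map x).rotate m = (List.range q).map (shiftn m x) := by
  refine List.ext_getElem (by simp) fun i h1 h2 => ?_
  simp [List.getElem_rotate, shiftn, hx.map_mod_nat]

lemma perSeq_map_range {x : ℕ → ℕ} {q : ℕ} (hq : 0 < q) (hx : Function.Periodic x q) :
    perSeq ((List.range q).map x) = x := by
  funext i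
  have := Nat.mod_lt i hq
  simp [perSeq, List.getD_eq_getElem?_getD, this, hx.map_mod_nat]

lemma foldl_max_le {α : Type*} [LinearOrder α] {u : α} :
    ∀ {l : List α} {b : α}, b ≤ u → (∀ x ∈ l, x ≤ u) → l.foldl max b ≤ u
  | [], _, hb, _ => hb
  | y :: l, b, hb, hl => by
    rw [List.foldl_cons]
    exact foldl_max_le (max_le hb (hl y (by simp))) fun x hx => hl x (by simp [hx])

lemma le_foldl_max {α : Type*} [LinearOrder α] :
    ∀ {l : List α} {b u : α}, u = b ∨ u ∈ l → u ≤ l.foldl max b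
  | [], _, _, h => by simpa using (h.resolve_right List.not_mem_nil).le
  | y :: l, b, u, h => by
    rw [List.foldl_cons]
    rcases h with rfl | h
    · exact (le_max_left u y).trans (le_foldl_max (Or.inl rfl))
    · rcases List.mem_cons.1 h with rfl | h
      · exact (le_max_right b u).trans (le_foldl_max (Or.inl rfl))
      · exact le_foldl_max (Or.inr h)

lemma maxCyc_lowerWord {p q m l : ℕ} (hm : m < q) (hml : m * p + 1 = l * q) (r : ℕ) :
    maxCyc (lowerWord p q r) = upperWord p q r := by
  have hq : 0 < q := by omega
  have hper := stepSeq_periodic (lowerHeight_add_period (p := p) hq) r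
  have hlen : (lowerWord p q r).length = q := by simp [lowerWord]
  have hrot : (lowerWord p q r).rotate m = upperWord p q r := by
    rw [lowerWord, rotate_map_range hper, upperWord]
    have hh : ∀ i, lowerHeight p q (i + m) + 1 = upperHeight p q i + l := by
      intro i
      rw [lowerHeight, ← Nat.add_div_right _ hq, upperHeight, ← Nat.add_mul_div_right _ _ hq]
      congr 1
      rw [add_mul, ← hml]
      omega
    refine List.map_congr_left fun i _ => ?_
    have h1 := hh i
    have h2 := hh (i + 1)
    simp only [shiftn, stepSeq, show i + m + 1 = i + 1 + m by omega]
    omega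
  rw [maxCyc, hlen]
  refine le_antisymm (foldl_max_le ?_ ?_) (le_foldl_max (Or.inr ?_))
  · exact not_lt.1 (List.not_lt_nil _)
  · intro x hx
    obtain ⟨j, -, rfl⟩ := List.mem_map.1 hx
    rw [lowerWord, rotate_map_range hper]
    exact map_range_le_of_seqLe (shiftn_stepSeq_seqLe (lowerHeight_mono p q)
      (upperHeight_mono p q) (upperHeight_zero hq) (fun n => lowerHeight_add_le hq n j) r) q
  · exact List.mem_map.2 ⟨m, List.mem_range.2 hm, hrot⟩

lemma upperHeight_eq_lowerHeight_add_one {p q m l : ℕ} (hml : m * p + 1 = l * q) {i : ℕ}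
    (hi : 0 < i) (hiq : i < q) : upperHeight p q i = lowerHeight p q i + 1 := by
  have hq : 0 < q := by omega
  have hdvd : ¬ q ∣ i * p := by
    intro h
    have h1 : q ∣ i * (m * p + 1) := by
      rw [hml]
      exact Dvd.intro_left (i * l) (by ring)
    have h2 : q ∣ i * (m * p) := by
      rw [mul_left_comm]
      exact h.mul_left m
    rw [mul_add, mul_one] at h1
    exact absurd (Nat.le_of_dvd hi ((Nat.dvd_add_right h2).1 h1)) (by omega)
  have hmod : 0 < i * p % q := Nat.pos_of_ne_zero fun h => hdvd (Nat.dvd_of_mod_eq_zero h)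
  have hdm := Nat.div_add_mod (i * p) q
  refine le_antisymm ((upperHeight_le_iff hq).2 ?_) (Nat.succ_le_of_lt (not_le.1 fun h => ?_))
  · have := Nat.mod_lt (i * p) hq
    rw [lowerHeight, add_mul, mul_comm (i * p / q)]
    omega
  · have := (upperHeight_le_iff hq).1 h
    rw [lowerHeight, mul_comm (i * p / q)] at this
    omega

lemma wordSeq_wplus_upperWord {p q m l : ℕ} (hq : 0 < q) (hml : m * p + 1 = l * q) (r : ℕ) :
    wordSeq (wplus (upperWord p q r)) (perSeq (lowerWord p q r)) = stepSeq (jumpHeight p q) r := by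
  rw [lowerWord, perSeq_map_range hq (stepSeq_periodic (lowerHeight_add_period hq) r)]
  have hjump : ∀ i < q, jumpHeight p q i = upperHeight p q i := by
    intro i hi
    rcases Nat.eq_zero_or_pos i with rfl | hpos
    · rw [upperHeight_zero hq, jumpHeight, if_pos rfl]
    · rw [upperHeight_eq_lowerHeight_add_one hml hpos hi, jumpHeight, if_neg hpos.ne', lowerHeight]
  have hjumpq : jumpHeight p q q = upperHeight p q q + 1 := by
    have h1 := upperHeight_add_period (p := p) hq 0
    rw [upperHeight_zero hq, zero_add, zero_add] at h1
    rw [jumpHeight, if_neg hq.ne', h1, Nat.mul_div_cancel_left _ hq]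
  obtain ⟨n, rfl⟩ : ∃ n, q = n + 1 := ⟨q - 1, by omega⟩
  have hplus : wplus (upperWord p (n + 1) r) =
      (List.range n).map (stepSeq (upperHeight p (n + 1)) r)
        ++ [stepSeq (upperHeight p (n + 1)) r n + 1] := by
    simp [wplus, upperWord, List.range_succ]
  funext i
  rw [hplus, wordSeq]
  rcases lt_trichotomy i n with hi | rfl | hi
  · rw [if_pos (by simp; omega), List.getD_append _ _ _ _ (by simpa)]
    simp [hi, stepSeq, hjump i (by omega), hjump (i + 1) (by omega)]
  · have := upperHeight_mono p (i + 1) (Nat.le_add_right i 1)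
    rw [if_pos (by simp), List.getD_append_right _ _ _ _ (by simp)]
    simp only [List.length_map, List.length_range, Nat.sub_self, List.getD_cons_zero, stepSeq,
      hjumpq, hjump i (Nat.lt_succ_self i)]
    omega
  · rw [if_neg (by simp; omega)]
    obtain ⟨j, rfl⟩ : ∃ j, i = j + (n + 1) := ⟨i - (n + 1), by omega⟩
    have h1 := lowerHeight_add_period (p := p) hq j
    have h2 := lowerHeight_add_period (p := p) hq (j + 1)
    rw [lowerHeight] at h1 h2
    simp only [List.length_append, List.length_map, List.length_range, List.length_singleton,
      Nat.add_sub_cancel, stepSeq, jumpHeight]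
    rw [if_neg (by omega), if_neg (by omega), h1,
      show j + (n + 1) + 1 = j + 1 + (n + 1) by omega, h2]
    omega

lemma upperHeight_eq_jumpHeight {p₁ q₁ p₂ q₂ : ℕ} (h1 : 0 < q₁) (h2 : 0 < q₂)
    (hdet : p₂ * q₁ = p₁ * q₂ + 1) {i : ℕ} (hi : i < q₁ + q₂) :
    upperHeight p₂ q₂ i = jumpHeight p₁ q₁ i := by
  rcases Nat.eq_zero_or_pos i with rfl | hpos
  · rw [upperHeight_zero h2, jumpHeight, if_pos rfl]
  rw [jumpHeight, if_neg hpos.ne']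
  set t := i * p₁ / q₁ with ht
  have ht1 : t * q₁ ≤ i * p₁ := Nat.div_mul_le_self _ _
  have ht2 : i * p₁ < (t + 1) * q₁ := Nat.lt_mul_of_div_lt (Nat.lt_succ_self _) h1
  refine le_antisymm ((upperHeight_le_iff h2).2 ?_) (Nat.succ_le_of_lt (not_le.1 fun h => ?_))
  · by_contra! hlt
    zify at *
    have e : (i : ℤ) = q₁ * (i * p₂ - (t + 1) * q₂) + q₂ * ((t + 1) * q₁ - i * p₁) := by
      linear_combination (-(i : ℤ)) * hdet
    nlinarith
  · have h3 := (upperHeight_le_iff h2).1 h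
    zify at *
    have : (i : ℤ) * (p₂ * q₁) ≤ i * (p₁ * q₂) := by nlinarith
    rw [hdet] at this
    nlinarith

lemma lowerWord_append {p₁ q₁ p₂ q₂ : ℕ} (h1 : 0 < q₁) (h2 : 0 < q₂)
    (hdet : p₂ * q₁ = p₁ * q₂ + 1) (r : ℕ) :
    lowerWord p₁ q₁ r ++ lowerWord p₂ q₂ r = lowerWord (p₁ + p₂) (q₁ + q₂) r := by
  have hQ : 0 < q₁ + q₂ := by omega
  have hleft : ∀ i ≤ q₁, lowerHeight (p₁ + p₂) (q₁ + q₂) i = lowerHeight p₁ q₁ i := by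
    intro i hi
    have ht1 : i * p₁ / q₁ * q₁ ≤ i * p₁ := Nat.div_mul_le_self _ _
    have ht2 : i * p₁ < (i * p₁ / q₁ + 1) * q₁ := Nat.lt_mul_of_div_lt (Nat.lt_succ_self _) h1
    simp only [lowerHeight]
    set t := i * p₁ / q₁
    refine Nat.div_eq_of_lt_le ?_ ?_
    · zify at *
      nlinarith
    · by_contra! hlt
      zify at *
      have e : (i : ℤ) = q₁ * (i * (p₁ + p₂) - (t + 1) * (q₁ + q₂))
          + (q₁ + q₂) * ((t + 1) * q₁ - i * p₁) := by
        linear_combination (-(i : ℤ)) * hdet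
      nlinarith
  have hright : ∀ i ≤ q₂,
      lowerHeight (p₁ + p₂) (q₁ + q₂) (q₁ + i) = p₁ + lowerHeight p₂ q₂ i := by
    intro i hi
    have ht1 : i * p₂ / q₂ * q₂ ≤ i * p₂ := Nat.div_mul_le_self _ _
    have ht2 : i * p₂ < (i * p₂ / q₂ + 1) * q₂ := Nat.lt_mul_of_div_lt (Nat.lt_succ_self _) h2
    simp only [lowerHeight]
    set t := i * p₂ / q₂
    refine Nat.div_eq_of_lt_le ?_ ?_
    · zify at *
      have e : (i : ℤ) = q₁ * (i * p₂ - t * q₂) + q₂ * (t * q₁ - i * p₁) := by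
        linear_combination (-(i : ℤ)) * hdet
      have hle : (t : ℤ) * q₁ ≤ i * p₁ + 1 := by
        by_contra! hlt
        nlinarith
      nlinarith
    · zify at *
      have e : (i : ℤ) = q₁ * (i * p₂ - (t + 1) * q₂) + q₂ * ((t + 1) * q₁ - i * p₁) := by
        linear_combination (-(i : ℤ)) * hdet
      have hlt : (i : ℤ) * p₁ + 1 ≤ (t + 1) * q₁ := by
        by_contra! hlt
        nlinarith
      nlinarith
  rw [lowerWord, lowerWord, lowerWord, List.range_add, List.map_append, List.map_map]
  congr 1
  · refine List.map_congr_left fun i hi => ?_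
    have := List.mem_range.1 hi
    rw [stepSeq, stepSeq, hleft i (by omega), hleft (i + 1) (by omega)]
  · refine List.map_congr_left fun i hi => ?_
    have := List.mem_range.1 hi
    rw [Function.comp, stepSeq, stepSeq, add_assoc, hright i (by omega), hright (i + 1) (by omega)]
    omega

/-! ### Farey words -/

/-- `u` and `v` are consecutive in the Farey list of level `n`. -/
def FareyAdj (n : ℕ) (u v : List ℕ) : Prop := ∃ s t, fareyLevel n = s ++ u :: v :: t

lemma fareyInsert_cons (v : List ℕ) (t : List (List ℕ)) : ∃ t', fareyInsert (v :: t) = v :: t' := by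
  cases t with
  | nil => exact ⟨[], rfl⟩
  | cons w t => exact ⟨_, rfl⟩

lemma fareyInsert_append (u v : List ℕ) (t : List (List ℕ)) :
    ∀ s, ∃ s' t', fareyInsert (s ++ u :: v :: t) = s' ++ u :: (u ++ v) :: v :: t'
  | [] => by
    obtain ⟨t', ht'⟩ := fareyInsert_cons v t
    exact ⟨[], t', by simp [fareyInsert, ht']⟩
  | [w] => by
    obtain ⟨t', ht'⟩ := fareyInsert_cons v t
    exact ⟨[w, w ++ u], t', by simp [fareyInsert, ht']⟩
  | w :: x :: s => by
    obtain ⟨s', t', h⟩ := fareyInsert_append u v t (x :: s)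
    exact ⟨w :: (w ++ x) :: s', t', by simpa [fareyInsert] using h⟩

lemma FareyAdj.mediant {n : ℕ} {u v : List ℕ} (h : FareyAdj n u v) :
    FareyAdj (n + 1) u (u ++ v) ∧ FareyAdj (n + 1) (u ++ v) v := by
  obtain ⟨s, t, hst⟩ := h
  obtain ⟨s', t', h⟩ := fareyInsert_append u v t s
  rw [← hst] at h
  exact ⟨⟨s', v :: t', h⟩, ⟨s' ++ [u], t', by rw [fareyLevel, h]; simp⟩⟩

lemma theta_iterate_eq (r : ℕ) (w : List ℕ) : theta^[r] w = w.map (· + r) := by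
  induction r with
  | zero => simp
  | succ r ih =>
    rw [Function.iterate_succ_apply', ih, theta, List.map_map]
    rfl

lemma lowerWord_mem_FareyExt {n p₁ q₁ p₂ q₂ : ℕ} (h1 : 0 < q₁) (h2 : 0 < q₂)
    (hdet : p₂ * q₁ = p₁ * q₂ + 1)
    (h : FareyAdj n (lowerWord p₁ q₁ 0) (lowerWord p₂ q₂ 0)) (r : ℕ) :
    lowerWord (p₁ + p₂) (q₁ + q₂) r ∈ FareyExt := by
  have hlen : (lowerWord (p₁ + p₂) (q₁ + q₂) 0).length = q₁ + q₂ := by simp [lowerWord]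
  refine ⟨lowerWord (p₁ + p₂) (q₁ + q₂) 0, Or.inl ⟨⟨n + 1, ?_⟩, ?_, ?_⟩, r, ?_⟩
  · obtain ⟨s, t, hst⟩ := h.mediant.1
    rw [lowerWord_append h1 h2 hdet] at hst
    simp [hst]
  · intro he
    rw [he, List.length_singleton] at hlen
    omega
  · intro he
    rw [he, List.length_singleton] at hlen
    omega
  · rw [theta_iterate_eq, lowerWord, lowerWord, List.map_map]
    rfl

/-! ### Farey intervals and the quasi-greedy expansion -/

lemma seqLe_or_seqLe_of_notMem_Jint {β : ℝ} (hβ : 1 < β) {p q m l r : ℕ} (hm : m < q)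
    (hml : m * p + 1 = l * q) (hr : 1 ≤ r) (h : β ∉ Jint (lowerWord p q r)) :
    seqLe (qgDigit β) (stepSeq (upperHeight p q) r) ∨
      seqLe (stepSeq (jumpHeight p q) r) (qgDigit β) := by
  have hq : 0 < q := by omega
  have hb : BddDigits (qgDigit β) := ⟨_, qgDigit_le hβ⟩
  have hpos : ∀ (h : ℕ → ℕ) i, 1 ≤ stepSeq h r i := fun h i => hr.trans (Nat.le_add_left _ _)
  have hval : valSeq β (qgDigit β) = 1 := valSeq_shiftn_qgDigit hβ 0
  rw [Jint, mem_Icc, not_and_or, not_le, not_le] at h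
  rcases h with h | h
  · left
    have hper := upperHeight_add_period (p := p) hq
    have hc := stepSeq_bddDigits hper hq (upperHeight_mono p q) r
    have hspec := Classical.epsilon_spec (exists_valSeq_eq_one hc (hpos _))
    rw [betaL, maxCyc_lowerWord hm hml, upperWord,
      perSeq_map_range hq (stepSeq_periodic hper r)] at h
    refine (seqLe_or_seqLt _ _).resolve_right fun hlt => ?_
    have := valSeq_lt_one_of_shiftn_seqLt hβ hc hb
      (fun m => (valSeq_shiftn_qgDigit hβ m).symm ▸ (qgRem_mem hβ m).1) hval
      (fun m => (shiftn_stepSeq_seqLe (upperHeight_mono p q) (upperHeight_mono p q)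
        (upperHeight_zero hq) (fun n => upperHeight_add_le hq n m) r).trans_lt hlt)
    have h2 := valSeq_anti hβ h.le hc
    linarith [hspec.2]
  · right
    have hd : BddDigits (stepSeq (jumpHeight p q) r) := by
      obtain ⟨M, hM⟩ := stepSeq_bddDigits (lowerHeight_add_period (p := p) hq) hq
        (lowerHeight_mono p q) r
      refine ⟨M + 1, fun i => ?_⟩
      have := hM i
      simp only [stepSeq, jumpHeight, lowerHeight] at this ⊢
      split_ifs <;> simp_all <;> omega
    have hspec := Classical.epsilon_spec (exists_valSeq_eq_one hd (hpos _))
    rw [betaR, maxCyc_lowerWord hm hml, wordSeq_wplus_upperWord hq hml] at h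
    refine (seqLe_or_seqLt _ _).resolve_right fun hlt => ?_
    have := valSeq_lt_one_of_shiftn_seqLt hspec.1 hb hd
      (fun m => valSeq_pos hspec.1 (hd.shiftn m) ⟨0, Nat.one_le_iff_ne_zero.1 (hpos _ _)⟩) hspec.2
      (fun m => (shiftn_qgDigit_seqLe hβ m).trans_lt hlt)
    have h2 := valSeq_anti hspec.1 h.le hb
    linarith

/-- Descent in the Farey tree: a base outside all Farey intervals is squeezed between consecutive
Farey words of every level. -/
lemma exists_fareyAdj_seqLe {β : ℝ} (hβ : 1 < β) (hE : ∀ s ∈ FareyExt, β ∉ Jint s) {r : ℕ}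
    (hr : 1 ≤ r) (hlow : seqLe (stepSeq (jumpHeight 0 1) r) (qgDigit β))
    (hupp : seqLe (qgDigit β) (stepSeq (upperHeight 1 1) r)) (n : ℕ) :
    ∃ p₁ q₁ p₂ q₂, 0 < q₁ ∧ 0 < q₂ ∧ n + 2 ≤ q₁ + q₂ ∧ p₁ ≤ q₁ ∧ p₂ ≤ q₂ ∧
      p₂ * q₁ = p₁ * q₂ + 1 ∧ FareyAdj n (lowerWord p₁ q₁ 0) (lowerWord p₂ q₂ 0) ∧
      seqLe (stepSeq (jumpHeight p₁ q₁) r) (qgDigit β) ∧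
      seqLe (qgDigit β) (stepSeq (upperHeight p₂ q₂) r) := by
  induction n with
  | zero =>
    refine ⟨0, 1, 1, 1, one_pos, one_pos, le_rfl, zero_le_one, le_rfl, rfl, ⟨[], [], ?_⟩, hlow, hupp⟩
    decide
  | succ n ih =>
    obtain ⟨p₁, q₁, p₂, q₂, h1, h2, hn, hpq₁, hpq₂, hdet, hadj, hl, hu⟩ := ih
    have hadj' := hadj.mediant
    rw [lowerWord_append h1 h2 hdet] at hadj'
    have hnot := hE _ (lowerWord_mem_FareyExt h1 h2 hdet hadj r)
    have hml : q₂ * (p₁ + p₂) + 1 = p₂ * (q₁ + q₂) := by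
      linear_combination -hdet
    rcases seqLe_or_seqLe_of_notMem_Jint hβ (by omega) hml hr hnot with h | h
    · exact ⟨p₁, q₁, p₁ + p₂, q₁ + q₂, h1, by omega, by omega, hpq₁, by omega,
        by linear_combination hdet, hadj'.1, hl, h⟩
    · exact ⟨p₁ + p₂, q₁ + q₂, p₂, q₂, by omega, h2, by omega, by omega, hpq₂,
        by linear_combination hdet, hadj'.2, h, hu⟩

/-- Let `k ≥ 2` and `β ∈ E ∩ (k, k+1]`.  Then the quasi-greedy
expansion `α(β)` of `1` in base `β` takes digits in `{k-1, k}` only. -/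
theorem quasi_greedy_two_digits (k : ℕ) (hk : 2 ≤ k) (β : ℝ)
    (hβE : β ∈ Eexc) (hβ : β ∈ Set.Ioc (k : ℝ) ((k : ℝ) + 1))
    (a : ℕ → ℕ) (ha : IsQuasiGreedyOne β a) :
    ∀ i, a i = k - 1 ∨ a i = k := by
  obtain ⟨hk1, hk2⟩ := hβ
  have hkR : (2 : ℝ) ≤ k := by exact_mod_cast hk
  have hβ1 : 1 < β := by linarith
  obtain rfl := ha.eq_qgDigit hβ1
  have hE : ∀ s ∈ FareyExt, β ∉ Jint s := fun s hs h => hβE.2 (mem_iUnion₂.2 ⟨s, hs, h⟩)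
  have hceil : ⌈β⌉₊ = k + 1 := by
    rw [Nat.ceil_eq_iff (by omega)]
    push_cast
    exact ⟨by linarith, hk2⟩
  have hzero : qgDigit β 0 = k := by simp [qgDigit, qgRem, hceil]
  have hle : ∀ i, qgDigit β i ≤ k := fun i => by simpa [hceil] using qgDigit_le hβ1 i
  have hupp : seqLe (qgDigit β) (stepSeq (upperHeight 1 1) (k - 1)) := by
    refine seqLe_of_sum_le fun n => Finset.sum_le_sum fun i _ => ?_
    have := hle i
    simp only [stepSeq, upperHeight]
    omega
  have hlow : seqLe (stepSeq (jumpHeight 0 1) (k - 1)) (qgDigit β) := by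
    have hmem : lowerWord 0 1 (k - 1) ∈ FareyExt := by
      refine ⟨[1], Or.inr rfl, k - 2, ?_⟩
      rw [theta_iterate_eq]
      simp [lowerWord, stepSeq, lowerHeight]
      omega
    refine (seqLe_or_seqLe_of_notMem_Jint hβ1 (m := 0) (l := 1) one_pos rfl (by omega)
      (hE _ hmem)).resolve_left (seqLt.not_seqLe ⟨0, by simp, ?_⟩)
    rw [hzero]
    simp [stepSeq, upperHeight]
    omega
  intro i
  obtain ⟨p₁, q₁, p₂, q₂, h1, h2, hn, -, hpq₂, hdet, -, hl, hu⟩ :=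
    exists_fareyAdj_seqLe hβ1 hE (by omega) hlow hupp i
  have hi : qgDigit β i = stepSeq (upperHeight p₂ q₂) (k - 1) i := by
    refine eq_of_seqLe_of_seqLe hl hu (N := i + 1) (fun j hj => ?_) i (Nat.lt_succ_self i)
    rw [stepSeq, stepSeq, upperHeight_eq_jumpHeight h1 h2 hdet (by omega),
      upperHeight_eq_jumpHeight h1 h2 hdet (by omega)]
  have hone : upperHeight p₂ q₂ 1 ≤ 1 := (upperHeight_le_iff h2).2 (by omega)
  have hstep := upperHeight_add_le (p := p₂) h2 i 1
  have := hle i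
  rw [stepSeq] at hi
  omega
end
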